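/- arXiv:2003.09329 — 2 statements merged into one kernel-verified Lean document; each statement's English description precedes it below -/
import Mathlib

section
/- The diffeomorphism f of the torus 𝕋² = (ℝ/ℤ)² induced by the linear map with matrix [[2,1],[1,1]], i.e. f(θ₁, θ₂) = (2θ₁ + θ₂, θ₁ + θ₂), has metric entropy with respect to the Haar (Lebesgue) probability measure equal to log((3 + √5)/2). -/
/-! The matrix has eigenvalues `φ ^ 2 = (3 + √5) / 2` and `ψ ^ 2 = φ ^ (-2)`, where `φ`, `ψ` are the
golden ratio and its conjugate, with left eigenvectors `(φ, 1)` and `(ψ, 1)`.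

*Lower bound.* For the partition into `36` squares, two points with the same itinerary of length
`n` differ by a small vector whose orbit under the linear lift remains small up to time `n`
(`abs_iterate_le`: the small lift cannot jump to another lattice translate). Its unstable
component is therefore `O(φ ^ (-2n))`, so every cylinder has measure `O(φ ^ (-2n))`
(`cylinder_le`), and the entropy at time `n` is at least `2 n log φ - O(1)`.

*Upper bound.* Let `P` be any finite partition. Off a set of small measure, `P` is constant at small
scales (`exists_good_set`). The torus is covered by `O(φ ^ (2n))` sets whose images
up to time `n` are all small (`exists_cover`), so there is a code of `O(φ ^ (2n))` words which
predicts the `P`-itinerary of every point except at the times spent in the bad set (`exists_code`).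
By invariance of the measure these times have small average frequency. Gibbs' inequality, applied
to the distribution of itineraries and that of a random code word with randomly corrupted
letters, turns such a code into a bound of the entropy (`partitionDynEntropy_le`). This replaces the
calculus of conditional entropies. -/

open Filter MeasureTheory Set Topology
open scoped ENNReal NNReal

noncomputable section

/-- The entropy at time `n` of the finite measurable partition of `X` given by a map
`P : X → Fin m`, with respect to the dynamics `f`:
`−Σ_w μ(X_w) log μ(X_w)`, the sum being over all itineraries `w : Fin n → Fin m`,
where `X_w` is the set of points whose itinerary is `w`. -/
def partitionDynEntropy {X : Type*} [MeasurableSpace X] (μ : Measure X) (f : X → X)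
    {m : ℕ} (P : X → Fin m) (n : ℕ) : ℝ :=
  -∑ w : Fin n → Fin m,
      (μ {x | ∀ i : Fin n, P (f^[(i : ℕ)] x) = w i}).toReal *
        Real.log (μ {x | ∀ i : Fin n, P (f^[(i : ℕ)] x) = w i}).toReal

/-- The Kolmogorov–Sinai (metric) entropy of `f` with respect to `μ`: the supremum over
all finite measurable partitions of the asymptotic exponential rate of the partition
entropies. -/
def kolmogorovSinaiEntropy {X : Type*} [MeasurableSpace X] (μ : Measure X) (f : X → X) :
    EReal :=
  ⨆ (m : ℕ) (P : {P : X → Fin m // Measurable P}),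
    Filter.atTop.liminf fun n : ℕ => ((partitionDynEntropy μ f P.1 n / n : ℝ) : EReal)

/-- The minimal cardinality of a subcover of the `n`-th dynamical refinement
`𝒰 ∨ f⁻¹𝒰 ∨ … ∨ f^{-(n-1)}𝒰` of the cover `U`. -/
def coverMinCard {X : Type*} (f : X → X) {k : ℕ} (U : Fin k → Set X) (n : ℕ) : ℕ :=
  sInf {m | ∃ S : Finset (Fin n → Fin k), S.card = m ∧
    (Set.univ : Set X) ⊆ ⋃ w ∈ S, ⋂ i : Fin n, f^[(i : ℕ)] ⁻¹' U (w i)}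

/-- The topological entropy of `f`: the supremum over finite open covers `𝒰` of the
exponential growth rate of the minimal cardinality of subcovers of the dynamical
refinements of `𝒰`. -/
def topEntropy {X : Type*} [TopologicalSpace X] (f : X → X) : EReal :=
  ⨆ (k : ℕ)
    (U : {U : Fin k → Set X // (∀ i, IsOpen (U i)) ∧ ⋃ i, U i = Set.univ}),
    Filter.atTop.liminf fun n : ℕ =>
      ((Real.log (coverMinCard f U.1 n) / n : ℝ) : EReal)

end

noncomputable section

/-- The 2-torus `𝕋² = (ℝ/ℤ)²`, with its Haar (Lebesgue) probability measure `volume`. -/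
abbrev Torus2 := AddCircle (1 : ℝ) × AddCircle (1 : ℝ)

/-- The automorphism of `𝕋²` induced by the matrix `[[2, 1], [1, 1]]`:
`(θ₁, θ₂) ↦ (2θ₁ + θ₂, θ₁ + θ₂)`. -/
def catMap : Torus2 → Torus2 := fun p => (p.1 + p.1 + p.2, p.1 + p.2)

end

/-! ### Entropy of itineraries -/

/-- The itinerary of length `n` of a point with respect to the partition `P`. -/
def itin {X : Type*} (f : X → X) {m : ℕ} (P : X → Fin m) (n : ℕ) (x : X) : Fin n → Fin m :=
  fun i => P (f^[(i : ℕ)] x)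

lemma measurable_itin {X : Type*} [MeasurableSpace X] {f : X → X} (hf : Measurable f)
    {m : ℕ} {P : X → Fin m} (hP : Measurable P) (n : ℕ) : Measurable (itin f P n) :=
  measurable_pi_lambda _ fun i => hP.comp (hf.iterate i)

lemma setOf_itin_eq {X : Type*} (f : X → X) {m : ℕ} (P : X → Fin m) {n : ℕ}
    (w : Fin n → Fin m) :
    {x | ∀ i : Fin n, P (f^[(i : ℕ)] x) = w i} = itin f P n ⁻¹' {w} := by
  ext x
  simp [itin, funext_iff]

lemma partitionDynEntropy_eq {X : Type*} [MeasurableSpace X] (μ : Measure X) {f : X → X}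
    (hf : Measurable f) {m : ℕ} {P : X → Fin m} (hP : Measurable P) (n : ℕ) :
    partitionDynEntropy μ f P n =
      ∑ w, (μ.map (itin f P n)).real {w} * -Real.log ((μ.map (itin f P n)).real {w}) := by
  unfold partitionDynEntropy
  rw [← Finset.sum_neg_distrib]
  refine Finset.sum_congr rfl fun w _ => ?_
  rw [setOf_itin_eq, map_measureReal_apply (measurable_itin hf hP n) (measurableSet_singleton w),
    Measure.real, mul_neg]

/-- If every cylinder of length `n` has measure at most `b`, the entropy at time `n` is at least
`-log b`. -/
lemma neg_log_le_partitionDynEntropy {X : Type*} [MeasurableSpace X] (μ : Measure X)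
    [IsProbabilityMeasure μ] {f : X → X}
    (hf : Measurable f) {m : ℕ} {P : X → Fin m} (hP : Measurable P) (n : ℕ) {b : ℝ}
    (h : ∀ w, μ.real (itin f P n ⁻¹' {w}) ≤ b) :
    -Real.log b ≤ partitionDynEntropy μ f P n := by
  have hW := measurable_itin hf hP n
  rw [partitionDynEntropy_eq μ hf hP]
  set ν := μ.map (itin f P n) with hν
  have : IsProbabilityMeasure ν := Measure.isProbabilityMeasure_map hW.aemeasurable
  have h1 : ∑ w, ν.real {w} = 1 := by
    rw [sum_measureReal_singleton]; simp
  calc -Real.log b = ∑ w, ν.real {w} * -Real.log b := by rw [← Finset.sum_mul, h1, one_mul]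
    _ ≤ _ := by
      refine Finset.sum_le_sum fun w _ => ?_
      rcases (measureReal_nonneg (μ := ν) (s := {w})).eq_or_lt with h0 | h0
      · rw [← h0]; simp
      · have : ν.real {w} ≤ b := by
          rw [hν, map_measureReal_apply hW (measurableSet_singleton w)]; exact h w
        gcongr

/-- Gibbs' inequality: entropy is at most the cross entropy with a subprobability vector. -/
lemma gibbs {ι : Type*} (s : Finset ι) (p q : ι → ℝ) (hp : ∀ i, 0 ≤ p i) (hq : ∀ i, 0 < q i)
    (hp1 : ∑ i ∈ s, p i = 1) (hq1 : ∑ i ∈ s, q i ≤ 1) :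
    ∑ i ∈ s, p i * -Real.log (p i) ≤ ∑ i ∈ s, p i * -Real.log (q i) := by
  have key : ∀ i, p i * -Real.log (p i) - p i * -Real.log (q i) ≤ q i - p i := fun i => by
    rcases (hp i).eq_or_lt with h0 | h0
    · rw [← h0]; simpa using (hq i).le
    · have h1 := Real.log_le_sub_one_of_pos (div_pos (hq i) h0)
      rw [Real.log_div (hq i).ne' h0.ne'] at h1
      have h2 := mul_le_mul_of_nonneg_left h1 h0.le
      have h3 : p i * (q i / p i - 1) = q i - p i := by field_simp
      linarith
  have := Finset.sum_le_sum fun i (_ : i ∈ s) => key i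
  rw [Finset.sum_sub_distrib, Finset.sum_sub_distrib] at this
  linarith

/-- A code `E` of words of length `n` which predicts, up to the times spent outside `K`, the
itinerary of every point bounds the entropy at time `n`. The proof compares the distribution of
itineraries with that of a uniformly chosen code word whose letters are independently
corrupted with probability `θ`. -/
lemma partitionDynEntropy_le {X : Type*} [MeasurableSpace X] (μ : Measure X)
    [IsProbabilityMeasure μ] {f : X → X} (hf : MeasurePreserving f μ μ) {m : ℕ} (hm : 0 < m)
    {P : X → Fin m} (hP : Measurable P) (n : ℕ) {K : Set X} (hK : MeasurableSet K) {ε : ℝ}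
    (hKε : μ.real Kᶜ ≤ ε) {θ : ℝ} (hθ0 : 0 < θ) (hθ1 : θ < 1)
    (E : Finset (Fin n → Fin m))
    (hE : ∀ x, ∃ g ∈ E, ∀ i : Fin n, f^[(i : ℕ)] x ∈ K → P (f^[(i : ℕ)] x) = g i) :
    partitionDynEntropy μ f P n ≤
      Real.log E.card + n * (-Real.log (1 - θ) + Real.log (m / θ) * ε) := by
  have hW := measurable_itin hf.measurable hP n
  rw [partitionDynEntropy_eq μ hf.measurable hP]
  set ν := μ.map (itin f P n) with hν
  have : IsProbabilityMeasure ν := Measure.isProbabilityMeasure_map hW.aemeasurable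
  have hm' : (1 : ℝ) ≤ m := by exact_mod_cast hm
  have hL : 0 ≤ Real.log (m / θ) := Real.log_nonneg (by rw [le_div_iff₀ hθ0]; linarith)
  obtain ⟨x₀⟩ := nonempty_of_isProbabilityMeasure μ
  have hEcard : 0 < (E.card : ℝ) := by
    obtain ⟨g, hg, -⟩ := hE x₀
    exact_mod_cast Finset.card_pos.2 ⟨g, hg⟩
  -- `κ a b` is the probability that the letter `b` is read as `a`; these may sum to less than `1`.
  set κ : Fin m → Fin m → ℝ := fun a b => if a = b then 1 - θ else θ / m with hκ
  have hκ0 : ∀ a b, 0 < κ a b := fun a b => by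
    simp only [hκ]
    split_ifs
    · linarith
    · positivity
  have hκ1 : ∀ b, ∑ a, κ a b ≤ 1 := fun b => by
    calc ∑ a, κ a b ≤ ∑ a, ((if a = b then 1 - θ else 0) + θ / m) := by
          refine Finset.sum_le_sum fun a _ => ?_
          simp only [hκ]
          split_ifs
          · have : 0 ≤ θ / m := by positivity
            linarith
          · linarith
      _ = 1 := by
          rw [Finset.sum_add_distrib, Finset.sum_ite_eq' Finset.univ b]
          simp
          field_simp
          ring
  set q : (Fin n → Fin m) → ℝ := fun w : Fin n → Fin m => (E.card : ℝ)⁻¹ * ∑ g ∈ E, ∏ i, κ (w i) (g i) with hq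
  have hsum0 : ∀ w : Fin n → Fin m, 0 < ∑ g ∈ E, ∏ i, κ (w i) (g i) := fun w =>
    Finset.sum_pos (fun g _ => Finset.prod_pos fun i _ => hκ0 _ _)
      (Finset.card_pos.1 (by exact_mod_cast hEcard))
  have hq0 : ∀ w, 0 < q w := fun w => mul_pos (inv_pos.2 hEcard) (hsum0 w)
  have hq1 : ∑ w, q w ≤ 1 := by
    simp only [hq]
    rw [← Finset.mul_sum, Finset.sum_comm]
    have : ∑ g ∈ E, ∑ w : Fin n → Fin m, ∏ i, κ (w i) (g i) ≤ ∑ g ∈ E, 1 := by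
      refine Finset.sum_le_sum fun g _ => ?_
      have := Finset.prod_univ_sum (fun _ : Fin n => (Finset.univ : Finset (Fin m)))
        (fun i a => κ a (g i))
      rw [Fintype.piFinset_univ] at this
      rw [← this]
      exact Finset.prod_le_one (fun i _ => Finset.sum_nonneg fun a _ => (hκ0 _ _).le)
        fun i _ => hκ1 _
    calc _ ≤ (E.card : ℝ)⁻¹ * ∑ g ∈ E, 1 := by gcongr
      _ = 1 := by simp; field_simp
  refine (gibbs Finset.univ _ q (fun w => measureReal_nonneg) hq0
    (by rw [sum_measureReal_singleton]; simp) hq1).trans ?_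
  have hint : ∑ w, ν.real {w} * -Real.log (q w) = ∫ x, -Real.log (q (itin f P n x)) ∂μ := by
    rw [← integral_map (f := fun w => -Real.log (q w)) hW.aemeasurable
      (measurable_of_countable _).aestronglyMeasurable, integral_fintype .of_finite]
    simp only [smul_eq_mul, hν]
  set b : X → ℝ := fun x => Real.log E.card +
    ∑ i : Fin n, (-Real.log (1 - θ) + Real.log (m / θ) * Kᶜ.indicator 1 (f^[(i : ℕ)] x)) with hb
  -- One summand of `q` already gives this lower bound for `q`: the word predicting `x`.
  have hpt : ∀ x, -Real.log (q (itin f P n x)) ≤ b x := fun x => by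
    obtain ⟨g, hg, hgx⟩ := hE x
    have h1 : ∏ i, κ (itin f P n x i) (g i) ≤ ∑ g ∈ E, ∏ i, κ (itin f P n x i) (g i) :=
      Finset.single_le_sum (f := fun g => ∏ i, κ (itin f P n x i) (g i))
        (fun g _ => Finset.prod_nonneg fun i _ => (hκ0 _ _).le) hg
    have h2 := Real.log_le_log (Finset.prod_pos fun i _ => hκ0 _ _) h1
    rw [Real.log_prod fun i _ => (hκ0 _ _).ne'] at h2
    have h3 : -∑ i, Real.log (κ (itin f P n x i) (g i)) ≤ ∑ i : Fin n,
        (-Real.log (1 - θ) + Real.log (m / θ) * Kᶜ.indicator 1 (f^[(i : ℕ)] x)) := by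
      rw [← Finset.sum_neg_distrib]
      refine Finset.sum_le_sum fun i _ => ?_
      have h4 : 0 ≤ -Real.log (1 - θ) := by
        linarith [Real.log_nonpos (by linarith : (0 : ℝ) ≤ 1 - θ) (by linarith)]
      by_cases hx : f^[(i : ℕ)] x ∈ K
      · have : itin f P n x i = g i := hgx i hx
        simp [hκ, this, hx]
      · have h5 : Real.log (θ / m) = -Real.log (m / θ) := by rw [← Real.log_inv, inv_div]
        simp only [hκ]
        rw [indicator_of_mem (by exact hx)]
        split_ifs
        · simp [hL]
        · rw [h5]; simp; linarith
    rw [hq]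
    simp only
    rw [Real.log_mul (inv_pos.2 hEcard).ne' (hsum0 _).ne', Real.log_inv]
    simp only [hb]
    linarith
  have hind : ∀ i : ℕ, Integrable (fun x => Kᶜ.indicator (1 : X → ℝ) (f^[i] x)) μ := fun i =>
    (hf.iterate i).integrable_comp_of_integrable
      ((integrable_const (1 : ℝ)).indicator hK.compl)
  have hterm : ∀ i : ℕ, Integrable (fun x => -Real.log (1 - θ) +
      Real.log (m / θ) * Kᶜ.indicator (1 : X → ℝ) (f^[i] x)) μ := fun i =>
    (integrable_const _).add ((hind i).const_mul _)
  have hsumint := integrable_finsetSum Finset.univ fun (i : Fin n) _ => hterm i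
  have hbint : Integrable b μ := (integrable_const _).add hsumint
  have hIi : ∀ i : ℕ, ∫ x, Kᶜ.indicator (1 : X → ℝ) (f^[i] x) ∂μ = μ.real Kᶜ := fun i => by
    have h := integral_map (μ := μ) (hf.iterate i).measurable.aemeasurable
      (f := Kᶜ.indicator (1 : X → ℝ))
      ((measurable_const.indicator hK.compl).aestronglyMeasurable)
    rw [(hf.iterate i).map_eq] at h
    rw [← h, integral_indicator_one hK.compl]
  calc _ = ∫ x, -Real.log (q (itin f P n x)) ∂μ := hint
    _ ≤ ∫ x, b x ∂μ := by
        refine integral_mono ?_ hbint hpt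
        exact Integrable.comp_measurable (g := fun w => -Real.log (q w)) .of_finite hW
    _ = Real.log E.card + n * (-Real.log (1 - θ) + Real.log (m / θ) * μ.real Kᶜ) := by
        simp only [hb]
        rw [integral_add (integrable_const _) hsumint,
          integral_finsetSum _ fun (i : Fin n) _ => hterm i]
        have : ∀ i : ℕ, ∫ x, (-Real.log (1 - θ) +
            Real.log (m / θ) * Kᶜ.indicator (1 : X → ℝ) (f^[i] x)) ∂μ =
            -Real.log (1 - θ) + Real.log (m / θ) * μ.real Kᶜ := fun i => by
          rw [integral_add (integrable_const _) ((hind i).const_mul _), integral_const_mul, hIi]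
          simp
        simp only [this]
        simp
        ring
    _ ≤ _ := by gcongr

/-! ### The linear lift and its eigendirections -/

/-- The linear map of `ℝ²` which lifts `catMap`. -/
def linCat (v : ℝ × ℝ) : ℝ × ℝ := (v.1 + v.1 + v.2, v.1 + v.2)

/-- The covering map `ℝ² → 𝕋²`. -/
def toTorus (v : ℝ × ℝ) : Torus2 := ((v.1 : AddCircle (1 : ℝ)), (v.2 : AddCircle (1 : ℝ)))

lemma semiconj_toTorus : Function.Semiconj toTorus linCat catMap := fun v => by
  simp [toTorus, linCat, catMap]

lemma iterate_catMap_toTorus (i : ℕ) (v : ℝ × ℝ) :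
    catMap^[i] (toTorus v) = toTorus (linCat^[i] v) :=
  ((semiconj_toTorus.iterate_right i) v).symm

/-- The linear form with coefficients `(c, 1)`. When `c ^ 2 = c + 1` it is multiplied by `c ^ 2`
under `linCat`; then `c = φ` gives the unstable component and `c = ψ` the stable one. -/
def eigenform (c : ℝ) (v : ℝ × ℝ) : ℝ := c * v.1 + v.2

lemma eigenform_iterate {c : ℝ} (hc : c ^ 2 = c + 1) (i : ℕ) (v : ℝ × ℝ) :
    eigenform c (linCat^[i] v) = (c ^ 2) ^ i * eigenform c v := by
  induction i with
  | zero => simp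
  | succ i ih =>
    rw [Function.iterate_succ_apply', pow_succ', mul_assoc, ← ih]
    simp only [eigenform, linCat]
    linear_combination ((linCat^[i] v).1 * (-1 - c) - (linCat^[i] v).2) * hc

lemma linCat_iterate_sub (i : ℕ) (v w : ℝ × ℝ) :
    linCat^[i] (v - w) = linCat^[i] v - linCat^[i] w := by
  induction i with
  | zero => simp
  | succ i ih =>
    simp only [Function.iterate_succ_apply', ih]
    ext <;> simp [linCat] <;> ring

lemma catMap_iterate_sub (i : ℕ) (x y : Torus2) :
    catMap^[i] (x - y) = catMap^[i] x - catMap^[i] y := by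
  induction i with
  | zero => simp
  | succ i ih =>
    simp only [Function.iterate_succ_apply', ih]
    ext <;> simp [catMap] <;> abel

lemma norm_coe_le (a : ℝ) : ‖(a : AddCircle (1 : ℝ))‖ ≤ |a| := by
  rw [UnitAddCircle.norm_eq]
  simpa using round_le a 0

lemma exists_lift_Ico (a : AddCircle (1 : ℝ)) :
    ∃ t : ℝ, 0 ≤ t ∧ t < 1 ∧ (t : AddCircle (1 : ℝ)) = a := by
  have : a ∈ ((↑) : ℝ → AddCircle (1 : ℝ)) '' Ico 0 (0 + 1) := by
    rw [AddCircle.coe_image_Ico_eq]; trivial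
  obtain ⟨t, ht, h⟩ := this
  exact ⟨t, ht.1, by linarith [ht.2], h⟩

lemma exists_lift_norm (a : AddCircle (1 : ℝ)) :
    ∃ t : ℝ, |t| = ‖a‖ ∧ (t : AddCircle (1 : ℝ)) = a := by
  obtain ⟨t, -, -, rfl⟩ := exists_lift_Ico a
  refine ⟨t - round t, (UnitAddCircle.norm_eq).symm, ?_⟩
  rw [AddCircle.coe_sub, sub_eq_self, AddCircle.coe_eq_zero_iff]
  exact ⟨round t, by simp⟩

lemma measurePreserving_catMap : MeasurePreserving catMap volume volume := by
  have h1 : MeasurePreserving (fun z : Torus2 => (z.1, z.1 + z.2)) volume volume :=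
    measurePreserving_prod_add volume volume
  have h2 : MeasurePreserving (fun z : Torus2 => (z.2, z.2 + z.1)) volume volume :=
    measurePreserving_prod_add_swap volume volume
  have h3 : MeasurePreserving (Prod.swap : Torus2 → Torus2) volume volume :=
    Measure.measurePreserving_swap
  -- `catMap` is a composition of two shears and a coordinate swap.
  convert (h3.comp h2).comp h1 using 1
  ext z <;> simp [catMap]; abel

instance : IsProbabilityMeasure (volume : Measure Torus2) := by
  constructor
  rw [Measure.volume_eq_prod, ← univ_prod_univ, Measure.prod_prod, AddCircle.measure_univ]
  simp

/-! ### Dynamical covers of the torus -/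

open Real in
/-- Vectors of the plane are controlled by their stable and unstable components. -/
lemma abs_le_of_eigenform {v : ℝ × ℝ} {η : ℝ} (hu : |eigenform goldenRatio v| ≤ η)
    (hs : |eigenform goldenConj v| ≤ η) : |v.1| ≤ 3 * η ∧ |v.2| ≤ 3 * η := by
  have h5 : (2 : ℝ) ≤ √5 := Real.le_sqrt_of_sq_le (by norm_num)
  have hη : 0 ≤ η := (abs_nonneg _).trans hu
  have h1 : |v.1| ≤ η := by
    have : √5 * v.1 = eigenform goldenRatio v - eigenform goldenConj v := by
      simp only [eigenform]; rw [← goldenRatio_sub_goldenConj]; ring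
    have h2 : √5 * |v.1| ≤ η + η := by
      rw [← abs_of_nonneg (Real.sqrt_nonneg 5), ← abs_mul, this]
      exact (abs_sub _ _).trans (add_le_add hu hs)
    nlinarith [abs_nonneg v.1]
  refine ⟨by linarith, ?_⟩
  have h3 : v.2 = eigenform goldenRatio v - goldenRatio * v.1 := by simp [eigenform]
  rw [h3]
  refine (abs_sub _ _).trans ?_
  rw [abs_mul, abs_of_pos goldenRatio_pos]
  nlinarith [goldenRatio_lt_two, goldenRatio_pos, abs_nonneg v.1]

open Real in
/-- Cutting the unit square along the eigendirections, at scale `1/k` in the stable direction and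
`φ ^ (-2n) / k` in the unstable one, shows that `𝕋²` is covered by `O(φ ^ (2n))` sets of small
diameter for the dynamical metric at time `n`. -/
lemma exists_cover {k : ℕ} (hk : 0 < k) (n : ℕ) :
    ∃ (r : Torus2 → ℤ × ℤ) (J : Finset (ℤ × ℤ)),
      (J.card : ℝ) ≤ 4 * k * (2 * k + 1) * (goldenRatio ^ 2) ^ n ∧ (∀ x, r x ∈ J) ∧
      ∀ x y, r x = r y → ∀ i < n, dist (catMap^[i] x) (catMap^[i] y) ≤ 3 / k := by
  choose l hl0 hl1 hl using exists_lift_Ico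
  have hk' : (1 : ℝ) ≤ k := by exact_mod_cast hk
  set lam : ℝ := (goldenRatio ^ 2) ^ n with hlam
  have hlam1 : 1 ≤ lam := one_le_pow₀ (one_le_pow₀ one_lt_goldenRatio.le)
  set v : Torus2 → ℝ × ℝ := fun x => (l x.1, l x.2) with hv
  have hvx : ∀ x, toTorus (v x) = x := fun x => by simp [toTorus, hv, hl]
  refine ⟨fun x => (⌊k * lam * eigenform goldenRatio (v x)⌋, ⌊k * eigenform goldenConj (v x)⌋),
    Finset.Icc 0 ⌊3 * k * lam⌋ ×ˢ Finset.Icc (-(k : ℤ)) k, ?_, fun x => ?_, fun x y hxy i hi => ?_⟩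
  · rw [Finset.card_product, Int.card_Icc, Int.card_Icc]
    have h1 : (((⌊3 * k * lam⌋ + 1 - 0).toNat : ℕ) : ℝ) ≤ 4 * k * lam := by
      have h0 : 0 ≤ ⌊3 * k * lam⌋ := Int.floor_nonneg.2 (by positivity)
      have : (((⌊3 * k * lam⌋ + 1 - 0).toNat : ℕ) : ℝ) = ((⌊3 * k * lam⌋ + 1 - 0 : ℤ) : ℝ) := by
        rw [← Int.cast_natCast, Int.toNat_of_nonneg (by omega)]
      rw [this]
      push_cast
      have := Int.floor_le (3 * k * lam)
      nlinarith
    have h2 : (((k : ℤ) + 1 - -(k : ℤ)).toNat : ℝ) = 2 * k + 1 := by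
      have : ((k : ℤ) + 1 - -(k : ℤ)).toNat = 2 * k + 1 := by omega
      rw [this]; push_cast; ring
    rw [Nat.cast_mul, h2]
    calc _ ≤ 4 * k * lam * (2 * k + 1) := by gcongr
      _ = _ := by ring
  · have a0 := hl0 x.1
    have a1 := hl1 x.1
    have b0 := hl0 x.2
    have b1 := hl1 x.2
    have hu0 : 0 ≤ eigenform goldenRatio (v x) := by
      have := goldenRatio_pos
      simp only [eigenform, hv]; positivity
    have hu1 : eigenform goldenRatio (v x) ≤ 3 := by
      simp only [eigenform, hv]
      nlinarith [goldenRatio_lt_two, goldenRatio_pos]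
    have hs0 : -1 ≤ eigenform goldenConj (v x) := by
      simp only [eigenform, hv]
      nlinarith [neg_one_lt_goldenConj, goldenConj_neg]
    have hs1 : eigenform goldenConj (v x) ≤ 1 := by
      simp only [eigenform, hv]
      nlinarith [neg_one_lt_goldenConj, goldenConj_neg]
    simp only [Finset.mem_product, Finset.mem_Icc]
    refine ⟨⟨Int.floor_nonneg.2 (by positivity), Int.floor_le_floor ?_⟩, Int.le_floor.2 ?_, ?_⟩
    · nlinarith [mul_nonneg (by positivity : 0 ≤ k * lam) (sub_nonneg.2 hu1)]
    · push_cast; nlinarith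
    · have : ⌊k * eigenform goldenConj (v x)⌋ ≤ ⌊(k : ℝ)⌋ := Int.floor_le_floor (by nlinarith)
      simpa using this
  · rw [Prod.mk.injEq] at hxy
    have h1 := Int.abs_sub_lt_one_of_floor_eq_floor hxy.1
    have h2 := Int.abs_sub_lt_one_of_floor_eq_floor hxy.2
    have hlin : ∀ c, eigenform c (v x - v y) = eigenform c (v x) - eigenform c (v y) := fun c => by
      simp only [eigenform, Prod.fst_sub, Prod.snd_sub]; ring
    rw [← mul_sub, ← hlin, abs_mul, abs_of_pos (by positivity)] at h1 h2
    have hu : |eigenform goldenRatio (linCat^[i] (v x - v y))| ≤ 1 / k := by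
      rw [eigenform_iterate goldenRatio_sq, abs_mul, abs_of_nonneg (by positivity),
        le_div_iff₀ (by positivity)]
      have : (goldenRatio ^ 2) ^ i ≤ lam :=
        pow_le_pow_right₀ (one_le_pow₀ one_lt_goldenRatio.le) hi.le
      calc _ ≤ lam * |eigenform goldenRatio (v x - v y)| * k := by gcongr
        _ = k * lam * |eigenform goldenRatio (v x - v y)| := by ring
        _ ≤ 1 := h1.le
    have hs : |eigenform goldenConj (linCat^[i] (v x - v y))| ≤ 1 / k := by
      rw [eigenform_iterate goldenConj_sq, abs_mul, abs_of_nonneg (by positivity),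
        le_div_iff₀ (by positivity)]
      have : (goldenConj ^ 2) ^ i ≤ 1 := pow_le_one₀ (by positivity) (by
        nlinarith [neg_one_lt_goldenConj, goldenConj_neg])
      calc _ ≤ 1 * |eigenform goldenConj (v x - v y)| * k := by gcongr
        _ = k * |eigenform goldenConj (v x - v y)| := by ring
        _ ≤ 1 := h2.le
    obtain ⟨e1, e2⟩ := abs_le_of_eigenform hu hs
    rw [dist_eq_norm, ← catMap_iterate_sub]
    have hxy' : x - y = toTorus (v x - v y) := by
      conv_lhs => rw [← hvx x, ← hvx y]
      simp [toTorus]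
    rw [hxy', iterate_catMap_toTorus, Prod.norm_def]
    have : 3 * (1 / (k : ℝ)) = 3 / k := by ring
    rw [this] at e1 e2
    exact max_le ((norm_coe_le _).trans e1) ((norm_coe_le _).trans e2)

/-! ### Measure of the cylinders -/

/-- As long as an orbit stays close to `0`, so does the orbit of its small lift: the lifted orbit
cannot jump to another lattice translate. -/
lemma abs_iterate_le {u : Torus2} {v : ℝ × ℝ} (hv : toTorus v = u) (h1 : |v.1| = ‖u.1‖)
    (h2 : |v.2| = ‖u.2‖) {n : ℕ} (hu : ∀ i < n, ‖catMap^[i] u‖ ≤ 1 / 6) :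
    ∀ i < n, |(linCat^[i] v).1| ≤ 1 / 6 ∧ |(linCat^[i] v).2| ≤ 1 / 6 := by
  have hnorm : ∀ t : ℝ, |t| ≤ 1 / 2 → ‖(t : AddCircle (1 : ℝ))‖ = |t| := fun t ht =>
    (AddCircle.norm_coe_eq_abs_iff 1 one_ne_zero).2 (by simpa using ht)
  intro i
  induction i with
  | zero =>
    intro hi
    have := hu 0 hi
    rw [Function.iterate_zero_apply, Prod.norm_def, max_le_iff] at this
    rw [Function.iterate_zero_apply, h1, h2]
    exact this
  | succ i ih =>
    intro hi
    obtain ⟨a, b⟩ := ih (by omega)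
    have := hu (i + 1) hi
    rw [← hv, iterate_catMap_toTorus, Prod.norm_def, max_le_iff,
      Function.iterate_succ_apply'] at this
    rw [Function.iterate_succ_apply']
    simp only [toTorus, linCat] at this ⊢
    rw [abs_le] at a b
    rwa [hnorm _ (by rw [abs_le]; constructor <;> linarith),
      hnorm _ (by rw [abs_le]; constructor <;> linarith)] at this

open Real in
/-- A point whose orbit stays close to `0` up to time `n` has an exponentially small unstable
component. -/
lemma abs_eigenform_le {u : Torus2} {v : ℝ × ℝ} (hv : toTorus v = u) (h1 : |v.1| = ‖u.1‖)
    (h2 : |v.2| = ‖u.2‖) {n : ℕ} (hn : 0 < n) (hu : ∀ i < n, ‖catMap^[i] u‖ ≤ 1 / 6) :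
    |eigenform goldenRatio v| ≤ (goldenRatio ^ 2) ^ 2 / 6 / (goldenRatio ^ 2) ^ n := by
  obtain ⟨n, rfl⟩ := Nat.exists_eq_succ_of_ne_zero hn.ne'
  obtain ⟨a, b⟩ := abs_iterate_le hv h1 h2 hu n (by omega)
  have hpos := goldenRatio_pos
  have h : |eigenform goldenRatio (linCat^[n] v)| ≤ goldenRatio ^ 2 / 6 := by
    rw [goldenRatio_sq, eigenform]
    refine (abs_add_le _ _).trans ?_
    rw [abs_mul, abs_of_pos hpos]
    nlinarith
  rw [eigenform_iterate goldenRatio_sq, abs_mul, abs_of_nonneg (by positivity)] at h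
  rw [le_div_iff₀ (by positivity), Nat.succ_eq_add_one, pow_succ]
  have := mul_le_mul_of_nonneg_left h (by positivity : 0 ≤ goldenRatio ^ 2)
  nlinarith

/-- The index of the arc `[j/6, (j+1)/6)` which contains a point of the circle. The representative
in `[0, 1)` has `⌊6 t⌋₊ < 6`, so that `Fin.ofNat` does not wrap around. -/
noncomputable def arcIndex (a : AddCircle (1 : ℝ)) : Fin 6 :=
  Fin.ofNat 6 ⌊6 * (AddCircle.measurableEquivIco 1 0 a : ℝ)⌋₊

/-- The partition of the torus into `36` squares of side `1/6`. -/
noncomputable def squareIndex (x : Torus2) : Fin (6 * 6) := finProdFinEquiv (arcIndex x.1, arcIndex x.2)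

lemma measurable_arcIndex : Measurable arcIndex := by
  have h1 : Measurable fun a : AddCircle (1 : ℝ) =>
      6 * (AddCircle.measurableEquivIco 1 0 a : ℝ) :=
    (measurable_subtype_coe.comp (AddCircle.measurableEquivIco 1 0).measurable).const_mul 6
  exact (measurable_of_countable (Fin.ofNat 6)).comp (Nat.measurable_floor.comp h1)

lemma measurable_squareIndex : Measurable squareIndex :=
  (measurable_of_countable finProdFinEquiv).comp
    ((measurable_arcIndex.comp measurable_fst).prodMk (measurable_arcIndex.comp measurable_snd))

lemma norm_sub_le_of_arcIndex {a b : AddCircle (1 : ℝ)} (h : arcIndex a = arcIndex b) :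
    ‖a - b‖ ≤ 1 / 6 := by
  have hcoe : ∀ a : AddCircle (1 : ℝ),
      (((AddCircle.measurableEquivIco 1 0 a : ℝ)) : AddCircle (1 : ℝ)) = a := fun a =>
    (AddCircle.measurableEquivIco 1 0).symm_apply_apply a
  have hmem : ∀ a : AddCircle (1 : ℝ), 0 ≤ 6 * (AddCircle.measurableEquivIco 1 0 a : ℝ) ∧
      ⌊6 * (AddCircle.measurableEquivIco 1 0 a : ℝ)⌋₊ < 6 := fun a => by
    have := (AddCircle.measurableEquivIco 1 0 a).2
    rw [mem_Ico] at this
    refine ⟨by linarith, (Nat.floor_lt (by linarith)).2 ?_⟩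
    push_cast
    linarith
  simp only [arcIndex, Fin.ext_iff, Fin.val_ofNat, Nat.mod_eq_of_lt (hmem _).2] at h
  have h1 := Nat.floor_le (hmem a).1
  have h2 := Nat.lt_floor_add_one (6 * (AddCircle.measurableEquivIco 1 0 a : ℝ))
  have h3 := Nat.floor_le (hmem b).1
  have h4 := Nat.lt_floor_add_one (6 * (AddCircle.measurableEquivIco 1 0 b : ℝ))
  rw [h] at h1 h2
  rw [← hcoe a, ← hcoe b, ← AddCircle.coe_sub]
  refine (norm_coe_le _).trans ?_
  rw [abs_le]
  constructor <;> linarith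

lemma norm_sub_le_of_squareIndex {x y : Torus2} (h : squareIndex x = squareIndex y) :
    ‖x - y‖ ≤ 1 / 6 := by
  have := finProdFinEquiv.injective h
  rw [Prod.mk.injEq] at this
  exact max_le (norm_sub_le_of_arcIndex this.1) (norm_sub_le_of_arcIndex this.2)

open Real in
/-- A cylinder of the partition into squares is a thin strip along the stable direction; by
Fubini it is enough to bound its vertical slices. -/
lemma cylinder_le {n : ℕ} (hn : 0 < n) (w : Fin n → Fin (6 * 6)) :
    (volume : Measure Torus2).real (itin catMap squareIndex n ⁻¹' {w}) ≤
      (goldenRatio ^ 2) ^ 2 / 3 / (goldenRatio ^ 2) ^ n := by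
  set A := itin catMap squareIndex n ⁻¹' {w} with hA
  have hpos := goldenRatio_pos
  have hAm : MeasurableSet A :=
    measurable_itin measurePreserving_catMap.measurable measurable_squareIndex n
      (measurableSet_singleton w)
  set r : ℝ := (goldenRatio ^ 2) ^ 2 / 6 / (goldenRatio ^ 2) ^ n with hr
  have hr2 : (goldenRatio ^ 2) ^ 2 / 3 / (goldenRatio ^ 2) ^ n = 2 * r := by rw [hr]; ring
  rw [hr2]
  rcases A.eq_empty_or_nonempty with h0 | ⟨x₀, hx₀⟩
  · rw [h0]; simp only [measureReal_empty]; positivity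
  choose l hl hl' using exists_lift_norm
  refine ENNReal.toReal_le_of_le_ofReal (by positivity) ?_
  rw [Measure.volume_eq_prod, Measure.prod_apply hAm]
  have hslice : ∀ x₁ : AddCircle (1 : ℝ), volume (Prod.mk x₁ ⁻¹' A) ≤ ENNReal.ofReal (2 * r) := by
    intro x₁
    have hsub : Prod.mk x₁ ⁻¹' A ⊆ Metric.closedBall
        (x₀.2 - ((goldenRatio * l (x₁ - x₀.1) : ℝ) : AddCircle (1 : ℝ))) r := by
      intro x₂ hx₂
      have hu : ∀ i < n, ‖catMap^[i] ((x₁, x₂) - x₀)‖ ≤ 1 / 6 := fun i hi => by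
        rw [catMap_iterate_sub]
        refine norm_sub_le_of_squareIndex ?_
        have e : itin catMap squareIndex n (x₁, x₂) = itin catMap squareIndex n x₀ :=
          Eq.trans hx₂ (Eq.symm hx₀)
        exact congrFun e ⟨i, hi⟩
      have hb := abs_eigenform_le (u := (x₁, x₂) - x₀) (v := (l (x₁ - x₀.1), l (x₂ - x₀.2)))
        (by ext <;> simp [toTorus, hl']) (hl _) (hl _) hn hu
      rw [Metric.mem_closedBall, dist_eq_norm]
      refine le_trans (le_of_eq ?_) ((norm_coe_le _).trans hb)
      rw [eigenform, AddCircle.coe_add, hl']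
      congr 1
      abel
    refine (measure_mono hsub).trans ?_
    rw [AddCircle.volume_closedBall]
    exact ENNReal.ofReal_le_ofReal (min_le_right _ _)
  calc _ ≤ ∫⁻ _ : AddCircle (1 : ℝ), ENNReal.ofReal (2 * r) := lintegral_mono hslice
    _ = ENNReal.ofReal (2 * r) := by simp [AddCircle.measure_univ]

/-! ### Codes for arbitrary partitions and the two bounds -/

/-- A finite measurable partition is uniformly locally constant off a set of small measure. -/
lemma exists_good_set {m : ℕ} {P : Torus2 → Fin m} (hP : Measurable P) {ε : ℝ} (hε : 0 < ε) :
    ∃ K : Set Torus2, MeasurableSet K ∧ (volume : Measure Torus2).real Kᶜ ≤ ε ∧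
      ∃ δ > 0, ∀ x ∈ K, ∀ y ∈ K, dist x y < δ → P x = P y := by
  have hm : 0 < m := Fin.pos (P 0)
  have hm' : (0 : ℝ) < m := by exact_mod_cast hm
  have hPm : ∀ j, MeasurableSet (P ⁻¹' {j}) := fun j => hP (measurableSet_singleton j)
  have hF := fun j => (hPm j).exists_isClosed_sdiff_lt (measure_ne_top (volume : Measure Torus2) _)
    (ε := ENNReal.ofReal (ε / m)) (by simpa using div_pos hε hm')
  choose F hFP hFc hFε using hF
  have hKc : IsClosed (⋃ j, F j) := isClosed_iUnion_of_finite hFc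
  refine ⟨⋃ j, F j, hKc.measurableSet, ?_, ?_⟩
  · have hsub : (⋃ j, F j)ᶜ ⊆ ⋃ j, (P ⁻¹' {j} \ F j) := fun x hx =>
      mem_iUnion.2 ⟨P x, rfl, fun h => hx (mem_iUnion.2 ⟨_, h⟩)⟩
    refine ENNReal.toReal_le_of_le_ofReal hε.le ?_
    calc _ ≤ volume (⋃ j, (P ⁻¹' {j} \ F j)) := measure_mono hsub
      _ ≤ ∑ j, volume (P ⁻¹' {j} \ F j) := measure_iUnion_fintype_le _ _
      _ ≤ ∑ j : Fin m, ENNReal.ofReal (ε / m) := Finset.sum_le_sum fun j _ => (hFε j).le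
      _ = ENNReal.ofReal ε := by
        rw [← ENNReal.ofReal_sum_of_nonneg fun _ _ => (div_pos hε hm').le]
        congr 1
        simp
        field_simp
  · have hcont : ContinuousOn (fun x => (P x : ℕ)) (⋃ j, F j) :=
      (locallyFinite_of_finite F).continuousOn_iUnion hFc fun j =>
        (continuousOn_const (c := (j : ℕ))).congr fun x hx => congrArg Fin.val (hFP j hx)
    have huc := Metric.uniformContinuousOn_iff.1
      (hKc.isCompact.uniformContinuousOn_of_continuous hcont) 1 one_pos
    obtain ⟨δ, hδ, h⟩ := huc
    refine ⟨δ, hδ, fun x hx y hy hxy => ?_⟩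
    by_contra hne
    have h1 := h x hx y hy hxy
    have h2 := Nat.pairwise_one_le_dist (fun e => hne (Fin.ext e))
    exact absurd h1 (not_lt.2 h2)

open Real in
/-- Codes whose size grows like `φ ^ (2n)` and which predict itineraries on the good set. -/
lemma exists_code {m : ℕ} {P : Torus2 → Fin m} {K : Set Torus2} {δ : ℝ} (hδ : 0 < δ)
    (hK : ∀ x ∈ K, ∀ y ∈ K, dist x y < δ → P x = P y) :
    ∃ C > 0, ∀ n : ℕ, ∃ E : Finset (Fin n → Fin m), (E.card : ℝ) ≤ C * (goldenRatio ^ 2) ^ n ∧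
      ∀ x, ∃ g ∈ E, ∀ i : Fin n, catMap^[(i : ℕ)] x ∈ K → P (catMap^[(i : ℕ)] x) = g i := by
  classical
  obtain ⟨k, hk⟩ := exists_nat_gt (3 / δ)
  have hk0 : (0 : ℝ) < k := lt_trans (by positivity) hk
  refine ⟨4 * k * (2 * k + 1), by positivity, fun n => ?_⟩
  obtain ⟨r, J, hJ, hrJ, hr⟩ := exists_cover (by exact_mod_cast hk0 : 0 < k) n
  -- The points of one piece of the cover which are in `K` at time `i` are in the same atom of `P`
  -- at that time; `P 0` is an arbitrary value when there are none.
  set G : ℤ × ℤ → Fin n → Fin m := fun z i =>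
    if h : ∃ y, r y = z ∧ catMap^[(i : ℕ)] y ∈ K then P (catMap^[(i : ℕ)] h.choose) else P 0
    with hG
  refine ⟨J.image G, le_trans (by exact_mod_cast Finset.card_image_le) hJ, fun x =>
    ⟨G (r x), Finset.mem_image_of_mem _ (hrJ x), fun i hi => ?_⟩⟩
  have h : ∃ y, r y = r x ∧ catMap^[(i : ℕ)] y ∈ K := ⟨x, rfl, hi⟩
  simp only [hG, dif_pos h]
  refine hK _ hi _ h.choose_spec.2 ((hr _ _ h.choose_spec.1.symm i i.2).trans_lt ?_)
  rwa [div_lt_comm₀ hk0 hδ]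

lemma tendsto_const_div_add (a b : ℝ) :
    Tendsto (fun n : ℕ => ((a / n + b : ℝ) : EReal)) atTop (𝓝 (b : EReal)) := by
  refine (continuous_coe_real_ereal.tendsto _).comp ?_
  simpa using (tendsto_const_div_atTop_nhds_zero_nat a).add_const b

open Real in
/-- The upper bound: no partition has entropy rate above `log (φ ^ 2)`. -/
lemma liminf_le {m : ℕ} {P : Torus2 → Fin m} (hP : Measurable P) :
    atTop.liminf (fun n : ℕ => ((partitionDynEntropy volume catMap P n / n : ℝ) : EReal)) ≤
      (Real.log (goldenRatio ^ 2) : ℝ) := by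
  have hm : 0 < m := Fin.pos (P 0)
  have hm' : (1 : ℝ) ≤ m := by exact_mod_cast hm
  have hpos := goldenRatio_pos
  refine EReal.le_of_forall_lt_iff_le.1 fun z hz => ?_
  have hz' : 0 < z - Real.log (goldenRatio ^ 2) := sub_pos.2 (EReal.coe_lt_coe_iff.1 hz)
  set d := (z - Real.log (goldenRatio ^ 2)) / 2 with hd
  have hd0 : 0 < d := by positivity
  -- The corruption rate `θ` is chosen so that `-log (1 - θ) = d`.
  set θ := 1 - Real.exp (-d) with hθ
  have hθ0 : 0 < θ := by
    have : Real.exp (-d) < 1 := Real.exp_lt_one_iff.2 (by linarith)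
    linarith
  have hθ1 : θ < 1 := by linarith [Real.exp_pos (-d)]
  have hθd : -Real.log (1 - θ) = d := by simp [hθ]
  have hL : 0 ≤ Real.log (m / θ) := Real.log_nonneg (by rw [le_div_iff₀ hθ0]; linarith)
  set ε := d / (Real.log (m / θ) + 1) with hε
  have hε0 : 0 < ε := by positivity
  have hLε : Real.log (m / θ) * ε ≤ d := by
    rw [hε, mul_div_assoc', div_le_iff₀ (by positivity)]
    nlinarith
  obtain ⟨K, hKm, hKε, δ, hδ, hK⟩ := exists_good_set hP hε0
  obtain ⟨C, hC, hcode⟩ := exists_code hδ hK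
  have hbound : ∀ n : ℕ, 0 < n →
      partitionDynEntropy volume catMap P n / n ≤ Real.log C / n + z := fun n hn => by
    obtain ⟨E, hEc, hE⟩ := hcode n
    have h1 := partitionDynEntropy_le volume measurePreserving_catMap hm hP n hKm hKε hθ0 hθ1 E hE
    have hE0 : (0 : ℝ) < E.card := by
      obtain ⟨g, hg, -⟩ := hE 0
      exact_mod_cast Finset.card_pos.2 ⟨g, hg⟩
    have h2 := Real.log_le_log hE0 hEc
    rw [Real.log_mul hC.ne' (by positivity), Real.log_pow] at h2
    have hn' : (0 : ℝ) < n := by exact_mod_cast hn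
    rw [hθd] at h1
    have h3 : (n : ℝ) * (d + Real.log (m / θ) * ε) ≤ n * (d + d) := by gcongr
    have h4 : Real.log C / n + z = (Real.log C + n * z) / n := by field_simp
    rw [h4]
    gcongr
    have h5 : d + d = z - Real.log (goldenRatio ^ 2) := by rw [hd]; ring
    rw [h5] at h3
    linarith
  rw [← (tendsto_const_div_add (Real.log C) z).liminf_eq]
  refine liminf_le_liminf ?_
  filter_upwards [eventually_gt_atTop 0] with n hn
  exact EReal.coe_le_coe_iff.2 (hbound n hn)

open Real in
/-- The lower bound: the partition into squares has entropy rate at least `log (φ ^ 2)`. -/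
lemma le_liminf :
    ((Real.log (goldenRatio ^ 2) : ℝ) : EReal) ≤
      atTop.liminf fun n : ℕ =>
        ((partitionDynEntropy volume catMap squareIndex n / n : ℝ) : EReal) := by
  have hpos := goldenRatio_pos
  set C : ℝ := (goldenRatio ^ 2) ^ 2 / 3 with hC
  rw [← (tendsto_const_div_add (-Real.log C) (Real.log (goldenRatio ^ 2))).liminf_eq]
  refine liminf_le_liminf ?_
  filter_upwards [eventually_gt_atTop 0] with n hn
  refine EReal.coe_le_coe_iff.2 ?_
  have hn' : (0 : ℝ) < n := by exact_mod_cast hn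
  have h := neg_log_le_partitionDynEntropy volume measurePreserving_catMap.measurable
    measurable_squareIndex n (cylinder_le hn)
  rw [← hC, Real.log_div (by positivity) (by positivity), Real.log_pow] at h
  have h4 : -Real.log C / n + Real.log (goldenRatio ^ 2) =
      (-Real.log C + n * Real.log (goldenRatio ^ 2)) / n := by field_simp
  rw [h4]
  gcongr
  linarith

/-- The diffeomorphism of the torus `𝕋² = (ℝ/ℤ)²` induced by the linear map with matrix
`[[2, 1], [1, 1]]` has metric entropy, with respect to the Haar (Lebesgue) probability
measure, equal to `log((3 + √5)/2)`. -/
theorem entropy_of_cat_map :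
    kolmogorovSinaiEntropy (volume : Measure Torus2) catMap =
      ((Real.log ((3 + Real.sqrt 5) / 2) : ℝ) : EReal) := by
  have hphi : (3 + Real.sqrt 5) / 2 = Real.goldenRatio ^ 2 := by
    rw [Real.goldenRatio_sq, Real.goldenRatio]; ring
  rw [hphi]
  refine le_antisymm (iSup_le fun m => iSup_le fun P => liminf_le P.2) ?_
  exact le_iSup_of_le (6 * 6) (le_iSup_of_le ⟨squareIndex, measurable_squareIndex⟩ le_liminf)
end

section
/- (Turaev, 2003) Every C^∞ area-preserving (symplectic) embedding of the disc 𝔻 into ℝ² can be approximated arbitrarily well in the C^∞ topology by compositions H_{p_{2k}} ∘ … ∘ H_{p_1} of an even number of Hénon maps H_{p_i} with each p_i a polynomial. -/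
/-!
Let `F` be a symplectic embedding of `Disc`.  For `a < 1` close to `1` the rescaled map
`G x = a⁻¹ F(a x)` is close to `F` on `Disc` together with any number of derivatives
(`dilate_close`), and it is a symplectic embedding of an open ball containing `Disc`.  After a
translation, `G 0 = 0`.

The radial isotopy `G_t x = t⁻¹ G(t x)` joins `DG(0)` (`t → 0`) to `G` (`t = 1`).  Up to scaling it
is generated by an *autonomous* vector field: there is one Hamiltonian `K` with
`X_K(G x) + G x = DG(x) x` (`exists_hamiltonian`), so that `s ↦ G(e^s x)` is a trajectory of `X_K`
plus the Euler field.  Near the origin `G_t` is replaced by the linear map `DG(0)`, of determinant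
`1`, which is an even composition of Hénon maps (`evenH_linear`).

On compact sets `K` is a limit of polynomials, with all derivatives (`exists_poly_ham`: approximate
the highest partial derivatives by Weierstrass and integrate).  Every polynomial Hamiltonian is a sum
of ridge Hamiltonians `P(x + c y)`, whose flows are shears, and shears in any direction are even
compositions of Hénon maps.  Hence `y ↦ y + h X_K(y)` is, up to `o(h)`, an even composition
`f_h` of Hénon maps (`good_of_mem_polyAlg`).

Following the isotopy from `t` to `1` in `N` steps with `(1 + h) ^ N = t⁻¹` amounts to iterating the
maps `(1 + h) f_h`.  This is a consistent one-step scheme, so it converges (`scheme_converges`).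
By `EvenH.scaled_iterate` the `N`-th iterate is an even composition precomposed with the scaling
by `(1 + h) ^ N = t⁻¹`, and this scaling cancels against the `t` in the initial map `x ↦ t DG(0) x`.

Convergence with derivatives is reduced to uniform convergence through tangent maps: each
ingredient (composition, rescaling, one-step schemes) yields a statement of the same form for
`Tf (x, v) = (f x, Df(x) v)`, so that induction on the order `r` applies (`CrConv`).
-/
open Filter MeasureTheory Set Topology
open scoped ENNReal NNReal

noncomputable section

/-- The plane `ℝ²`. -/
abbrev P2 := ℝ × ℝ

/-- The closed unit disc `𝔻 ⊆ ℝ²`. -/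
def Disc : Set P2 := Metric.closedBall 0 1

/-- A `C^r` diffeomorphism of the closed unit disc (given together with its inverse). -/
structure DiscDiffeo (r : ℕ∞) where
  toFun : P2 → P2
  invFun : P2 → P2
  mapsTo : Set.MapsTo toFun Disc Disc
  mapsTo_inv : Set.MapsTo invFun Disc Disc
  left_inv : ∀ x ∈ Disc, invFun (toFun x) = x
  right_inv : ∀ x ∈ Disc, toFun (invFun x) = x
  contDiffOn : ContDiffOn ℝ r toFun Disc
  contDiffOn_inv : ContDiffOn ℝ r invFun Disc

/-- A diffeomorphism of the disc preserves the standard area form `ω` iff the Jacobian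
determinant of its derivative equals `1` everywhere on the disc. -/
def DiscDiffeo.AreaPreserving {r : ℕ∞} (f : DiscDiffeo r) : Prop :=
  ∀ x ∈ Disc, (fderivWithin ℝ f.toFun Disc x).det = 1

/-- `C^r` distance of two maps over a set `s`:
the sum over `i ≤ r` of the sup over `s` of the norms of the differences of the
`i`-th derivatives (`ℝ≥0∞`-valued, so that no boundedness assumptions are needed). -/
def crDistOn (r : ℕ) (s : Set P2) (f g : P2 → P2) : ℝ≥0∞ :=
  ∑ i ∈ Finset.range (r + 1),
    ⨆ x ∈ s, (‖iteratedFDerivWithin ℝ i f s x - iteratedFDerivWithin ℝ i g s x‖₊ : ℝ≥0∞)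

/-- `C^r` distance of two maps of the disc. -/
def crDist (r : ℕ) (f g : P2 → P2) : ℝ≥0∞ := crDistOn r Disc f g

/-- The normalized Lebesgue (area) measure on the disc. -/
def discMeasure : Measure P2 := (volume Disc)⁻¹ • volume.restrict Disc

end

noncomputable section

/-- A `C^r` diffeomorphism of the plane `ℝ²` (given together with its inverse). -/
structure PlaneDiffeo (r : ℕ∞) where
  toFun : P2 → P2
  invFun : P2 → P2
  left_inv : Function.LeftInverse invFun toFun
  right_inv : Function.RightInverse invFun toFun
  contDiff : ContDiff ℝ r toFun
  contDiff_inv : ContDiff ℝ r invFun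

/-- A diffeomorphism of the plane preserves the standard area form `ω` (is symplectic)
iff the Jacobian determinant of its derivative equals `1` everywhere. -/
def PlaneDiffeo.Symplectic {r : ℕ∞} (f : PlaneDiffeo r) : Prop :=
  ∀ x : P2, (fderiv ℝ f.toFun x).det = 1

/-- Global `C^r` distance between two maps of the plane. -/
def crDistGlobal (r : ℕ) (f g : P2 → P2) : ℝ≥0∞ :=
  ∑ i ∈ Finset.range (r + 1),
    ⨆ x : P2, (‖iteratedFDeriv ℝ i f x - iteratedFDeriv ℝ i g x‖₊ : ℝ≥0∞)

/-- The Hénon-type map `H_ψ (x, y) = (y, −x + ψ(y))`. -/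
def henon (ψ : ℝ → ℝ) : P2 → P2 := fun p => (p.2, -p.1 + ψ p.2)

/-- The vertical shear `S_ψ (x, y) = (x, y + ψ(x))`. -/
def vshear (ψ : ℝ → ℝ) : P2 → P2 := fun p => (p.1, p.2 + ψ p.1)

/-- The composition `g (n-1) ∘ ⋯ ∘ g 1 ∘ g 0` of a finite sequence of maps. -/
def seqComp : {n : ℕ} → (Fin n → (P2 → P2)) → P2 → P2
  | 0, _ => id
  | n + 1, g => g (Fin.last n) ∘ seqComp fun i => g i.castSucc

/-- `O` is a hyperbolic periodic point of period `τ` for the map `f` of the plane: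
the derivative of `f^τ` at `O` has a pair of real eigenvalues `c, c⁻¹` with `|c| ≠ 1`. -/
def IsHypPerPtPlane (f : P2 → P2) (τ : ℕ) (O : P2) : Prop :=
  0 < τ ∧ f^[τ] O = O ∧
    ∃ (c : ℝ) (v w : P2), c ≠ 0 ∧ |c| ≠ 1 ∧ LinearIndependent ℝ ![v, w] ∧
      fderiv ℝ (f^[τ]) O v = c • v ∧ fderiv ℝ (f^[τ]) O w = c⁻¹ • w

/-- The stable set (stable manifold) of the point `P` for the dynamics `f` on the
plane.  The unstable set of `P` for a diffeomorphism `f` is `stableSetPlane f⁻¹ P`. -/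
def stableSetPlane (f : P2 → P2) (P : P2) : Set P2 :=
  {x | Filter.Tendsto (fun n : ℕ => dist (f^[n] x) (f^[n] P)) Filter.atTop (nhds 0)}

/-- A nontrivial arc in the plane: the injective continuous image of `[0, 1]`. -/
def IsNontrivialArc (A : Set P2) : Prop :=
  ∃ γ : ℝ → P2, ContinuousOn γ (Set.Icc 0 1) ∧ Set.InjOn γ (Set.Icc 0 1) ∧
    γ '' Set.Icc 0 1 = A

/-- The hyperbolic periodic point `O` of period `τ` of the diffeomorphism `f` (with
inverse `finv`) has a homoclinic band: a nontrivial arc along which the unstable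
manifold `W^u(O)` and a stable manifold `W^s(f^j O)` (`0 ≤ j < τ`) coincide. -/
def HasHomoclinicBandPlane (f finv : P2 → P2) (τ : ℕ) (O : P2) : Prop :=
  ∃ j < τ, ∃ A : Set P2, IsNontrivialArc A ∧
    A ⊆ stableSetPlane finv O ∧ A ⊆ stableSetPlane f (f^[j] O)

/-- A `C^∞` area-preserving (symplectic) embedding of the closed disc into the plane. -/
structure SymplEmbDisc where
  toFun : P2 → P2
  contDiffOn : ContDiffOn ℝ (⊤ : ℕ∞) toFun Disc
  injOn : Set.InjOn toFun Disc
  symp : ∀ x ∈ Disc, (fderivWithin ℝ toFun Disc x).det = 1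

end

local notation "C∞" => ((⊤ : ℕ∞) : WithTop ℕ∞)

/-! ### Tangent maps and convergence of order r -/

section Tangent

variable {E F G : Type} [NormedAddCommGroup E] [NormedSpace ℝ E]
  [NormedAddCommGroup F] [NormedSpace ℝ F] [NormedAddCommGroup G] [NormedSpace ℝ G]

/-- The tangent map `Tf (x, v) = (f x, Df(x) v)`. -/
noncomputable def tmap (f : E → F) : E × E → F × F := fun p => (f p.1, fderiv ℝ f p.1 p.2)

lemma tmap_contDiffAt {f : E → F} {p : E × E} (hf : ContDiffAt ℝ C∞ f p.1) :
    ContDiffAt ℝ C∞ (tmap f) p := by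
  have h1 : ContDiffAt ℝ C∞ (fun q : E × E => f q.1) p :=
    ContDiffAt.comp p (g := f) (f := Prod.fst) hf contDiffAt_fst
  have h2 : ContDiffAt ℝ C∞ (fun q : E × E => fderiv ℝ f q.1) p :=
    ContDiffAt.comp p (g := fderiv ℝ f) (f := Prod.fst)
      (hf.fderiv_right (m := C∞) (by simp)) contDiffAt_fst
  exact h1.prodMk (h2.clm_apply contDiffAt_snd)

lemma tmap_contDiffOn {f : E → F} {U : Set E} (hU : IsOpen U) (hf : ContDiffOn ℝ C∞ f U) :
    ContDiffOn ℝ C∞ (tmap f) (U ×ˢ univ) := fun p hp =>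
  (tmap_contDiffAt (hf.contDiffAt (hU.mem_nhds hp.1))).contDiffWithinAt

lemma tmap_contDiff {f : E → F} (hf : ContDiff ℝ C∞ f) : ContDiff ℝ C∞ (tmap f) :=
  contDiff_iff_contDiffAt.2 fun p => tmap_contDiffAt (p := p) hf.contDiffAt

lemma tmap_comp {f : E → F} {g : F → G} {p : E × E} (hf : DifferentiableAt ℝ f p.1)
    (hg : DifferentiableAt ℝ g (f p.1)) : tmap (g ∘ f) p = tmap g (tmap f p) := by
  simp [tmap, fderiv_comp p.1 hg hf]

lemma tmap_eventuallyEq {f g : E → F} {p : E × E} (h : f =ᶠ[𝓝 p.1] g) :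
    tmap f =ᶠ[𝓝 p] tmap g := by
  have h' : ∀ᶠ x in 𝓝 p.1, f =ᶠ[𝓝 x] g := h.eventuallyEq_nhds
  filter_upwards [continuousAt_fst.eventually h'] with q hq
  simp [tmap, hq.fderiv_eq, hq.self_of_nhds]

/-- A smooth map is differentiable near every point. -/
lemma ContDiffAt.ev_diff {f : E → F} {x : E} (hf : ContDiffAt ℝ C∞ f x) :
    ∀ᶠ y in 𝓝 x, DifferentiableAt ℝ f y := by
  have h1 : ContDiffAt ℝ 1 f x := hf.of_le (by exact_mod_cast le_top)
  filter_upwards [h1.eventually (by simp)] with y hy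
  exact hy.differentiableAt (by simp)

lemma tmap_comp_eventuallyEq {f : E → F} {g : F → G} {p : E × E} (hf : ContDiffAt ℝ C∞ f p.1)
    (hg : ContDiffAt ℝ C∞ g (f p.1)) : tmap (g ∘ f) =ᶠ[𝓝 p] tmap g ∘ tmap f := by
  filter_upwards [continuousAt_fst.eventually hf.ev_diff,
    continuousAt_fst.eventually (hf.continuousAt.eventually hg.ev_diff)] with q h1 h2
  exact tmap_comp h1 h2

end Tangent

section Conv

variable {ι : Type}

/-- `CrConv l r f g U`: the maps `f i` converge to `g` along the filter `l`, uniformly on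
compact subsets of `U` together with their derivatives up to order `r`; moreover, near each
compact subset of `U` the maps `f i` are eventually smooth.  Derivatives of order `r + 1` are
encoded by tangent maps: convergence of order `r + 1` means convergence of order `r` of the
tangent maps. -/
def CrConv (l : Filter ι) : ℕ → ∀ {E F : Type} [NormedAddCommGroup E] [NormedSpace ℝ E]
    [NormedAddCommGroup F] [NormedSpace ℝ F], (ι → E → F) → (E → F) → Set E → Prop
  | 0, _, _, _, _, _, _, f, g, U => ∀ K ⊆ U, IsCompact K → ∀ ε > 0, ∀ᶠ i in l, ∀ x ∈ K,
      ContDiffAt ℝ C∞ (f i) x ∧ dist (f i x) (g x) < ε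
  | r + 1, _, _, _, _, _, _, f, g, U =>
      CrConv l r (fun i => tmap (f i)) (tmap g) (U ×ˢ univ)

variable {l : Filter ι} {E F G : Type} [NormedAddCommGroup E] [NormedSpace ℝ E]
  [NormedAddCommGroup F] [NormedSpace ℝ F] [NormedAddCommGroup G] [NormedSpace ℝ G]

lemma exists_compact_prod {E F : Type} [NormedAddCommGroup E] [NormedAddCommGroup F] {U : Set E} {K : Set (E × F)} (hK : K ⊆ U ×ˢ univ)
    (hc : IsCompact K) : Prod.fst '' K ⊆ U ∧ IsCompact (Prod.fst '' K) :=
  ⟨by rintro _ ⟨p, hp, rfl⟩; exact (hK hp).1, hc.image continuous_fst⟩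

lemma CrConv.mono {r : ℕ} {f : ι → E → F} {g : E → F} {U V : Set E} (h : CrConv l r f g U)
    (hV : V ⊆ U) : CrConv l r f g V := by
  induction r generalizing E F with
  | zero => exact fun K hK => h K (hK.trans hV)
  | succ r ih => exact ih (E := E × E) (F := F × F) h (prod_mono hV subset_rfl)

lemma CrConv.congr {r : ℕ} {f f' : ι → E → F} {g g' : E → F} {U : Set E} (hU : IsOpen U)
    (h : CrConv l r f g U) (hg : EqOn g' g U)
    (hf : ∀ K ⊆ U, IsCompact K → ∀ᶠ i in l, ∀ x ∈ K, f' i =ᶠ[𝓝 x] f i) :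
    CrConv l r f' g' U := by
  induction r generalizing E F with
  | zero =>
    intro K hK hc ε hε
    filter_upwards [h K hK hc ε hε, hf K hK hc] with i h1 h2 x hx
    rw [(h2 x hx).self_of_nhds, hg (hK hx)]
    exact ⟨(h1 x hx).1.congr_of_eventuallyEq (h2 x hx), (h1 x hx).2⟩
  | succ r ih =>
    refine ih (E := E × E) (F := F × F) (hU.prod isOpen_univ) h ?_ ?_
    · intro p hp
      have : g' =ᶠ[𝓝 p.1] g := by
        filter_upwards [hU.mem_nhds hp.1] with y hy using hg hy
      exact (tmap_eventuallyEq this).self_of_nhds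
    · intro K hK hc
      obtain ⟨h1, h2⟩ := exists_compact_prod hK hc
      filter_upwards [hf _ h1 h2] with i hi p hp
      exact tmap_eventuallyEq (hi _ (mem_image_of_mem _ hp))

lemma CrConv.eventually_contDiffAt {r : ℕ} {f : ι → E → F} {g : E → F} {U : Set E}
    (h : CrConv l r f g U) {K : Set E} (hK : K ⊆ U) (hc : IsCompact K) :
    ∀ᶠ i in l, ∀ x ∈ K, ContDiffAt ℝ C∞ (f i) x := by
  induction r generalizing E F with
  | zero =>
    filter_upwards [h K hK hc 1 one_pos] with i hi x hx using (hi x hx).1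
  | succ r ih =>
    have := ih (E := E × E) (F := F × F) h (K := (fun x => (x, (0:E))) '' K)
      (by rintro _ ⟨x, hx, rfl⟩; exact ⟨hK hx, mem_univ _⟩) (hc.image (by fun_prop))
    filter_upwards [this] with i hi x hx
    have h1 := hi _ (mem_image_of_mem _ hx)
    exact ContDiffAt.comp x (g := fun p : E × E => (tmap (f i) p).1) (f := fun x => (x, (0:E)))
      h1.fst (by fun_prop)

lemma CrConv.zero {r : ℕ} {f : ι → E → F} {g : E → F} {U : Set E}
    (h : CrConv l r f g U) : CrConv l 0 f g U := by
  induction r generalizing E F with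
  | zero => exact h
  | succ r ih =>
    intro K hK hc ε hε
    have := ih (E := E × E) (F := F × F) h ((fun x => (x, (0:E))) '' K)
      (by rintro _ ⟨x, hx, rfl⟩; exact ⟨hK hx, mem_univ _⟩) (hc.image (by fun_prop)) ε hε
    filter_upwards [this, h.eventually_contDiffAt (r := r + 1) hK hc] with i hi hi' x hx
    exact ⟨hi' x hx, lt_of_le_of_lt (le_max_left _ _) (hi _ (mem_image_of_mem _ hx)).2⟩

lemma CrConv.const {r : ℕ} {g : E → F} {U : Set E} (hU : IsOpen U) (hg : ContDiffOn ℝ C∞ g U) :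
    CrConv l r (fun _ => g) g U := by
  induction r generalizing E F with
  | zero =>
    intro K hK _ ε hε
    exact Eventually.of_forall fun i x hx =>
      ⟨hg.contDiffAt (hU.mem_nhds (hK hx)), by simpa using hε⟩
  | succ r ih => exact ih (E := E × E) (F := F × F) (hU.prod isOpen_univ) (tmap_contDiffOn hU hg)

lemma exists_cthickening [FiniteDimensional ℝ F] {V K : Set F} (hV : IsOpen V) (hK : IsCompact K)
    (h : K ⊆ V) : ∃ δ > 0, IsCompact (Metric.cthickening δ K) ∧ Metric.cthickening δ K ⊆ V := by
  have := FiniteDimensional.proper_real F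
  obtain ⟨δ, hδ, h1⟩ := hK.exists_cthickening_subset_open hV h
  exact ⟨δ, hδ, hK.cthickening, h1⟩

lemma CrConv.comp {r : ℕ} [FiniteDimensional ℝ F] {f : ι → E → F} {f₀ : E → F} {g : ι → F → G}
    {g₀ : F → G} {U : Set E} {V : Set F} (hU : IsOpen U) (hV : IsOpen V)
    (hg : CrConv l r g g₀ V) (hf : CrConv l r f f₀ U) (hg₀ : ContDiffOn ℝ C∞ g₀ V)
    (hf₀ : ContDiffOn ℝ C∞ f₀ U) (hm : MapsTo f₀ U V) :
    CrConv l r (fun i => g i ∘ f i) (g₀ ∘ f₀) U := by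
  induction r generalizing E F G with
  | zero =>
    intro K hK hc ε hε
    have hc' : IsCompact (f₀ '' K) := hc.image_of_continuousOn (hf₀.continuousOn.mono hK)
    have hs' : f₀ '' K ⊆ V := by rintro _ ⟨x, hx, rfl⟩; exact hm (hK hx)
    obtain ⟨δ, hδ, h1, h2⟩ := exists_cthickening hV hc' hs'
    have hu := h1.uniformContinuousOn_of_continuous (hg₀.continuousOn.mono h2)
    obtain ⟨η, hη, hu⟩ := Metric.uniformContinuousOn_iff.1 hu (ε / 2) (half_pos hε)
    filter_upwards [hf K hK hc (min δ η) (lt_min hδ hη), hg _ h2 h1 (ε / 2) (half_pos hε)]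
      with i hi1 hi2 x hx
    obtain ⟨a1, a2⟩ := hi1 x hx
    have m1 : f i x ∈ Metric.cthickening δ (f₀ '' K) :=
      Metric.mem_cthickening_of_dist_le _ _ _ _ (mem_image_of_mem _ hx)
        (a2.le.trans (min_le_left _ _))
    have m2 : f₀ x ∈ Metric.cthickening δ (f₀ '' K) :=
      Metric.self_subset_cthickening _ (mem_image_of_mem _ hx)
    refine ⟨(hi2 _ m1).1.comp x a1, ?_⟩
    have := hu _ m1 _ m2 (a2.trans_le (min_le_right _ _))
    calc dist (g i (f i x)) (g₀ (f₀ x)) ≤ dist (g i (f i x)) (g₀ (f i x)) +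
          dist (g₀ (f i x)) (g₀ (f₀ x)) := dist_triangle _ _ _
      _ < ε / 2 + ε / 2 := add_lt_add (hi2 _ m1).2 this
      _ = ε := by ring
  | succ r ih =>
    have key := ih (E := E × E) (F := F × F) (G := G × G) (hU.prod isOpen_univ)
      (hV.prod isOpen_univ) hg hf (tmap_contDiffOn hV hg₀) (tmap_contDiffOn hU hf₀)
      (fun p hp => ⟨hm hp.1, mem_univ _⟩)
    refine CrConv.congr (E := E × E) (F := G × G) (r := r) (U := U ×ˢ univ)
      (hU.prod isOpen_univ) key ?_ ?_
    · intro p hp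
      exact tmap_comp ((hf₀.contDiffAt (hU.mem_nhds hp.1)).differentiableAt (by simp))
        ((hg₀.contDiffAt (hV.mem_nhds (hm hp.1))).differentiableAt (by simp))
    · intro K' hK' hc''
      obtain ⟨hK, hc⟩ := exists_compact_prod hK' hc''
      have hc' : IsCompact (f₀ '' (Prod.fst '' K')) :=
        hc.image_of_continuousOn (hf₀.continuousOn.mono hK)
      have hs' : f₀ '' (Prod.fst '' K') ⊆ V := by rintro _ ⟨x, hx, rfl⟩; exact hm (hK hx)
      obtain ⟨δ, hδ, h1, h2⟩ := exists_cthickening hV hc' hs'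
      filter_upwards [hf.zero _ hK hc δ hδ, hg.eventually_contDiffAt h2 h1] with i hi1 hi2 p hp
      obtain ⟨a1, a2⟩ := hi1 _ (mem_image_of_mem _ hp)
      exact tmap_comp_eventuallyEq a1 (hi2 _ (Metric.mem_cthickening_of_dist_le _ _ _ _
        (mem_image_of_mem _ (mem_image_of_mem _ hp)) a2.le))


lemma CrConv.comp_const {r : ℕ} [FiniteDimensional ℝ F] {f : ι → E → F} {f₀ : E → F}
    {g : F → G} {U : Set E} {V : Set F} (hU : IsOpen U) (hV : IsOpen V)
    (hg : ContDiffOn ℝ C∞ g V) (hf : CrConv l r f f₀ U)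
    (hf₀ : ContDiffOn ℝ C∞ f₀ U) (hm : MapsTo f₀ U V) :
    CrConv l r (fun i => g ∘ f i) (g ∘ f₀) U :=
  CrConv.comp hU hV (CrConv.const hV hg) hf hg hf₀ hm

lemma CrConv.prodMk {r : ℕ} [FiniteDimensional ℝ F] [FiniteDimensional ℝ G] {f : ι → E → F}
    {f₀ : E → F} {g : ι → E → G} {g₀ : E → G} {U : Set E} (hU : IsOpen U)
    (hf : CrConv l r f f₀ U) (hg : CrConv l r g g₀ U)
    (hf₀ : ContDiffOn ℝ C∞ f₀ U) (hg₀ : ContDiffOn ℝ C∞ g₀ U) :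
    CrConv l r (fun i x => (f i x, g i x)) (fun x => (f₀ x, g₀ x)) U := by
  induction r generalizing E F G with
  | zero =>
    intro K hK hc ε hε
    filter_upwards [hf K hK hc ε hε, hg K hK hc ε hε] with i h1 h2 x hx
    exact ⟨(h1 x hx).1.prodMk (h2 x hx).1, max_lt (h1 x hx).2 (h2 x hx).2⟩
  | succ r ih =>
    have hUo : IsOpen (U ×ˢ (univ : Set E)) := hU.prod isOpen_univ
    have key := ih (E := E × E) (F := F × F) (G := G × G) hUo hf hg
      (tmap_contDiffOn hU hf₀) (tmap_contDiffOn hU hg₀)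
    -- the tangent map of a pair is the pair of tangent maps, with the middle factors exchanged
    let σ : (F × F) × (G × G) → (F × G) × (F × G) := fun p => ((p.1.1, p.2.1), (p.1.2, p.2.2))
    have hσ : ContDiff ℝ C∞ σ := by fun_prop
    have key2 := CrConv.comp_const hUo isOpen_univ hσ.contDiffOn key
      ((tmap_contDiffOn hU hf₀).prodMk (tmap_contDiffOn hU hg₀)) (mapsTo_univ _ _)
    have hσT : ∀ (a : E → F) (b : E → G) (p : E × E), DifferentiableAt ℝ a p.1 →
        DifferentiableAt ℝ b p.1 → tmap (fun x => (a x, b x)) p = σ (tmap a p, tmap b p) := by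
      intro a b p ha hb
      simp [tmap, σ, ha.fderiv_prodMk hb]
    refine CrConv.congr (E := E × E) (F := (F × G) × (F × G)) (r := r) (U := U ×ˢ univ)
      hUo key2 ?_ ?_
    · intro p hp
      exact hσT _ _ _ ((hf₀.contDiffAt (hU.mem_nhds hp.1)).differentiableAt (by simp))
        ((hg₀.contDiffAt (hU.mem_nhds hp.1)).differentiableAt (by simp))
    · intro K' hK' hc''
      obtain ⟨hK, hc⟩ := exists_compact_prod hK' hc''
      filter_upwards [hf.eventually_contDiffAt hK hc, hg.eventually_contDiffAt hK hc]
        with i h1 h2 p hp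
      filter_upwards [continuousAt_fst.eventually (h1 _ (mem_image_of_mem _ hp)).ev_diff,
        continuousAt_fst.eventually (h2 _ (mem_image_of_mem _ hp)).ev_diff] with q a1 a2
      exact hσT _ _ _ a1 a2

/-- Iterated limits: if `g m → g₀` and, for each `m`, `f m i → g m` on `U m`, where the sets
`U m` eventually contain every compact subset of `U`, then `f m i → g₀` on `U`. -/
lemma CrConv.curry {κ : Type} {k : Filter κ} {r : ℕ} {f : κ → ι → E → F} {g : κ → E → F}
    {g₀ : E → F} {U : Set E} {V : κ → Set E} (hg : CrConv k r g g₀ U)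
    (hf : ∀ᶠ m in k, CrConv l r (f m) (g m) (V m))
    (hV : ∀ K ⊆ U, IsCompact K → ∀ᶠ m in k, K ⊆ V m) :
    CrConv (k.curry l) r (fun q : κ × ι => f q.1 q.2) g₀ U := by
  induction r generalizing E F with
  | zero =>
    intro K hK hc ε hε
    rw [Filter.eventually_curry_iff]
    filter_upwards [hf, hg K hK hc (ε / 2) (half_pos hε), hV K hK hc] with m h1 h2 h3
    filter_upwards [h1 K h3 hc (ε / 2) (half_pos hε)] with i hi x hx
    refine ⟨(hi x hx).1, ?_⟩
    have := dist_triangle (f m i x) (g m x) (g₀ x)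
    linarith [(hi x hx).2, (h2 x hx).2]
  | succ r ih =>
    refine ih (E := E × E) (F := F × F) (V := fun m => V m ×ˢ univ) hg hf ?_
    intro K' hK' hc''
    obtain ⟨hK, hc⟩ := exists_compact_prod hK' hc''
    filter_upwards [hV _ hK hc] with m hm p hp
    exact ⟨hm (mem_image_of_mem _ hp), mem_univ _⟩

lemma CrConv.of_succ {r : ℕ} [FiniteDimensional ℝ E] [FiniteDimensional ℝ F] {f : ι → E → F}
    {f₀ : E → F} {U : Set E} (hU : IsOpen U) (h : CrConv l (r + 1) f f₀ U)
    (hf₀ : ContDiffOn ℝ C∞ f₀ U) : CrConv l r f f₀ U := by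
  have h' : CrConv l r (fun i => tmap (f i)) (tmap f₀) (U ×ˢ univ) := h
  have hi : ContDiff ℝ C∞ (fun x : E => (x, (0 : E))) := by fun_prop
  have h1 := CrConv.comp hU (hU.prod isOpen_univ) h' (CrConv.const hU hi.contDiffOn)
    (tmap_contDiffOn hU hf₀) hi.contDiffOn (fun x hx => ⟨hx, mem_univ _⟩)
  have h2 := CrConv.comp_const hU isOpen_univ (g := (Prod.fst : F × F → F))
    contDiff_fst.contDiffOn h1 ((tmap_contDiffOn hU hf₀).comp hi.contDiffOn
      (fun x hx => ⟨hx, mem_univ _⟩)) (mapsTo_univ _ _)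
  exact h2

end Conv

/-! ### Iterated derivatives and rescaling at a fixed point -/

section Jets

variable {ι : Type} {l : Filter ι} {F : Type} [NormedAddCommGroup F] [NormedSpace ℝ F]

/-- On the plane, convergence of order `r + 1` implies convergence of order `r` of the
derivatives. -/
lemma CrConv.fderiv_plane {r : ℕ} [FiniteDimensional ℝ F] {f : ι → P2 → F} {f₀ : P2 → F}
    {U : Set P2} (hU : IsOpen U) (h : CrConv l (r + 1) f f₀ U) (hf₀ : ContDiffOn ℝ C∞ f₀ U) :
    CrConv l r (fun i => fderiv ℝ (f i)) (fderiv ℝ f₀) U := by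
  have h' : CrConv l r (fun i => tmap (f i)) (tmap f₀) (U ×ˢ univ) := h
  have hv : ∀ v : P2, CrConv l r (fun i x => fderiv ℝ (f i) x v) (fun x => fderiv ℝ f₀ x v) U := by
    intro v
    have hi : ContDiff ℝ C∞ (fun x : P2 => (x, v)) := by fun_prop
    have h1 := CrConv.comp hU (hU.prod isOpen_univ) h' (CrConv.const hU hi.contDiffOn)
      (tmap_contDiffOn hU hf₀) hi.contDiffOn (fun x hx => ⟨hx, mem_univ _⟩)
    exact CrConv.comp_const hU isOpen_univ (g := (Prod.snd : F × F → F))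
      contDiff_snd.contDiffOn h1 ((tmap_contDiffOn hU hf₀).comp hi.contDiffOn
        (fun x hx => ⟨hx, mem_univ _⟩)) (mapsTo_univ _ _)
  have hs : ∀ v : P2, ContDiffOn ℝ C∞ (fun x => fderiv ℝ f₀ x v) U := fun v =>
    (hf₀.fderiv_of_isOpen hU (m := C∞) (by simp)).clm_apply contDiffOn_const
  let Λ : F × F → (P2 →L[ℝ] F) := fun p =>
    (ContinuousLinearMap.fst ℝ ℝ ℝ).smulRight p.1 + (ContinuousLinearMap.snd ℝ ℝ ℝ).smulRight p.2
  have hΛ : ContDiff ℝ C∞ Λ := by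
    have e1 : ContDiff ℝ C∞ (fun p : F × F => (ContinuousLinearMap.fst ℝ ℝ ℝ).smulRight p.1) :=
      contDiff_const.smulRight contDiff_fst
    have e2 : ContDiff ℝ C∞ (fun p : F × F => (ContinuousLinearMap.snd ℝ ℝ ℝ).smulRight p.2) :=
      contDiff_const.smulRight contDiff_snd
    exact e1.add e2
  have key := CrConv.comp_const hU isOpen_univ hΛ.contDiffOn
    (CrConv.prodMk hU (hv (1, 0)) (hv (0, 1)) (hs _) (hs _)) ((hs _).prodMk (hs _))
    (mapsTo_univ _ _)
  have e : ∀ A : P2 →L[ℝ] F, A = Λ (A (1, 0), A (0, 1)) := by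
    intro A
    ext <;> simp [Λ]
  refine key.congr hU (fun x _ => e _) ?_
  exact fun K _ _ => Eventually.of_forall fun i x _ => Eventually.of_forall fun y => e _

lemma CrConv.iteratedFDeriv_plane {r : ℕ} [FiniteDimensional ℝ F] {f : ι → P2 → F} {f₀ : P2 → F}
    {U : Set P2} (hU : IsOpen U) (h : CrConv l r f f₀ U) (hf₀ : ContDiffOn ℝ C∞ f₀ U)
    {K : Set P2} (hK : K ⊆ U) (hc : IsCompact K) {ε : ℝ} (hε : 0 < ε) :
    ∀ᶠ i in l, ∀ x ∈ K, ‖iteratedFDeriv ℝ r f₀ x - iteratedFDeriv ℝ r (f i) x‖ < ε := by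
  induction r generalizing F with
  | zero =>
    filter_upwards [h K hK hc ε hε] with i hi x hx
    have := (hi x hx).2
    rw [dist_eq_norm, norm_sub_rev] at this
    rw [iteratedFDeriv_zero_eq_comp, iteratedFDeriv_zero_eq_comp, Function.comp_apply,
      Function.comp_apply, ← map_sub, LinearIsometryEquiv.norm_map]
    exact this
  | succ r ih =>
    have := ih (F := P2 →L[ℝ] F) (h.fderiv_plane hU hf₀)
      (hf₀.fderiv_of_isOpen hU (m := C∞) (by simp))
    filter_upwards [this] with i hi x hx
    rw [iteratedFDeriv_succ_eq_comp_right, iteratedFDeriv_succ_eq_comp_right,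
      Function.comp_apply, Function.comp_apply, ← dist_eq_norm, LinearIsometryEquiv.dist_map,
      dist_eq_norm]
    exact hi x hx

end Jets

section Rescale

variable {E F : Type} [NormedAddCommGroup E] [NormedSpace ℝ E]
  [NormedAddCommGroup F] [NormedSpace ℝ F]

lemma fderiv_tmap {f : E → F} {p : E × E} (hf : ContDiffAt ℝ C∞ f p.1) (q : E × E) :
    fderiv ℝ (tmap f) p q =
      (fderiv ℝ f p.1 q.1, fderiv ℝ (fderiv ℝ f) p.1 q.1 p.2 + fderiv ℝ f p.1 q.2) := by
  have h0 : HasFDerivAt f (fderiv ℝ f p.1) p.1 := (hf.differentiableAt (by simp)).hasFDerivAt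
  have h1 : HasFDerivAt (fun q : E × E => f q.1) _ p := h0.comp p hasFDerivAt_fst
  have h2' : HasFDerivAt (fderiv ℝ f) (fderiv ℝ (fderiv ℝ f) p.1) p.1 :=
    ((hf.fderiv_right (m := C∞) (by simp)).differentiableAt (by simp)).hasFDerivAt
  have h2 : HasFDerivAt (fun q : E × E => fderiv ℝ f q.1) _ p := h2'.comp p hasFDerivAt_fst
  have h3 := h2.clm_apply (hasFDerivAt_snd (p := p))
  have h4 : HasFDerivAt (tmap f) _ p := h1.prodMk h3
  rw [h4.fderiv]
  simp [add_comm]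

lemma tmap_rescale {f : E → F} {c d : ℝ} {p : E × E} (hf : DifferentiableAt ℝ f (c • p.1)) :
    tmap (fun x => d • f (c • x)) p = d • tmap f (c • p) := by
  have h1 : HasFDerivAt (fun x : E => c • x) (c • ContinuousLinearMap.id ℝ E) p.1 :=
    (hasFDerivAt_id p.1).const_smul c
  have h2 : HasFDerivAt (fun x => d • f (c • x)) _ p.1 :=
    (hf.hasFDerivAt.comp p.1 h1).const_smul d
  simp [tmap, h2.fderiv]

/-- Blow-up at a fixed point: the rescaled maps `x ↦ t⁻¹ f (t x)` converge to the linear part of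
`f` at the origin.  The statement reproduces itself under passage to tangent maps. -/
lemma CrConv.rescale {r : ℕ} [FiniteDimensional ℝ E] {f : E → F} {V : Set E} (hV : IsOpen V)
    (h0 : (0 : E) ∈ V) (hf : ContDiffOn ℝ C∞ f V) (hf0 : f 0 = 0) :
    CrConv (𝓝[>] (0:ℝ)) r (fun t x => t⁻¹ • f (t • x)) (fderiv ℝ f 0) univ := by
  have hbd : ∀ {E : Type} [NormedAddCommGroup E] [NormedSpace ℝ E] {V : Set E}, IsOpen V →
      (0 : E) ∈ V → ∀ K : Set E, IsCompact K → ∀ᶠ t in 𝓝[>] (0:ℝ), ∀ x ∈ K, t • x ∈ V := by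
    intro E _ _ V hV h0 K hK
    obtain ⟨δ, hδ, hb⟩ := Metric.isOpen_iff.1 hV 0 h0
    obtain ⟨R, hR⟩ := hK.isBounded.exists_norm_le
    have : ∀ᶠ t in 𝓝[>] (0:ℝ), t * (|R| + 1) < δ := by
      have : Tendsto (fun t : ℝ => t * (|R| + 1)) (𝓝[>] 0) (𝓝 (0 * (|R| + 1))) :=
        ((continuous_id.mul continuous_const).tendsto 0).mono_left nhdsWithin_le_nhds
      rw [zero_mul] at this
      exact this.eventually (gt_mem_nhds hδ)
    filter_upwards [this, self_mem_nhdsWithin] with t ht ht0 x hx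
    apply hb
    rw [mem_ball_zero_iff, norm_smul, Real.norm_of_nonneg (le_of_lt ht0)]
    refine lt_of_le_of_lt ?_ ht
    have := hR x hx
    have := le_abs_self R
    exact mul_le_mul_of_nonneg_left (by linarith) (le_of_lt ht0)
  induction r generalizing E F with
  | zero =>
    intro K _ hK ε hε
    have hd : HasFDerivAt f (fderiv ℝ f 0) 0 :=
      ((hf.contDiffAt (hV.mem_nhds h0)).differentiableAt (by simp)).hasFDerivAt
    obtain ⟨R, hR⟩ := hK.isBounded.exists_norm_le
    have hR1 : 0 < |R| + 1 := by positivity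
    have h1 := (hasFDerivAt_iff_isLittleO_nhds_zero.1 hd).def
      (c := ε / (2 * (|R| + 1))) (by positivity)
    obtain ⟨N, hN, hNo, hN0⟩ := eventually_nhds_iff.1 h1
    filter_upwards [hbd hV h0 K hK, hbd hNo hN0 K hK, self_mem_nhdsWithin] with t a1 a2 ht x hx
    have ht : 0 < t := ht
    constructor
    · have : ContDiffAt ℝ C∞ f (t • x) := hf.contDiffAt (hV.mem_nhds (a1 x hx))
      exact (ContDiffAt.comp x (g := f) (f := fun x => t • x) this (by fun_prop)).const_smul _
    · have h2 := hN _ (a2 x hx)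
      simp only [zero_add, hf0, sub_zero, map_smul] at h2
      have h3 : t⁻¹ • f (t • x) - fderiv ℝ f 0 x = t⁻¹ • (f (t • x) - t • fderiv ℝ f 0 x) := by
        rw [smul_sub, smul_smul, inv_mul_cancel₀ ht.ne', one_smul]
      rw [dist_eq_norm, h3, norm_smul, norm_inv, Real.norm_of_nonneg ht.le]
      rw [norm_smul, Real.norm_of_nonneg ht.le] at h2
      have h4 : ‖x‖ ≤ |R| + 1 := (hR x hx).trans ((le_abs_self R).trans (by linarith))
      calc t⁻¹ * ‖f (t • x) - t • fderiv ℝ f 0 x‖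
          ≤ t⁻¹ * (ε / (2 * (|R| + 1)) * (t * (|R| + 1))) := by gcongr; exact h2.trans (by gcongr)
        _ = ε / 2 := by field_simp
        _ < ε := by linarith
  | succ r ih =>
    have hVo : IsOpen (V ×ˢ (univ : Set E)) := hV.prod isOpen_univ
    have h00 : ContDiffAt ℝ C∞ f 0 := hf.contDiffAt (hV.mem_nhds h0)
    have key := ih (E := E × E) (F := F × F) (f := tmap f) hVo ⟨h0, mem_univ _⟩
      (tmap_contDiffOn hV hf) (by simp [tmap, hf0])
    refine CrConv.congr (E := E × E) (F := F × F) (r := r) (U := univ ×ˢ univ)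
      (isOpen_univ.prod isOpen_univ) (key.mono (subset_univ _)) ?_ ?_
    · intro p _
      rw [fderiv_tmap (p := 0) h00]
      simp [tmap]
    · intro K' _ hK'
      have hK : IsCompact (Prod.fst '' K') := hK'.image continuous_fst
      filter_upwards [hbd hV h0 _ hK] with t ht p hp
      have : ∀ᶠ q : E × E in 𝓝 p, t • q.1 ∈ V := by
        have hcont : ContinuousAt (fun q : E × E => t • q.1) p := by fun_prop
        exact hcont.eventually (hV.mem_nhds (ht _ (mem_image_of_mem _ hp)))
      filter_upwards [this] with q hq
      exact tmap_rescale ((hf.contDiffAt (hV.mem_nhds hq)).differentiableAt (by simp))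

end Rescale

/-! ### Convergence of one-step schemes -/

section Scheme

/-- The one-step map `y ↦ y + h V(h, y)`. -/
def step {E : Type} [NormedAddCommGroup E] [NormedSpace ℝ E] (V : ℝ → E → E) (h : ℝ) (y : E) : E :=
  y + h • V h y

variable {E : Type} [NormedAddCommGroup E] [NormedSpace ℝ E]

/-- First-order consistency of the radial flow `x ↦ (1 + h) x`, transported by `f`. -/
lemma consistency [FiniteDimensional ℝ E] {U K : Set E} {f : E → E} (hU : IsOpen U)
    (hf : ContDiffOn ℝ C∞ f U) (hK : K ⊆ U) (hc : IsCompact K) {η : ℝ} (hη : 0 < η) :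
    ∃ h₀ > 0, ∀ h, 0 < h → h < h₀ → ∀ x ∈ K, (∀ y ∈ segment ℝ x ((1 + h) • x), y ∈ K) →
      ‖f ((1 + h) • x) - f x - h • fderiv ℝ f x x‖ ≤ η * h := by
  obtain ⟨R, hR⟩ := hc.isBounded.exists_norm_le
  have hR1 : 0 < |R| + 1 := by positivity
  have hR2 : ∀ x ∈ K, ‖x‖ ≤ |R| + 1 := fun x hx =>
    (hR x hx).trans ((le_abs_self R).trans (by linarith))
  have hcont : ContinuousOn (fderiv ℝ f) K :=
    ((hf.fderiv_of_isOpen hU (m := C∞) (by simp)).continuousOn).mono hK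
  have hu := hc.uniformContinuousOn_of_continuous hcont
  obtain ⟨δ, hδ, hu⟩ := Metric.uniformContinuousOn_iff.1 hu (η / (|R| + 1)) (by positivity)
  refine ⟨δ / (|R| + 1), by positivity, fun h h0 h1 x hx hs => ?_⟩
  have hsub : (1 + h) • x - x = h • x := by rw [add_smul, one_smul]; abel
  have hn : ‖h • x‖ ≤ h * (|R| + 1) := by
    rw [norm_smul, Real.norm_of_nonneg h0.le]
    exact mul_le_mul_of_nonneg_left (hR2 x hx) h0.le
  have hlt : h * (|R| + 1) < δ := by rwa [lt_div_iff₀ hR1] at h1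
  have key := (convex_segment x ((1 + h) • x)).norm_image_sub_le_of_norm_fderiv_le'
    (𝕜 := ℝ) (f := f) (φ := fderiv ℝ f x) (C := η / (|R| + 1))
    (fun y hy => (hf.contDiffAt (hU.mem_nhds (hK (hs y hy)))).differentiableAt (by simp))
    (fun y hy => by
      rw [← dist_eq_norm]
      refine (hu y (hs y hy) x hx ?_).le
      rw [dist_eq_norm]
      refine lt_of_le_of_lt ?_ (hn.trans_lt hlt)
      rw [← hsub]
      exact norm_sub_le_of_mem_segment hy)
    (left_mem_segment ℝ _ _) (right_mem_segment ℝ _ _)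
  rw [hsub, map_smul] at key
  calc _ ≤ η / (|R| + 1) * ‖h • x‖ := key
    _ ≤ η / (|R| + 1) * (h * (|R| + 1)) := by gcongr
    _ = η * h := by field_simp

/-- Discrete Grönwall inequality with an a priori bound: the recursive estimate is only available
while the error stays below `1`. -/
lemma error_gronwall {e : ℕ → ℝ} {L η h T : ℝ} {N : ℕ} (hL : 0 ≤ L) (hη : 0 ≤ η) (hh : 0 ≤ h)
    (he0 : e 0 = 0) (hT : N * h ≤ T) (hsmall : η * T * Real.exp (L * T) ≤ 1)
    (hrec : ∀ j < N, e j ≤ 1 → e (j + 1) ≤ (1 + L * h) * e j + η * h) :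
    e N ≤ η * T * Real.exp (L * T) := by
  have hT0 : 0 ≤ T := le_trans (by positivity) hT
  have main : ∀ j ≤ N, e j ≤ η * (j * h) * (1 + L * h) ^ j ∧ e j ≤ η * T * Real.exp (L * T) := by
    have h2 : ∀ j ≤ N, η * (j * h) * (1 + L * h) ^ j ≤ η * T * Real.exp (L * T) := by
      intro j hj
      have hjT : j * h ≤ T := le_trans (by gcongr) hT
      have : (1 + L * h) ^ j ≤ Real.exp (L * T) := by
        calc (1 + L * h) ^ j ≤ (Real.exp (L * h)) ^ j := by
              gcongr
              linarith [Real.add_one_le_exp (L * h)]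
          _ = Real.exp (L * (j * h)) := by rw [← Real.exp_nat_mul]; ring_nf
          _ ≤ _ := by gcongr
      gcongr
    intro j hj
    suffices e j ≤ η * (j * h) * (1 + L * h) ^ j from ⟨this, this.trans (h2 j hj)⟩
    induction j with
    | zero => simp [he0]
    | succ j ih =>
      have hjN : j < N := hj
      have hj' := ih hjN.le
      have h3 := hrec j hjN ((hj'.trans (h2 j hjN.le)).trans hsmall)
      have h1 : (1:ℝ) ≤ (1 + L * h) ^ (j + 1) := one_le_pow₀ (by nlinarith [mul_nonneg hL hh])
      have hpos : 0 ≤ 1 + L * h := by positivity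
      calc e (j + 1) ≤ (1 + L * h) * e j + η * h := h3
        _ ≤ (1 + L * h) * (η * (j * h) * (1 + L * h) ^ j) + η * h * (1 + L * h) ^ (j + 1) := by
            refine add_le_add (mul_le_mul_of_nonneg_left hj' hpos) ?_
            exact le_mul_of_one_le_right (by positivity) h1
        _ = _ := by push_cast; ring
  exact (main N le_rfl).2

lemma contDiff_iterate {g : E → E} (hg : ContDiff ℝ C∞ g) (N : ℕ) : ContDiff ℝ C∞ (g^[N]) := by
  induction N with
  | zero => exact contDiff_id
  | succ N ih => rw [Function.iterate_succ']; exact hg.comp ih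

lemma tmap_iterate {g : E → E} (hg : ContDiff ℝ C∞ g) (N : ℕ) : tmap (g^[N]) = (tmap g)^[N] := by
  induction N with
  | zero => ext p <;> simp [tmap]
  | succ N ih =>
    have : ContDiff ℝ C∞ (g^[N]) := contDiff_iterate hg N
    rw [Function.iterate_succ', Function.iterate_succ', ← ih]
    funext p
    exact tmap_comp (this.differentiable (by simp) _) (hg.differentiable (by simp) _)

lemma tmap_step {V : ℝ → E → E} {h : ℝ} (hV : ContDiff ℝ C∞ (V h)) :
    tmap (step V h) = step (fun h => tmap (V h)) h := by
  funext p
  have h1 : HasFDerivAt (V h) (fderiv ℝ (V h) p.1) p.1 :=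
    (hV.differentiable (by simp) _).hasFDerivAt
  have h2 : HasFDerivAt (step V h) _ p.1 := (hasFDerivAt_id p.1).add (h1.const_smul h)
  ext <;> simp [tmap, step, h2.fderiv]

/-- Convergence of one-step schemes.  Let `W` be the push-forward of the Euler field by `f`, i.e.
`W (f x) = Df(x) x`, and let `V n h` be one-step increments with `V n 0 → W`.  Iterating the
one-step map `N` times, starting from `f (Λ⁻¹ x)`, with step size `h N` such that
`(1 + h N) ^ N = Λ`, approximates `f x`. All hypotheses are inherited by tangent maps, so
convergence with derivatives reduces to uniform convergence. -/
theorem scheme_converges {r : ℕ} [FiniteDimensional ℝ E] {U : Set E} (hU : IsOpen U)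
    (hstar : ∀ x ∈ U, ∀ t : ℝ, 0 < t → t ≤ 1 → t • x ∈ U) {f W : E → E}
    (hf : ContDiffOn ℝ C∞ f U) (hW : ContDiff ℝ C∞ W) (hWf : ∀ x ∈ U, W (f x) = fderiv ℝ f x x)
    {V : ℕ → ℝ → E → E} (hV : ∀ n, ContDiff ℝ C∞ (fun q : ℝ × E => V n q.1 q.2))
    (hc : CrConv atTop r (fun n => V n 0) W univ) {Λ : ℝ} (hΛ : 1 ≤ Λ) {h : ℕ → ℝ}
    (hpos : ∀ᶠ N in atTop, 0 < h N) (h0 : Tendsto h atTop (𝓝 0))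
    (hpow : ∀ᶠ N in atTop, (1 + h N) ^ N = Λ) :
    CrConv ((atTop : Filter ℕ).curry (atTop : Filter ℕ)) r
      (fun (q : ℕ × ℕ) x => (step (V q.1) (h q.2))^[q.2] (f (Λ⁻¹ • x))) f U := by
  have hΛ0 : 0 < Λ := by linarith
  have hΛi : 0 < Λ⁻¹ := by positivity
  have hΛi1 : Λ⁻¹ ≤ 1 := inv_le_one_of_one_le₀ hΛ
  induction r generalizing E with
  | zero =>
    have hstep : ∀ n h, ContDiff ℝ C∞ (step (V n) h) := by
      intro n h
      have : ContDiff ℝ C∞ (V n h) := (hV n).comp (contDiff_const.prodMk contDiff_id)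
      exact contDiff_id.add (this.const_smul h)
    intro K hK hKc ε hε
    -- the compact set swept out by the radial flow, and its image under `f`
    set K' : Set E := (fun q : ℝ × E => q.1 • q.2) '' (Icc Λ⁻¹ 1 ×ˢ K) with hK'
    have hK'c : IsCompact K' := (isCompact_Icc.prod hKc).image (by fun_prop)
    have hK'U : K' ⊆ U := by
      rintro _ ⟨⟨t, x⟩, ⟨ht, hx⟩, rfl⟩
      exact hstar x (hK hx) t (hΛi.trans_le ht.1) ht.2
    have hCc : IsCompact (f '' K') := hK'c.image_of_continuousOn (hf.continuousOn.mono hK'U)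
    have := FiniteDimensional.proper_real E
    set C₁ := Metric.cthickening 1 (f '' K') with hC₁
    have hC₁c : IsCompact C₁ := hCc.cthickening
    obtain ⟨R, hR⟩ := hC₁c.isBounded.subset_closedBall 0
    obtain ⟨L, hL⟩ := (hW.contDiffOn (s := Metric.closedBall 0 R)).exists_lipschitzOnWith
      (by simp) (convex_closedBall _ _) (isCompact_closedBall _ _)
    set T := Λ - 1 with hT
    have hT0 : 0 ≤ T := by linarith
    set η := min ε 1 / 2 / (T * Real.exp (L * T) + 1) with hη
    have hη0 : 0 < η := by positivity
    have hηs : η * T * Real.exp (L * T) < min ε 1 := by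
      have : η * (T * Real.exp (L * T) + 1) = min ε 1 / 2 := by rw [hη]; field_simp
      have h3 : 0 < min ε 1 := by positivity
      nlinarith
    obtain ⟨h₁, h₁0, hcons⟩ := consistency hU hf hK'U hK'c (half_pos hη0)
    rw [Filter.eventually_curry_iff]
    filter_upwards [hc C₁ (subset_univ _) hC₁c (η / 4) (by positivity)] with n hn
    have hVc : ContinuousOn (fun q : ℝ × E => V n q.1 q.2) (Icc (-1) 1 ×ˢ C₁) :=
      (hV n).continuous.continuousOn
    obtain ⟨h₂, h₂0, hVu⟩ := Metric.uniformContinuousOn_iff.1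
      ((isCompact_Icc.prod hC₁c).uniformContinuousOn_of_continuous hVc) (η / 4) (by positivity)
    filter_upwards [hpos, hpow, h0.eventually (gt_mem_nhds h₁0), h0.eventually (gt_mem_nhds h₂0),
      h0.eventually (gt_mem_nhds (one_pos))] with N a1 a2 a3 a4 a5 x hx
    constructor
    · have e1 : ContDiffAt ℝ C∞ f (Λ⁻¹ • x) :=
        hf.contDiffAt (hU.mem_nhds (hstar x (hK hx) _ hΛi hΛi1))
      have e2 : ContDiffAt ℝ C∞ (fun x => f (Λ⁻¹ • x)) x :=
        ContDiffAt.comp x (g := f) (f := fun x => Λ⁻¹ • x) e1 (by fun_prop)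
      exact ContDiffAt.comp x (g := (step (V n) (h N))^[N]) (contDiff_iterate (hstep n (h N)) N).contDiffAt e2
    set H := h N with hH
    set xs : ℕ → E := fun j => ((1 + H) ^ j * Λ⁻¹) • x with hxs
    set z : ℕ → E := fun j => (step (V n) H)^[j] (f (Λ⁻¹ • x)) with hz
    set e : ℕ → ℝ := fun j => ‖z j - f (xs j)‖ with he
    have hpj : ∀ j ≤ N, Λ⁻¹ ≤ (1 + H) ^ j * Λ⁻¹ ∧ (1 + H) ^ j * Λ⁻¹ ≤ 1 := by
      intro j hj
      constructor
      · exact le_mul_of_one_le_left hΛi.le (one_le_pow₀ (by linarith))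
      · have : (1 + H) ^ j ≤ Λ := by
          rw [← a2]; exact pow_le_pow_right₀ (by linarith) hj
        calc (1 + H) ^ j * Λ⁻¹ ≤ Λ * Λ⁻¹ := by gcongr
          _ = 1 := mul_inv_cancel₀ hΛ0.ne'
    have hxK : ∀ j ≤ N, xs j ∈ K' := fun j hj => ⟨⟨_, x⟩, ⟨hpj j hj, hx⟩, rfl⟩
    have hxsucc : ∀ j, xs (j + 1) = (1 + H) • xs j := by
      intro j; simp only [hxs, smul_smul]; congr 1; ring
    have hfin : e N ≤ η * T * Real.exp (L * T) := by
      refine error_gronwall (h := H) L.2 hη0.le a1.le ?_ ?_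
        (hηs.le.trans (min_le_right _ _)) ?_
      · simp [he, hz, hxs]
      · have := one_add_mul_le_pow (a := H) (by linarith) N
        rw [a2] at this
        linarith
      · intro j hj hej
        have hseg : ∀ y ∈ segment ℝ (xs j) ((1 + H) • xs j), y ∈ K' := by
          rw [← hxsucc]
          rintro y ⟨a, b, ha, hb, hab, rfl⟩
          obtain ⟨c1, c2⟩ := hpj j hj.le
          obtain ⟨d1, d2⟩ := hpj (j + 1) hj
          refine ⟨⟨a * ((1 + H) ^ j * Λ⁻¹) + b * ((1 + H) ^ (j + 1) * Λ⁻¹), x⟩, ⟨⟨?_, ?_⟩, hx⟩, ?_⟩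
          · show Λ⁻¹ ≤ a * ((1 + H) ^ j * Λ⁻¹) + b * ((1 + H) ^ (j + 1) * Λ⁻¹)
            calc Λ⁻¹ = a * Λ⁻¹ + b * Λ⁻¹ := by rw [← add_mul, hab, one_mul]
              _ ≤ _ := by gcongr
          · show a * ((1 + H) ^ j * Λ⁻¹) + b * ((1 + H) ^ (j + 1) * Λ⁻¹) ≤ 1
            calc a * ((1 + H) ^ j * Λ⁻¹) + b * ((1 + H) ^ (j + 1) * Λ⁻¹) ≤ a * 1 + b * 1 := by
                  gcongr
              _ = 1 := by rw [mul_one, mul_one, hab]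
          · simp only [hxs, add_smul, smul_smul]
        have b1 := hcons H a1 a3 (xs j) (hxK j hj.le) hseg
        rw [← hxsucc, ← hWf _ (hK'U (hxK j hj.le))] at b1
        have m0 : f (xs j) ∈ f '' K' := mem_image_of_mem _ (hxK j hj.le)
        have m1 : z j ∈ C₁ := Metric.mem_cthickening_of_dist_le _ _ _ _ m0
          (by rw [dist_eq_norm]; exact hej)
        have m2 : f (xs j) ∈ C₁ := Metric.self_subset_cthickening _ m0
        have b2 : ‖W (z j) - W (f (xs j))‖ ≤ L * e j := by
          have := hL.dist_le_mul _ (hR m1) _ (hR m2)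
          rwa [dist_eq_norm, dist_eq_norm] at this
        have b3 : ‖V n H (z j) - W (z j)‖ ≤ η / 2 := by
          have c1 := (hn _ m1).2
          have c2 := hVu (H, z j) ⟨⟨by linarith, a5.le⟩, m1⟩ (0, z j)
            ⟨⟨by norm_num, by norm_num⟩, m1⟩ (by
              rw [Prod.dist_eq]; simp [abs_of_pos a1, a4, h₂0])
          rw [← dist_eq_norm]
          have := dist_triangle (V n H (z j)) (V n 0 (z j)) (W (z j))
          simp only at c1 c2
          linarith
        have hzs : z (j + 1) = z j + H • V n H (z j) := by
          simp only [hz, Function.iterate_succ_apply', step]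
        have hdec : z (j + 1) - f (xs (j + 1)) = (z j - f (xs j)) + H • (V n H (z j) - W (z j))
            + H • (W (z j) - W (f (xs j)))
            - (f (xs (j + 1)) - f (xs j) - H • W (f (xs j))) := by
          rw [hzs]; simp only [smul_sub]; abel
        calc e (j + 1) = ‖z (j + 1) - f (xs (j + 1))‖ := rfl
          _ ≤ ‖z j - f (xs j)‖ + ‖H • (V n H (z j) - W (z j))‖
            + ‖H • (W (z j) - W (f (xs j)))‖
            + ‖f (xs (j + 1)) - f (xs j) - H • W (f (xs j))‖ := by
              rw [hdec]
              exact (norm_sub_le _ _).trans (by gcongr; exact norm_add₃_le)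
          _ ≤ e j + H * (η / 2) + H * (L * e j) + η / 2 * H := by
              rw [norm_smul, norm_smul, Real.norm_of_nonneg a1.le]
              gcongr
          _ = _ := by ring
    have hxN : xs N = x := by
      simp only [hxs, a2, mul_inv_cancel₀ hΛ0.ne', one_smul]
    rw [dist_eq_norm]
    have : ‖z N - f (xs N)‖ < ε := (hfin.trans_lt hηs).trans_le (min_le_left _ _)
    rwa [hxN] at this
  | succ r ih =>
    have hVn : ∀ n h, ContDiff ℝ C∞ (V n h) := fun n h =>
      (hV n).comp (contDiff_const.prodMk contDiff_id)
    have hstep : ∀ n h, ContDiff ℝ C∞ (step (V n) h) :=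
      fun n h => contDiff_id.add ((hVn n h).const_smul h)
    have hfat : ∀ x ∈ U, ContDiffAt ℝ C∞ f x := fun x hx => hf.contDiffAt (hU.mem_nhds hx)
    have hc' : CrConv atTop r (fun n => tmap (V n 0)) (tmap W) univ :=
      CrConv.mono (E := E × E) (F := E × E) (r := r) (U := univ ×ˢ univ) hc (by simp)
    have key := ih (E := E × E) (U := U ×ˢ univ) (hU.prod isOpen_univ)
      (fun p hp t ht ht1 => ⟨hstar p.1 hp.1 t ht ht1, mem_univ _⟩)
      (f := tmap f) (W := tmap W) (tmap_contDiffOn hU hf) (tmap_contDiff hW) ?_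
      (V := fun n h => tmap (V n h)) ?_ hc'
    · refine CrConv.congr (E := E × E) (F := E × E) (r := r) (U := U ×ˢ univ)
        (hU.prod isOpen_univ) key (fun p _ => rfl) ?_
      intro K hK _
      refine Eventually.of_forall fun q p hp => ?_
      have hev : ∀ᶠ p' : E × E in 𝓝 p, p'.1 ∈ U :=
        continuousAt_fst.eventually (hU.mem_nhds (hK hp).1)
      filter_upwards [hev] with p' hp'
      have hd : DifferentiableAt ℝ f (Λ⁻¹ • p'.1) :=
        (hfat _ (hstar _ hp' _ hΛi hΛi1)).differentiableAt (by simp)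
      have e1 := tmap_rescale (c := Λ⁻¹) (d := 1) (p := p') hd
      simp only [one_smul] at e1
      have hd2 : DifferentiableAt ℝ (fun x => f (Λ⁻¹ • x)) p'.1 :=
        DifferentiableAt.comp p'.1 (g := f) (f := fun x => Λ⁻¹ • x) hd (by fun_prop)
      have e2 := tmap_comp (p := p') hd2
        ((contDiff_iterate (hstep q.1 (h q.2)) q.2).differentiable (by simp) (f (Λ⁻¹ • p'.1)))
      rw [tmap_iterate (hstep _ _), tmap_step (hVn _ _), e1] at e2
      exact e2
    · rintro ⟨x, v⟩ ⟨hx, -⟩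
      have hx' := hfat x hx
      rw [fderiv_tmap (p := (x, v)) hx']
      have hsymm : IsSymmSndFDerivAt ℝ f x := hx'.isSymmSndFDerivAt
        (by rw [minSmoothness_of_isRCLikeNormedField]
            exact WithTop.coe_le_coe.2 (le_top : (2 : ℕ∞) ≤ ⊤))
      have h1 : HasFDerivAt (fun y => fderiv ℝ f y y) _ x :=
        ((hx'.fderiv_right (m := C∞) (by simp)).differentiableAt (by simp)).hasFDerivAt.clm_apply
          (hasFDerivAt_id x)
      have h2 : (fun y => W (f y)) =ᶠ[𝓝 x] fun y => fderiv ℝ f y y := by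
        filter_upwards [hU.mem_nhds hx] with y hy using hWf y hy
      have h3 := congrArg (fun A : E →L[ℝ] E => A v) (h2.fderiv_eq.trans h1.fderiv)
      have h4 : fderiv ℝ (fun y => W (f y)) x v = fderiv ℝ W (f x) (fderiv ℝ f x v) := by
        have := fderiv_comp x (hW.differentiable (by simp) (f x)) (hx'.differentiableAt (by simp))
        exact congrArg (fun A : E →L[ℝ] E => A v) this
      simp only [h4] at h3
      simp only [tmap, hWf x hx, h3, Prod.mk.injEq, true_and]
      simp [hsymm.eq x v, add_comm]
    · intro n
      have h1 : ContDiff ℝ C∞ (fun q : ℝ × (E × E) => V n q.1 q.2.1) :=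
        (hV n).comp (contDiff_fst.prodMk contDiff_snd.fst)
      have h2 : ContDiff ℝ C∞ (fun q : ℝ × (E × E) => fderiv ℝ (V n q.1) q.2.1 q.2.2) := by
        refine ContDiff.fderiv_apply (f := fun q : ℝ × (E × E) => V n q.1) (m := C∞) (n := C∞)
          ?_ contDiff_snd.fst contDiff_snd.snd (by simp)
        exact (hV n).comp (contDiff_fst.fst.prodMk contDiff_snd)
      exact h1.prodMk h2

end Scheme

/-! ### Compositions of polynomial Hénon maps and their Hamiltonians -/

section Henon

/-- `HComp n f`: the map `f` is a composition of `n` polynomial Hénon maps. -/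
inductive HComp : ℕ → (P2 → P2) → Prop
  | nil : HComp 0 id
  | cons {n : ℕ} {f : P2 → P2} (p : Polynomial ℝ) :
      HComp n f → HComp (n + 1) (henon (fun t => p.eval t) ∘ f)

lemma HComp.exists_seqComp {n : ℕ} {f : P2 → P2} (h : HComp n f) :
    ∃ p : Fin n → Polynomial ℝ, f = seqComp fun i => henon fun t => (p i).eval t := by
  induction h with
  | nil => exact ⟨Fin.elim0, rfl⟩
  | cons q _ ih =>
    obtain ⟨p, rfl⟩ := ih
    exact ⟨Fin.snoc (α := fun _ => Polynomial ℝ) p q, by simp [seqComp]⟩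

lemma HComp.comp {m n : ℕ} {f g : P2 → P2} (hg : HComp m g) (hf : HComp n f) :
    HComp (n + m) (g ∘ f) := by
  induction hg with
  | nil => exact hf
  | cons p _ ih => exact HComp.cons p ih

/-- The monoid of compositions of an even number of polynomial Hénon maps. -/
def EvenH (f : P2 → P2) : Prop := ∃ k : ℕ, HComp (2 * k) f

lemma EvenH.comp {f g : P2 → P2} (hg : EvenH g) (hf : EvenH f) : EvenH (g ∘ f) := by
  obtain ⟨k, hk⟩ := hg
  obtain ⟨l, hl⟩ := hf
  exact ⟨l + k, by simpa [mul_add] using hk.comp hl⟩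

lemma EvenH.id : EvenH id := ⟨0, HComp.nil⟩

/-- `S_ψ = H_ψ ∘ H_0 ∘ H_0 ∘ H_0`. -/
lemma evenH_vshear (p : Polynomial ℝ) : EvenH fun q : P2 => (q.1, q.2 + p.eval q.1) := by
  refine ⟨2, ?_⟩
  convert HComp.cons p (HComp.cons 0 (HComp.cons 0 (HComp.cons 0 HComp.nil))) using 1
  funext q
  simp [henon]

lemma evenH_hshear (p : Polynomial ℝ) : EvenH fun q : P2 => (q.1 + p.eval q.2, q.2) := by
  refine ⟨2, ?_⟩
  convert HComp.cons 0 (HComp.cons (p.comp (-Polynomial.X))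
    (HComp.cons 0 (HComp.cons 0 HComp.nil))) using 1
  funext q
  simp [henon]

lemma evenH_translation (a : P2) : EvenH fun q : P2 => q + a := by
  have := (evenH_vshear (Polynomial.C a.2)).comp (evenH_hshear (Polynomial.C a.1))
  convert this using 1
  funext q
  simp [Prod.ext_iff]

lemma evenH_matrix {a b c d : ℝ} (h : a * d - b * c = 1) :
    EvenH fun q : P2 => (a * q.1 + b * q.2, c * q.1 + d * q.2) := by
  have key : ∀ {a b c d : ℝ}, a * d - b * c = 1 → c ≠ 0 →
      EvenH fun q : P2 => (a * q.1 + b * q.2, c * q.1 + d * q.2) := by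
    intro a b c d h hc
    have := (evenH_hshear (Polynomial.C ((a - 1) / c) * Polynomial.X)).comp
      ((evenH_vshear (Polynomial.C c * Polynomial.X)).comp
        (evenH_hshear (Polynomial.C ((d - 1) / c) * Polynomial.X)))
    convert this using 1
    have hb : b = (a * d - 1) / c := by field_simp; linarith
    funext q
    simp only [Function.comp, Polynomial.eval_mul, Polynomial.eval_C, Polynomial.eval_X,
      Prod.mk.injEq, hb]
    constructor <;> field_simp <;> ring
  by_cases hc : c = 0
  · subst hc
    have hd : d ≠ 0 := by rintro rfl; simp at h
    have h1 := key (a := a - b) (b := b) (c := -d) (d := d) (by linarith) (neg_ne_zero.2 hd)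
    have := h1.comp (evenH_vshear Polynomial.X)
    convert this using 1
    funext q
    simp only [Function.comp, Polynomial.eval_X, Prod.mk.injEq]
    constructor <;> ring
  · exact key h hc

lemma clm_apply_plane (A : P2 →L[ℝ] P2) (q : P2) :
    A q = ((A (1, 0)).1 * q.1 + (A (0, 1)).1 * q.2, (A (1, 0)).2 * q.1 + (A (0, 1)).2 * q.2) := by
  have : q = q.1 • ((1 : ℝ), (0 : ℝ)) + q.2 • ((0 : ℝ), (1 : ℝ)) := by ext <;> simp
  conv_lhs => rw [this, map_add, map_smul, map_smul]
  ext <;> simp [mul_comm]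

lemma clm_det_plane (A : P2 →L[ℝ] P2) :
    A.det = (A (1, 0)).1 * (A (0, 1)).2 - (A (0, 1)).1 * (A (1, 0)).2 := by
  rw [ContinuousLinearMap.det, ← LinearMap.det_toMatrix (Module.Basis.finTwoProd ℝ),
    Matrix.det_fin_two]
  simp [LinearMap.toMatrix_apply]

lemma evenH_linear {A : P2 →L[ℝ] P2} (h : A.det = 1) : EvenH A := by
  rw [clm_det_plane] at h
  convert evenH_matrix h using 1
  funext q
  exact clm_apply_plane A q

lemma EvenH.conj {f : P2 → P2} (h : EvenH f) {c : ℝ} (hc : c ≠ 0) :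
    EvenH fun q => c⁻¹ • f (c • q) := by
  obtain ⟨k, hk⟩ := h
  refine ⟨k, ?_⟩
  generalize 2 * k = n at hk
  induction hk with
  | nil => convert HComp.nil using 1; funext q; simp [smul_smul, hc]
  | cons p _ ih =>
    convert HComp.cons (Polynomial.C c⁻¹ * p.comp (Polynomial.C c * Polynomial.X)) ih using 1
    funext q
    simp [henon, hc, mul_add]

/-- The scalings `x ↦ c x` are not area-preserving, but after `N` steps they cancel. -/
lemma EvenH.scaled_iterate {f : P2 → P2} (h : EvenH f) {c : ℝ} (hc : c ≠ 0) (N : ℕ) :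
    EvenH fun q => (fun y => c • f y)^[N] ((c ^ N)⁻¹ • q) := by
  induction N with
  | zero => convert EvenH.id using 1; funext q; simp
  | succ N ih =>
    have := (h.comp ih).conj (inv_ne_zero hc)
    convert this using 1
    funext q
    rw [Function.iterate_succ_apply']
    simp [smul_smul, pow_succ, mul_inv_rev, mul_comm]

lemma contDiff_henon (p : Polynomial ℝ) : ContDiff ℝ C∞ (henon fun t => p.eval t) := by
  have : ContDiff ℝ C∞ (fun t : ℝ => p.eval t) := p.contDiff_aeval _
  exact contDiff_snd.prodMk (contDiff_fst.neg.add (this.comp contDiff_snd))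

end Henon

section Ham

/-- Partial derivative in the first variable. -/
noncomputable def d1 (f : P2 → ℝ) (p : P2) : ℝ := fderiv ℝ f p (1, 0)

/-- Partial derivative in the second variable. -/
noncomputable def d2 (f : P2 → ℝ) (p : P2) : ℝ := fderiv ℝ f p (0, 1)

/-- The Hamiltonian vector field `X_K = (-∂K/∂y, ∂K/∂x)`. -/
noncomputable def ham (K : P2 → ℝ) (p : P2) : P2 := (-d2 K p, d1 K p)

/-- Smooth Hamiltonians whose vector field is tangent at `h = 0` to a smooth family
`h ↦ (y ↦ y + h V(h, y))` of even compositions of polynomial Hénon maps. -/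
def Good (K : P2 → ℝ) : Prop :=
  ContDiff ℝ C∞ K ∧ ∃ V : ℝ → P2 → P2, ContDiff ℝ C∞ (fun q : ℝ × P2 => V q.1 q.2) ∧
    (∀ h, EvenH (step V h)) ∧ V 0 = ham K

lemma good_zero : Good 0 := by
  refine ⟨contDiff_const, fun _ _ => 0, contDiff_const, fun h => ?_, ?_⟩
  · convert EvenH.id using 1; funext q; simp [step]
  · funext q; simp [ham, d1, d2, Prod.ext_iff]

lemma Good.add {K L : P2 → ℝ} (hK : Good K) (hL : Good L) : Good (K + L) := by
  obtain ⟨cK, V, cV, hV, hV0⟩ := hK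
  obtain ⟨cL, W, cW, hW, hW0⟩ := hL
  refine ⟨cK.add cL, fun h y => V h y + W h (y + h • V h y), ?_, fun h => ?_, ?_⟩
  · exact cV.add (cW.comp (contDiff_fst.prodMk (contDiff_snd.add (contDiff_fst.smul cV))))
  · convert (hW h).comp (hV h) using 1
    funext q
    simp [step, add_assoc]
  · funext q
    have h1 : fderiv ℝ (K + L) q = _ := fderiv_add (cK.differentiable (by simp) q)
      (cL.differentiable (by simp) q)
    simp [hV0, hW0, ham, d1, d2, h1, add_comm]

lemma Good.smul {K : P2 → ℝ} (hK : Good K) (c : ℝ) : Good (c • K) := by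
  obtain ⟨cK, V, cV, hV, hV0⟩ := hK
  refine ⟨cK.const_smul c, fun h y => c • V (c * h) y, ?_, fun h => ?_, ?_⟩
  · have h1 : ContDiff ℝ C∞ fun q : ℝ × P2 => (c * q.1, q.2) := by fun_prop
    exact (cV.comp h1).const_smul c
  · convert hV (c * h) using 1
    funext q
    simp [step, smul_smul, mul_comm]
  · funext q
    have h1 : fderiv ℝ (c • K) q = _ := fderiv_const_smul (cK.differentiable (by simp) q) c
    simp [hV0, ham, d1, d2, h1]

/-- Ridge Hamiltonians `P(x + c y)` generate shears along the lines `x + c y = const`. -/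
lemma good_ridge (c : ℝ) (P : Polynomial ℝ) : Good fun q => P.eval (q.1 + c * q.2) := by
  have hP : ∀ Q : Polynomial ℝ, ContDiff ℝ C∞ fun q : P2 => Q.eval (q.1 + c * q.2) := by
    intro Q
    have : ContDiff ℝ C∞ (fun t : ℝ => Q.eval t) := Q.contDiff_aeval _
    exact this.comp (contDiff_fst.add (contDiff_const.mul contDiff_snd))
  let ψ : P2 → ℝ := fun q => P.derivative.eval (q.1 + c * q.2)
  refine ⟨hP P, fun _ q => (-c * ψ q, ψ q), ?_, fun h => ?_, ?_⟩
  · exact (contDiff_const.mul ((hP P.derivative).comp contDiff_snd)).prodMk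
      ((hP P.derivative).comp contDiff_snd)
  · convert (evenH_hshear (Polynomial.C (-c) * Polynomial.X)).comp
      ((evenH_vshear (Polynomial.C h * P.derivative)).comp
        (evenH_hshear (Polynomial.C c * Polynomial.X))) using 1
    funext q
    simp only [step, Function.comp, Polynomial.eval_mul, Polynomial.eval_C, Polynomial.eval_X,
      Prod.ext_iff, ψ, Prod.fst_add, Prod.snd_add, Prod.smul_mk, smul_eq_mul, and_true]
    ring
  · funext q
    have h0 : HasFDerivAt (fun q : P2 => q.2) (ContinuousLinearMap.snd ℝ ℝ ℝ) q := hasFDerivAt_snd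
    have h1 : HasFDerivAt (fun q : P2 => q.1 + c * q.2) _ q :=
      hasFDerivAt_fst.add (h0.const_mul c)
    have h2 : HasFDerivAt (fun q : P2 => P.eval (q.1 + c * q.2)) _ q :=
      HasDerivAt.comp_hasFDerivAt (h₂ := fun t => P.eval t) q (P.hasDerivAt (q.1 + c * q.2)) h1
    simp [ham, d1, d2, h2.fderiv, ψ, mul_comm]

end Ham

/-! ### Polynomial Hamiltonians and polynomial approximation -/

section Poly

/-- A polynomial curve in a vector space that vanishes identically has zero coefficients. -/
lemma eq_zero_of_forall_sum_pow {W : Type*} [AddCommGroup W] [Module ℝ W] {n : ℕ} {w : ℕ → W}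
    (h : ∀ c : ℝ, ∑ j ∈ Finset.range n, c ^ j • w j = 0) {j : ℕ} (hj : j < n) : w j = 0 := by
  rw [← Module.forall_dual_apply_eq_zero_iff ℝ]
  intro φ
  have hp : (∑ i ∈ Finset.range n, Polynomial.monomial i (φ (w i)) : Polynomial ℝ) = 0 := by
    refine Polynomial.funext fun c => ?_
    have := congrArg φ (h c)
    simp only [map_sum, map_smul, map_zero, smul_eq_mul] at this
    rw [Polynomial.eval_finsetSum, Polynomial.eval_zero, ← this]
    refine Finset.sum_congr rfl fun i _ => ?_
    rw [Polynomial.eval_monomial, mul_comm]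
  have := congrArg (fun p => Polynomial.coeff p j) hp
  simpa [Polynomial.finsetSum_coeff, Polynomial.coeff_monomial, hj] using this

/-- The vector space of good Hamiltonians. -/
def goodSub : Submodule ℝ (P2 → ℝ) where
  carrier := {K | Good K}
  add_mem' := Good.add
  zero_mem' := good_zero
  smul_mem' c _ h := h.smul c

/-- Monomials are good: the powers `(x + c y) ^ n`, for varying `c`, span the homogeneous
polynomials of degree `n`. -/
lemma good_monomial (m n : ℕ) : Good fun q : P2 => q.1 ^ m * q.2 ^ n := by
  let w : ℕ → P2 → ℝ := fun j q => ((m + n).choose j : ℝ) * (q.1 ^ (m + n - j) * q.2 ^ j)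
  have h : ∀ c : ℝ, ∑ j ∈ Finset.range (m + n + 1), c ^ j • goodSub.mkQ (w j) = 0 := by
    intro c
    simp_rw [← map_smul, ← map_sum]
    rw [Submodule.mkQ_apply, Submodule.Quotient.mk_eq_zero]
    show Good _
    convert good_ridge c (Polynomial.X ^ (m + n)) using 1
    funext q
    simp only [Finset.sum_apply, Pi.smul_apply, smul_eq_mul, Polynomial.eval_pow,
      Polynomial.eval_X, w]
    rw [add_comm q.1, add_pow]
    refine Finset.sum_congr rfl fun j _ => ?_
    rw [mul_pow]; ring
  have h1 := eq_zero_of_forall_sum_pow h (j := n) (by omega)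
  rw [Submodule.mkQ_apply, Submodule.Quotient.mk_eq_zero] at h1
  have h2 : Good (((m + n).choose n : ℝ)⁻¹ • w n) := Good.smul h1 _
  convert h2 using 1
  have : ((m + n).choose n : ℝ) ≠ 0 := by
    exact_mod_cast (Nat.choose_pos (by omega)).ne'
  funext q
  simp [w, this]

/-- The algebra of polynomial functions on the plane. -/
def polyAlg : Subalgebra ℝ (P2 → ℝ) := Algebra.adjoin ℝ {Prod.fst, Prod.snd}

lemma polyAlg_induction {p : (P2 → ℝ) → Prop} {f : P2 → ℝ} (hf : f ∈ polyAlg)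
    (mono : ∀ m n : ℕ, p fun q => q.1 ^ m * q.2 ^ n) (zero : p 0)
    (add : ∀ f g, p f → p g → p (f + g)) (smul : ∀ (c : ℝ) f, p f → p (c • f)) : p f := by
  have h : f ∈ Submodule.span ℝ (↑(Submonoid.closure ({Prod.fst, Prod.snd} : Set (P2 → ℝ))) : Set (P2 → ℝ)) := by
    rw [← Algebra.adjoin_eq_span]; exact hf
  clear hf
  induction h using Submodule.span_induction with
  | mem g hg =>
    obtain ⟨m, n, rfl⟩ := (Submonoid.mem_closure_pair _ _ _).1 hg
    exact mono m n
  | zero => exact zero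
  | add f g _ _ h1 h2 => exact add f g h1 h2
  | smul c f _ h1 => exact smul c f h1

lemma good_of_mem_polyAlg {f : P2 → ℝ} (hf : f ∈ polyAlg) : Good f :=
  polyAlg_induction hf good_monomial good_zero (fun _ _ => Good.add) (fun c _ h => h.smul c)

lemma contDiff_d1 {f : P2 → ℝ} (hf : ContDiff ℝ C∞ f) : ContDiff ℝ C∞ (d1 f) :=
  (hf.fderiv_right (m := C∞) (by simp)).clm_apply contDiff_const

lemma contDiff_d2 {f : P2 → ℝ} (hf : ContDiff ℝ C∞ f) : ContDiff ℝ C∞ (d2 f) :=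
  (hf.fderiv_right (m := C∞) (by simp)).clm_apply contDiff_const

lemma contDiff_d1_iter {f : P2 → ℝ} (hf : ContDiff ℝ C∞ f) (n : ℕ) :
    ContDiff ℝ C∞ (d1^[n] f) := by
  induction n with
  | zero => exact hf
  | succ n ih => rw [Function.iterate_succ_apply']; exact contDiff_d1 ih

lemma contDiff_d2_iter {f : P2 → ℝ} (hf : ContDiff ℝ C∞ f) (n : ℕ) :
    ContDiff ℝ C∞ (d2^[n] f) := by
  induction n with
  | zero => exact hf
  | succ n ih => rw [Function.iterate_succ_apply']; exact contDiff_d2 ih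

lemma d1_d2_comm {f : P2 → ℝ} (hf : ContDiff ℝ C∞ f) : d1 (d2 f) = d2 (d1 f) := by
  funext p
  have h0 : HasFDerivAt (fderiv ℝ f) (fderiv ℝ (fderiv ℝ f) p) p :=
    ((hf.fderiv_right (m := C∞) (by simp)).differentiable (by simp) p).hasFDerivAt
  have h1 : ∀ v : P2, fderiv ℝ (fun q => fderiv ℝ f q v) p =
      (fderiv ℝ (fderiv ℝ f) p).flip v := by
    intro v
    have := h0.clm_apply (hasFDerivAt_const v p)
    rw [this.fderiv]
    ext <;> simp
  have hs : IsSymmSndFDerivAt ℝ f p := hf.contDiffAt.isSymmSndFDerivAt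
    (by rw [minSmoothness_of_isRCLikeNormedField]
        exact WithTop.coe_le_coe.2 (le_top : (2 : ℕ∞) ≤ ⊤))
  show fderiv ℝ (fun q => fderiv ℝ f q (0, 1)) p (1, 0) =
    fderiv ℝ (fun q => fderiv ℝ f q (1, 0)) p (0, 1)
  rw [h1, h1]
  exact hs.eq _ _

lemma d2_iter_d1 {f : P2 → ℝ} (hf : ContDiff ℝ C∞ f) (n : ℕ) :
    d2^[n] (d1 f) = d1 (d2^[n] f) := by
  induction n with
  | zero => rfl
  | succ n ih =>
    rw [Function.iterate_succ_apply', Function.iterate_succ_apply', ih,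
      d1_d2_comm (contDiff_d2_iter hf n)]

lemma d1_sub {f g : P2 → ℝ} (hf : ContDiff ℝ C∞ f) (hg : ContDiff ℝ C∞ g) :
    d1 (f - g) = d1 f - d1 g := by
  funext p
  have : fderiv ℝ (f - g) p = _ :=
    fderiv_sub (hf.differentiable (by simp) p) (hg.differentiable (by simp) p)
  simp [d1, this]

lemma d2_sub {f g : P2 → ℝ} (hf : ContDiff ℝ C∞ f) (hg : ContDiff ℝ C∞ g) :
    d2 (f - g) = d2 f - d2 g := by
  funext p
  have : fderiv ℝ (f - g) p = _ :=
    fderiv_sub (hf.differentiable (by simp) p) (hg.differentiable (by simp) p)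
  simp [d2, this]

lemma d12_iter_sub {f g : P2 → ℝ} (hf : ContDiff ℝ C∞ f) (hg : ContDiff ℝ C∞ g) (i j : ℕ) :
    d1^[i] (d2^[j] (f - g)) = d1^[i] (d2^[j] f) - d1^[i] (d2^[j] g) := by
  have h2 : d2^[j] (f - g) = d2^[j] f - d2^[j] g := by
    induction j with
    | zero => rfl
    | succ n ih =>
      simp only [Function.iterate_succ_apply']
      rw [ih, d2_sub (contDiff_d2_iter hf n) (contDiff_d2_iter hg n)]
  rw [h2]
  induction i with
  | zero => rfl
  | succ n ih =>
    simp only [Function.iterate_succ_apply']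
    rw [ih, d1_sub (contDiff_d1_iter (contDiff_d2_iter hf j) n)
      (contDiff_d1_iter (contDiff_d2_iter hg j) n)]

lemma hasDerivAt_d1 {f : P2 → ℝ} (hf : ContDiff ℝ C∞ f) (x y : ℝ) :
    HasDerivAt (fun t => f (t, y)) (d1 f (x, y)) x :=
  HasFDerivAt.comp_hasDerivAt (l := f) x ((hf.differentiable (by simp) (x, y)).hasFDerivAt)
    ((hasDerivAt_id x).prodMk (hasDerivAt_const x y))

lemma hasDerivAt_d2 {f : P2 → ℝ} (hf : ContDiff ℝ C∞ f) (x y : ℝ) :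
    HasDerivAt (fun t => f (x, t)) (d2 f (x, y)) y :=
  HasFDerivAt.comp_hasDerivAt (l := f) y ((hf.differentiable (by simp) (x, y)).hasFDerivAt)
    ((hasDerivAt_const y x).prodMk (hasDerivAt_id y))

/-- Polynomials have polynomial primitives in the first variable, normalised to vanish on the line
`x = a`. -/
lemma exists_antideriv1 {q : P2 → ℝ} (hq : q ∈ polyAlg) (a : ℝ) :
    ∃ p ∈ polyAlg, d1 p = q ∧ ∀ y, p (a, y) = 0 := by
  refine polyAlg_induction (p := fun q => ∃ p ∈ polyAlg, d1 p = q ∧ ∀ y, p (a, y) = 0) hq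
    ?_ ⟨0, polyAlg.zero_mem, ?_, fun _ => rfl⟩ ?_ ?_
  · intro m n
    let p : P2 → ℝ := ((m : ℝ) + 1)⁻¹ • ((Prod.fst ^ (m + 1) - algebraMap ℝ (P2 → ℝ) (a ^ (m + 1)))
      * Prod.snd ^ n)
    have hp : p ∈ polyAlg := polyAlg.smul_mem (polyAlg.mul_mem (polyAlg.sub_mem
      (polyAlg.pow_mem (Algebra.subset_adjoin (by simp)) _) (polyAlg.algebraMap_mem _))
      (polyAlg.pow_mem (Algebra.subset_adjoin (by simp)) _)) _
    refine ⟨p, hp, ?_, fun y => by simp [p]⟩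
    funext ⟨x, y⟩
    have h1 := hasDerivAt_d1 (good_of_mem_polyAlg hp).1 x y
    have h2 : HasDerivAt (fun t => p (t, y))
        (((m : ℝ) + 1)⁻¹ * ((((m + 1 : ℕ) : ℝ) * x ^ m) * y ^ n)) x := by
      have := ((((hasDerivAt_pow (m + 1) x).sub_const (a ^ (m + 1))).mul_const (y ^ n)).const_mul
        ((m : ℝ) + 1)⁻¹)
      exact this.congr_deriv (by simp)
    rw [h1.unique h2]
    push_cast
    field_simp
  · funext p; simp [d1]
  · rintro f g ⟨p, hp, h1, h2⟩ ⟨p', hp', h1', h2'⟩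
    refine ⟨p + p', polyAlg.add_mem hp hp', ?_, fun y => by simp [h2, h2']⟩
    funext z
    have : fderiv ℝ (p + p') z = _ := fderiv_add
      ((good_of_mem_polyAlg hp).1.differentiable (by simp) z)
      ((good_of_mem_polyAlg hp').1.differentiable (by simp) z)
    simp [← h1, ← h1', d1, this]
  · rintro c f ⟨p, hp, h1, h2⟩
    refine ⟨c • p, polyAlg.smul_mem hp c, ?_, fun y => by simp [h2]⟩
    funext z
    have : fderiv ℝ (c • p) z = _ := fderiv_const_smul
      ((good_of_mem_polyAlg hp).1.differentiable (by simp) z) c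
    simp [← h1, d1, this]

/-- Polynomials have polynomial primitives in the second variable, normalised to vanish on the
line `y = a`. -/
lemma exists_antideriv2 {q : P2 → ℝ} (hq : q ∈ polyAlg) (a : ℝ) :
    ∃ p ∈ polyAlg, d2 p = q ∧ ∀ x, p (x, a) = 0 := by
  refine polyAlg_induction (p := fun q => ∃ p ∈ polyAlg, d2 p = q ∧ ∀ x, p (x, a) = 0) hq
    ?_ ⟨0, polyAlg.zero_mem, ?_, fun _ => rfl⟩ ?_ ?_
  · intro m n
    let p : P2 → ℝ := ((n : ℝ) + 1)⁻¹ • (Prod.fst ^ m *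
      (Prod.snd ^ (n + 1) - algebraMap ℝ (P2 → ℝ) (a ^ (n + 1))))
    have hp : p ∈ polyAlg := polyAlg.smul_mem (polyAlg.mul_mem
      (polyAlg.pow_mem (Algebra.subset_adjoin (by simp)) _) (polyAlg.sub_mem
      (polyAlg.pow_mem (Algebra.subset_adjoin (by simp)) _) (polyAlg.algebraMap_mem _))) _
    refine ⟨p, hp, ?_, fun y => by simp [p]⟩
    funext ⟨x, y⟩
    have h1 := hasDerivAt_d2 (good_of_mem_polyAlg hp).1 x y
    have h2 : HasDerivAt (fun t => p (x, t))
        (((n : ℝ) + 1)⁻¹ * (x ^ m * (((n + 1 : ℕ) : ℝ) * y ^ n))) y := by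
      have := ((((hasDerivAt_pow (n + 1) y).sub_const (a ^ (n + 1))).const_mul (x ^ m)).const_mul
        ((n : ℝ) + 1)⁻¹)
      exact this.congr_deriv (by simp)
    rw [h1.unique h2]
    push_cast
    field_simp
  · funext p; simp [d2]
  · rintro f g ⟨p, hp, h1, h2⟩ ⟨p', hp', h1', h2'⟩
    refine ⟨p + p', polyAlg.add_mem hp hp', ?_, fun y => by simp [h2, h2']⟩
    funext z
    have : fderiv ℝ (p + p') z = _ := fderiv_add
      ((good_of_mem_polyAlg hp).1.differentiable (by simp) z)
      ((good_of_mem_polyAlg hp').1.differentiable (by simp) z)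
    simp [← h1, ← h1', d2, this]
  · rintro c f ⟨p, hp, h1, h2⟩
    refine ⟨c • p, polyAlg.smul_mem hp c, ?_, fun y => by simp [h2]⟩
    funext z
    have : fderiv ℝ (c • p) z = _ := fderiv_const_smul
      ((good_of_mem_polyAlg hp).1.differentiable (by simp) z) c
    simp [← h1, d2, this]

/-- Stone–Weierstrass for polynomials in two variables. -/
lemma exists_poly_near {K : Set P2} (hK : IsCompact K) {f : P2 → ℝ} (hf : Continuous f) {ε : ℝ}
    (hε : 0 < ε) : ∃ p ∈ polyAlg, ∀ q ∈ K, |f q - p q| ≤ ε := by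
  have : CompactSpace K := isCompact_iff_compactSpace.1 hK
  let X : C(K, ℝ) := ⟨fun q => q.1.1, by fun_prop⟩
  let Y : C(K, ℝ) := ⟨fun q => q.1.2, by fun_prop⟩
  let A : Subalgebra ℝ C(K, ℝ) := Algebra.adjoin ℝ {X, Y}
  have hsep : A.SeparatesPoints := by
    intro u v huv
    by_cases h : u.1.1 = v.1.1
    · exact ⟨_, ⟨Y, Algebra.subset_adjoin (by simp), rfl⟩,
        fun h' => huv (Subtype.ext (Prod.ext h h'))⟩
    · exact ⟨_, ⟨X, Algebra.subset_adjoin (by simp), rfl⟩, h⟩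
  obtain ⟨⟨g, hg⟩, hgf⟩ := ContinuousMap.exists_mem_subalgebra_near_continuousMap_of_separatesPoints
    A hsep ⟨fun q : K => f q.1, by fun_prop⟩ ε hε
  have hA : ∃ p ∈ polyAlg, ∀ q : K, g q = p q.1 := by
    clear hgf
    induction hg using Algebra.adjoin_induction with
    | mem x hx =>
      rcases hx with rfl | rfl
      · exact ⟨Prod.fst, Algebra.subset_adjoin (by simp), fun _ => rfl⟩
      · exact ⟨Prod.snd, Algebra.subset_adjoin (by simp), fun _ => rfl⟩
    | algebraMap c => exact ⟨algebraMap ℝ _ c, polyAlg.algebraMap_mem c, fun _ => rfl⟩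
    | add x y _ _ h1 h2 =>
      obtain ⟨p, hp, h1⟩ := h1
      obtain ⟨p', hp', h2⟩ := h2
      exact ⟨p + p', polyAlg.add_mem hp hp', fun q => by simp [h1, h2]⟩
    | mul x y _ _ h1 h2 =>
      obtain ⟨p, hp, h1⟩ := h1
      obtain ⟨p', hp', h2⟩ := h2
      exact ⟨p * p', polyAlg.mul_mem hp hp', fun q => by simp [h1, h2]⟩
  obtain ⟨p, hp, hpg⟩ := hA
  refine ⟨p, hp, fun q hq => ?_⟩
  have := (ContinuousMap.norm_coe_le_norm _ (⟨q, hq⟩ : K)).trans hgf.le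
  rw [abs_sub_comm]
  simpa [hpg] using this

/-- Approximation of mixed partial derivatives of order at most `(m, n)` on a square, for functions
vanishing near the left and the lower side: approximate the derivative of highest order by
Stone–Weierstrass and integrate the approximation from these sides. -/
lemma exists_poly_near_partials {a b : ℝ} (m n : ℕ) :
    ∀ f : P2 → ℝ, ContDiff ℝ C∞ f → (∀ q : P2, q.1 < a + 1 ∨ q.2 < a + 1 → f q = 0) →
      ∀ ε > 0, ∃ p ∈ polyAlg, ∀ i ≤ m, ∀ j ≤ n, ∀ q ∈ Icc a b ×ˢ Icc a b,
        |d1^[i] (d2^[j] (f - p)) q| ≤ ε := by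
  have hvan : ∀ f : P2 → ℝ, (∀ q : P2, q.1 < a + 1 ∨ q.2 < a + 1 → f q = 0) →
      ∀ q : P2, q.1 < a + 1 ∨ q.2 < a + 1 → fderiv ℝ f q = 0 := by
    intro f hf q hq
    have hO : IsOpen {q : P2 | q.1 < a + 1 ∨ q.2 < a + 1} :=
      (isOpen_lt continuous_fst continuous_const).union
        (isOpen_lt continuous_snd continuous_const)
    have : f =ᶠ[𝓝 q] fun _ => 0 := by
      filter_upwards [hO.mem_nhds hq] with y hy using hf y hy
    rw [this.fderiv_eq]; simp
  induction m with
  | zero =>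
    induction n with
    | zero =>
      intro f hf _ ε hε
      obtain ⟨p, hp, h⟩ := exists_poly_near (isCompact_Icc.prod isCompact_Icc) hf.continuous hε
      refine ⟨p, hp, fun i hi j hj q hq => ?_⟩
      obtain rfl : i = 0 := by omega
      obtain rfl : j = 0 := by omega
      exact h q hq
    | succ n ih =>
      intro f hf hz ε hε
      have hε' : 0 < ε / (|b - a| + 1) := by positivity
      have hle : ε / (|b - a| + 1) ≤ ε := div_le_self hε.le (by linarith [abs_nonneg (b - a)])
      obtain ⟨q, hq, h⟩ := ih (d2 f) (contDiff_d2 hf)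
        (fun z hz' => by simp [d2, hvan f hz z hz']) _ hε'
      obtain ⟨p, hp, hpq, hp0⟩ := exists_antideriv2 hq a
      have hps := (good_of_mem_polyAlg hp).1
      refine ⟨p, hp, fun i hi j hj z hz' => ?_⟩
      obtain rfl : i = 0 := by omega
      have hd : d2 (f - p) = d2 f - q := by rw [d2_sub hf hps, hpq]
      rcases j with _ | j
      · obtain ⟨x, y⟩ := z
        have key := (convex_Icc a b).norm_image_sub_le_of_norm_hasDerivWithin_le
          (f := fun t => (f - p) (x, t)) (f' := fun t => d2 (f - p) (x, t)) (x := a) (y := y)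
          (C := ε / (|b - a| + 1))
          (fun t _ => (hasDerivAt_d2 (hf.sub hps) x t).hasDerivWithinAt)
          (fun t ht => by rw [hd]; exact h 0 le_rfl 0 (Nat.zero_le _) (x, t) ⟨hz'.1, ht⟩)
          ⟨le_rfl, hz'.2.1.trans hz'.2.2⟩ hz'.2
        have h0 : (f - p) (x, a) = 0 := by simp [hp0, hz (x, a)]
        simp only [h0, sub_zero] at key
        refine key.trans ?_
        have : ‖y - a‖ ≤ |b - a| + 1 := by
          rw [Real.norm_of_nonneg (by linarith [hz'.2.1])]
          linarith [hz'.2.2, le_abs_self (b - a)]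
        calc _ ≤ ε / (|b - a| + 1) * (|b - a| + 1) := by gcongr
          _ = ε := by field_simp
      · rw [Function.iterate_succ_apply, hd]
        exact (h 0 le_rfl j (by omega) z hz').trans hle
  | succ m ih =>
    intro f hf hz ε hε
    have hε' : 0 < ε / (|b - a| + 1) := by positivity
    have hle : ε / (|b - a| + 1) ≤ ε := div_le_self hε.le (by linarith [abs_nonneg (b - a)])
    obtain ⟨q, hq, h⟩ := ih (d1 f) (contDiff_d1 hf)
      (fun z hz' => by simp [d1, hvan f hz z hz']) _ hε'
    obtain ⟨p, hp, hpq, hp0⟩ := exists_antideriv1 hq a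
    have hps := (good_of_mem_polyAlg hp).1
    refine ⟨p, hp, fun i hi j hj z hz' => ?_⟩
    have hfp : ContDiff ℝ C∞ (f - p) := hf.sub hps
    have hd : d1 (d2^[j] (f - p)) = d2^[j] (d1 f - q) := by
      rw [← d2_iter_d1 hfp, d1_sub hf hps, hpq]
    have hs := contDiff_d2_iter hfp j
    rcases i with _ | i
    · obtain ⟨x, y⟩ := z
      have key := (convex_Icc a b).norm_image_sub_le_of_norm_hasDerivWithin_le
        (f := fun t => d2^[j] (f - p) (t, y)) (f' := fun t => d1 (d2^[j] (f - p)) (t, y))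
        (x := a) (y := x) (C := ε / (|b - a| + 1))
        (fun t _ => (hasDerivAt_d1 hs t y).hasDerivWithinAt)
        (fun t ht => by rw [hd]; exact h 0 (Nat.zero_le _) j hj (t, y) ⟨ht, hz'.2⟩)
        ⟨le_rfl, hz'.1.1.trans hz'.1.2⟩ hz'.1
      have h0 : ∀ y, d2^[j] (f - p) (a, y) = 0 := by
        clear key h hd hs hj
        induction j with
        | zero => intro y; simp [hp0, hz (a, y)]
        | succ j ihj =>
          intro y
          have e1 := hasDerivAt_d2 (contDiff_d2_iter hfp j) a y
          simp only [ihj] at e1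
          rw [Function.iterate_succ_apply']
          exact e1.unique (hasDerivAt_const y 0)
      simp only [h0, sub_zero] at key
      refine key.trans ?_
      have : ‖x - a‖ ≤ |b - a| + 1 := by
        rw [Real.norm_of_nonneg (by linarith [hz'.1.1])]
        linarith [hz'.1.2, le_abs_self (b - a)]
      calc _ ≤ ε / (|b - a| + 1) * (|b - a| + 1) := by gcongr
        _ = ε := by field_simp
    · rw [Function.iterate_succ_apply, hd]
      exact (h i (by omega) j hj z hz').trans hle

/-- Convergence of order `r` follows from locally uniform convergence of the partial derivatives up
to order `r`: the derivative of a function is assembled from its two partial derivatives. -/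
lemma crConv_of_partials {ι : Type} {l : Filter ι} {r : ℕ} {f : ι → P2 → ℝ} {f₀ : P2 → ℝ}
    (hf : ∀ i, ContDiff ℝ C∞ (f i)) (hf₀ : ContDiff ℝ C∞ f₀)
    (h : ∀ m n, m + n ≤ r → ∀ K : Set P2, IsCompact K → ∀ ε > 0, ∀ᶠ i in l, ∀ x ∈ K,
      |d1^[m] (d2^[n] (f i)) x - d1^[m] (d2^[n] f₀) x| < ε) :
    CrConv l r f f₀ univ := by
  induction r generalizing f f₀ with
  | zero =>
    intro K _ hK ε hε
    filter_upwards [h 0 0 le_rfl K hK ε hε] with i hi x hx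
    exact ⟨(hf i).contDiffAt, hi x hx⟩
  | succ r ih =>
    have c0 := ih hf hf₀ fun m n hmn => h m n (by omega)
    have c1 := ih (fun i => contDiff_d1 (hf i)) (contDiff_d1 hf₀) fun m n hmn => by
      have := h (m + 1) n (by omega)
      simp only [Function.iterate_succ_apply, ← d2_iter_d1 (hf _), ← d2_iter_d1 hf₀] at this
      exact this
    have c2 := ih (fun i => contDiff_d2 (hf i)) (contDiff_d2 hf₀) fun m n hmn =>
      h m (n + 1) (by omega)
    have hpull : ∀ {g : ι → P2 → ℝ} {g₀ : P2 → ℝ}, ContDiff ℝ C∞ g₀ → CrConv l r g g₀ univ →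
        CrConv l r (fun i (q : P2 × P2) => g i q.1) (fun q => g₀ q.1) univ := fun hg₀ hc =>
      CrConv.comp isOpen_univ isOpen_univ hc
        (CrConv.const isOpen_univ (contDiff_fst.contDiffOn (s := univ))) hg₀.contDiffOn
        contDiff_fst.contDiffOn (mapsTo_univ _ _)
    have s0 : ContDiffOn ℝ C∞ (fun q : P2 × P2 => f₀ q.1) univ :=
      (hf₀.comp contDiff_fst).contDiffOn
    have s1 : ContDiffOn ℝ C∞ (fun q : P2 × P2 => d1 f₀ q.1) univ :=
      ((contDiff_d1 hf₀).comp contDiff_fst).contDiffOn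
    have s2 : ContDiffOn ℝ C∞ (fun q : P2 × P2 => d2 f₀ q.1) univ :=
      ((contDiff_d2 hf₀).comp contDiff_fst).contDiffOn
    have s3 : ContDiffOn ℝ C∞ (fun q : P2 × P2 => q.2) univ := contDiff_snd.contDiffOn
    have c3 := CrConv.prodMk isOpen_univ (hpull hf₀ c0) (CrConv.prodMk isOpen_univ
      (hpull (contDiff_d1 hf₀) c1) (CrConv.prodMk isOpen_univ (hpull (contDiff_d2 hf₀) c2)
        (CrConv.const (l := l) (r := r) isOpen_univ s3) s2 s3) s1 (s2.prodMk s3)) s0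
          (s1.prodMk (s2.prodMk s3))
    let Φ : ℝ × ℝ × ℝ × P2 → ℝ × ℝ := fun z =>
      (z.1, z.2.1 * z.2.2.2.1 + z.2.2.1 * z.2.2.2.2)
    have hΦ : ContDiff ℝ C∞ Φ := by fun_prop
    have c4 := CrConv.comp_const isOpen_univ isOpen_univ hΦ.contDiffOn c3
      (s0.prodMk (s1.prodMk (s2.prodMk s3))) (mapsTo_univ _ _)
    have e : ∀ (g : P2 → ℝ) (q : P2 × P2), tmap g q = Φ (g q.1, d1 g q.1, d2 g q.1, q.2) := by
      intro g q
      have : q.2 = q.2.1 • ((1 : ℝ), (0 : ℝ)) + q.2.2 • ((0 : ℝ), (1 : ℝ)) := by ext <;> simp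
      simp only [tmap, Φ, d1, d2]
      conv_lhs => rw [this, map_add, map_smul, map_smul]
      simp [mul_comm]
    refine CrConv.congr (E := P2 × P2) (F := ℝ × ℝ) (r := r) (U := univ ×ˢ univ)
      (isOpen_univ.prod isOpen_univ) (c4.mono (subset_univ _)) (fun q _ => e _ q) ?_
    exact fun K _ _ => Eventually.of_forall fun i x _ => Eventually.of_forall fun y => e _ y

/-- Hamiltonian vector fields with compactly supported smooth Hamiltonian are limits of
polynomial ones. -/
theorem exists_poly_ham {f : P2 → ℝ} (hf : ContDiff ℝ C∞ f) (hc : HasCompactSupport f) (r : ℕ) :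
    ∃ p : ℕ → P2 → ℝ, (∀ n, p n ∈ polyAlg) ∧
      CrConv atTop r (fun n => ham (p n)) (ham f) univ := by
  obtain ⟨R, hR⟩ := hc.isCompact.isBounded.exists_norm_le
  have hz : ∀ n : ℕ, ∀ q : P2, q.1 < -(|R| + n + 1) + 1 ∨ q.2 < -(|R| + n + 1) + 1 → f q = 0 := by
    intro n q hq
    by_contra h0
    have h1 := hR q (subset_tsupport _ h0)
    have h2 := (norm_fst_le q).trans h1
    have h3 := (norm_snd_le q).trans h1
    rw [Real.norm_eq_abs] at h2 h3
    have := le_abs_self R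
    have hn : (0 : ℝ) ≤ n := Nat.cast_nonneg n
    rcases hq with hq | hq
    · linarith [neg_abs_le q.1]
    · linarith [neg_abs_le q.2]
  have key := fun n : ℕ => exists_poly_near_partials (a := -(|R| + n + 1)) (b := n) (r + 1) (r + 1)
    f hf (hz n) (1 / ((n : ℝ) + 1)) (by positivity)
  choose p hp h using key
  have hps := fun n => (good_of_mem_polyAlg (hp n)).1
  have hall : ∀ m n, m + n ≤ r + 1 → ∀ K : Set P2, IsCompact K → ∀ ε > 0, ∀ᶠ i in atTop, ∀ x ∈ K,
      |d1^[m] (d2^[n] (p i)) x - d1^[m] (d2^[n] f) x| < ε := by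
    intro m n hmn K hK ε hε
    obtain ⟨S, hS⟩ := hK.isBounded.exists_norm_le
    obtain ⟨N, hN⟩ := exists_nat_gt S
    filter_upwards [eventually_ge_atTop N,
      tendsto_one_div_add_atTop_nhds_zero_nat.eventually (gt_mem_nhds hε)] with i hi hi2 x hx
    have h1 := h i m (by omega) n (by omega) x ?_
    · rw [d12_iter_sub hf (hps i), Pi.sub_apply, abs_sub_comm] at h1
      exact h1.trans_lt hi2
    · have h1 := hS x hx
      have h2 := abs_le.1 ((norm_fst_le x).trans h1)
      have h3 := abs_le.1 ((norm_snd_le x).trans h1)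
      have h4 : (N : ℝ) ≤ i := by exact_mod_cast hi
      have h5 := abs_nonneg R
      exact ⟨⟨by linarith, by linarith⟩, ⟨by linarith, by linarith⟩⟩
  refine ⟨p, hp, ?_⟩
  have c1 := crConv_of_partials (r := r) (fun i => contDiff_d1 (hps i)) (contDiff_d1 hf)
    fun m n hmn => by
      have := hall (m + 1) n (by omega)
      simp only [Function.iterate_succ_apply, ← d2_iter_d1 (hps _), ← d2_iter_d1 hf] at this
      exact this
  have c2 := crConv_of_partials (r := r) (fun i => contDiff_d2 (hps i)) (contDiff_d2 hf)
    fun m n hmn => hall m (n + 1) (by omega)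
  have s1 := (contDiff_d1 hf).contDiffOn (s := univ)
  have s2 := (contDiff_d2 hf).contDiffOn (s := univ)
  have hσ : ContDiff ℝ C∞ (fun z : ℝ × ℝ => (-z.2, z.1)) := by fun_prop
  exact CrConv.comp_const isOpen_univ isOpen_univ hσ.contDiffOn
    (CrConv.prodMk isOpen_univ c1 c2 s1 s2) (s1.prodMk s2) (mapsTo_univ _ _)

end Poly

/-! ### The Hamiltonian generating the radial isotopy -/

section Hamiltonian

lemma area_form_preserved {A : P2 →L[ℝ] P2} (h : A.det = 1) (a b : P2) :
    (A a).1 * (A b).2 - (A a).2 * (A b).1 = a.1 * b.2 - a.2 * b.1 := by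
  rw [clm_det_plane] at h
  rw [clm_apply_plane A a, clm_apply_plane A b]
  linear_combination (a.1 * b.2 - a.2 * b.1) * h

/-- Inverse function theorem: `G` is open on `U` and has a smooth inverse on its image. -/
lemma exists_smooth_inverse {G : P2 → P2} {U : Set P2} (hU : IsOpen U)
    (hG : ContDiffOn ℝ C∞ G U) (hinj : InjOn G U) (hdet : ∀ x ∈ U, (fderiv ℝ G x).det = 1) :
    (∀ V ⊆ U, IsOpen V → IsOpen (G '' V)) ∧
      ∃ H : P2 → P2, ContDiffOn ℝ C∞ H (G '' U) ∧ ∀ x ∈ U, H (G x) = x := by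
  have hat : ∀ x ∈ U, ContDiffAt ℝ C∞ G x := fun x hx => hG.contDiffAt (hU.mem_nhds hx)
  have hd0 : ∀ x ∈ U, (fderiv ℝ G x).det ≠ 0 := fun x hx => by simp [hdet x hx]
  have hnhds : ∀ x ∈ U, map G (𝓝 x) = 𝓝 (G x) := by
    intro x hx
    have h1 : HasStrictFDerivAt G (fderiv ℝ G x) x := (hat x hx).hasStrictFDerivAt (by simp)
    rw [← ContinuousLinearMap.coe_toContinuousLinearEquivOfDetNeZero _ (hd0 x hx)] at h1
    exact h1.map_nhds_eq_of_equiv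
  have hopen : ∀ V ⊆ U, IsOpen V → IsOpen (G '' V) := by
    intro V hV hVo
    rw [isOpen_iff_mem_nhds]
    rintro _ ⟨x, hx, rfl⟩
    rw [← hnhds x (hV hx)]
    exact image_mem_map (hVo.mem_nhds hx)
  refine ⟨hopen, ?_⟩
  let e := hinj.toPartialEquiv G U
  let E := OpenPartialHomeomorph.ofContinuousOpenRestrict e hG.continuousOn (by
    intro W hW
    obtain ⟨W', hW', rfl⟩ := isOpen_induced_iff.1 hW
    have : e.source.domRestrict e '' (Subtype.val ⁻¹' W') = G '' (U ∩ W') := by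
      ext y
      constructor
      · rintro ⟨z, hz, rfl⟩; exact ⟨z.1, ⟨z.2, hz⟩, rfl⟩
      · rintro ⟨z, ⟨hz, hz'⟩, rfl⟩; exact ⟨⟨z, hz⟩, hz', rfl⟩
    rw [this]
    exact hopen _ inter_subset_left (hU.inter hW')) hU
  refine ⟨E.symm, ?_, fun x hx => E.left_inv (x := x) hx⟩
  rintro _ ⟨x, hx, rfl⟩
  have hx' : E.symm (G x) = x := E.left_inv (x := x) hx
  refine (E.contDiffAt_symm (f₀' := (fderiv ℝ G x).toContinuousLinearEquivOfDetNeZero (hd0 x hx))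
    (E.map_source (x := x) hx) ?_ ?_).contDiffWithinAt
  · rw [ContinuousLinearMap.coe_toContinuousLinearEquivOfDetNeZero]
    show HasFDerivAt G _ (E.symm (G x))
    rw [hx']
    exact ((hat x hx).differentiableAt (by simp)).hasFDerivAt
  · show ContDiffAt ℝ C∞ G (E.symm (G x))
    rw [hx']
    exact hat x hx

/-- The primitive of the closed one-form `ω(G, dG) - ω(x, dx)`. -/
lemma exists_primitive {G : P2 → P2} {U : Set P2} (hU : IsOpen U) (hUc : Convex ℝ U)
    (hG : ContDiffOn ℝ C∞ G U) (hdet : ∀ x ∈ U, (fderiv ℝ G x).det = 1) :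
    ∃ k : P2 → ℝ, ContDiffOn ℝ C∞ k U ∧ ∀ x ∈ U, ∃ α : P2 →L[ℝ] ℝ, HasFDerivAt k α x ∧
      ∀ v, α v = ((G x).1 * (fderiv ℝ G x v).2 - (G x).2 * (fderiv ℝ G x v).1) -
        (x.1 * v.2 - x.2 * v.1) := by
  let L1 := ContinuousLinearMap.fst ℝ ℝ ℝ
  let L2 := ContinuousLinearMap.snd ℝ ℝ ℝ
  let α : P2 → P2 →L[ℝ] ℝ := fun x =>
    ((G x).1 • L2.comp (fderiv ℝ G x) - (G x).2 • L1.comp (fderiv ℝ G x)) -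
      (x.1 • L2 - x.2 • L1)
  have hD : ContDiffOn ℝ C∞ (fderiv ℝ G) U := hG.fderiv_of_isOpen hU (m := C∞) (by simp)
  have hα : ContDiffOn ℝ C∞ α U := by
    have e1 : ContDiffOn ℝ C∞ (fun x => L1.comp (fderiv ℝ G x)) U := contDiffOn_const.clm_comp hD
    have e2 : ContDiffOn ℝ C∞ (fun x => L2.comp (fderiv ℝ G x)) U := contDiffOn_const.clm_comp hD
    exact ((hG.fst.smul e2).sub (hG.snd.smul e1)).sub
      ((contDiffOn_fst.smul contDiffOn_const).sub (contDiffOn_snd.smul contDiffOn_const))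
  have hsymm : ∀ a ∈ U, ∀ x y, fderiv ℝ α a x y = fderiv ℝ α a y x := by
    intro a ha x y
    have hGa : ContDiffAt ℝ C∞ G a := hG.contDiffAt (hU.mem_nhds ha)
    have h0 : HasFDerivAt G (fderiv ℝ G a) a := (hGa.differentiableAt (by simp)).hasFDerivAt
    have h2 : HasFDerivAt (fderiv ℝ G) (fderiv ℝ (fderiv ℝ G) a) a :=
      ((hD.contDiffAt (hU.mem_nhds ha)).differentiableAt (by simp)).hasFDerivAt
    have hs : IsSymmSndFDerivAt ℝ G a := hGa.isSymmSndFDerivAt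
      (by rw [minSmoothness_of_isRCLikeNormedField]
          exact WithTop.coe_le_coe.2 (le_top : (2 : ℕ∞) ≤ ⊤))
    have e1 : HasFDerivAt (fun x => L1.comp (fderiv ℝ G x)) _ a :=
      (hasFDerivAt_const L1 a).clm_comp h2
    have e2 : HasFDerivAt (fun x => L2.comp (fderiv ℝ G x)) _ a :=
      (hasFDerivAt_const L2 a).clm_comp h2
    have f1 : HasFDerivAt (fun x : P2 => x.1) L1 a := hasFDerivAt_fst
    have f2 : HasFDerivAt (fun x : P2 => x.2) L2 a := hasFDerivAt_snd
    have h3 : HasFDerivAt α _ a := ((h0.fst.smul e2).sub (h0.snd.smul e1)).sub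
      ((f1.smul_const L2).sub (f2.smul_const L1))
    have hsx := hs.eq x y
    have hdet' := area_form_preserved (hdet a ha) x y
    rw [h3.fderiv]
    simp [L1, L2, hsx]
    linear_combination 2 * hdet'
  obtain ⟨k, hk⟩ := hUc.exists_forall_hasFDerivAt_of_fderiv_symmetric hU
    (hα.differentiableOn (by simp)) hsymm
  refine ⟨k, ?_, fun x hx => ⟨α x, hk x hx, fun v => by simp [α, L1, L2]⟩⟩
  rw [contDiffOn_infty_iff_fderiv_of_isOpen hU]
  refine ⟨fun x hx => (hk x hx).differentiableAt.differentiableWithinAt, ?_⟩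
  exact hα.congr fun x hx => (hk x hx).fderiv

/-- The isotopy `x ↦ λ⁻¹ G(λ x)` satisfies an autonomous Hamiltonian equation up to the Euler
field: there is a compactly supported Hamiltonian `K` with `X_K(G x) + G x = DG(x) x`. -/
theorem exists_hamiltonian {G : P2 → P2} {ρ ρ' : ℝ} (hρ : ρ' < ρ)
    (hG : ContDiffOn ℝ C∞ G (Metric.ball 0 ρ)) (hinj : InjOn G (Metric.ball 0 ρ))
    (hdet : ∀ x ∈ Metric.ball (0 : P2) ρ, (fderiv ℝ G x).det = 1) :
    ∃ K : P2 → ℝ, ContDiff ℝ C∞ K ∧ HasCompactSupport K ∧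
      ∀ x ∈ Metric.ball (0 : P2) ρ', ham K (G x) + G x = fderiv ℝ G x x := by
  set U := Metric.ball (0 : P2) ρ with hUdef
  have hU : IsOpen U := Metric.isOpen_ball
  obtain ⟨hopen, H, hH, hHG⟩ := exists_smooth_inverse hU hG hinj hdet
  obtain ⟨k, hk, hkα⟩ := exists_primitive hU (convex_ball _ _) hG hdet
  have hsub : Metric.closedBall (0 : P2) ρ' ⊆ U := Metric.closedBall_subset_ball hρ
  have hC : IsCompact (G '' Metric.closedBall 0 ρ') :=
    (isCompact_closedBall _ _).image_of_continuousOn (hG.continuousOn.mono hsub)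
  obtain ⟨L, hLc, hLcl, hCL, hLU⟩ :=
    exists_compact_closed_between hC (hopen U subset_rfl hU) (image_mono hsub)
  obtain ⟨χ, hχ1, hχ0, -⟩ := exists_contMDiffMap_one_nhds_of_subset_interior
    (modelWithCornersSelf ℝ P2) (n := ⊤) hC.isClosed hCL
  have hχ : ContDiff ℝ C∞ χ := χ.contMDiff.contDiff
  let K : P2 → ℝ := fun q => χ q * k (H q)
  have hKs : ContDiff ℝ C∞ K := by
    rw [contDiff_iff_contDiffAt]
    intro q
    by_cases hq : q ∈ L
    · have hm : MapsTo H (G '' U) U := by rintro _ ⟨x, hx, rfl⟩; rwa [hHG x hx]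
      exact hχ.contDiffAt.mul (((hk.comp hH hm).contDiffAt
        ((hopen U subset_rfl hU).mem_nhds (hLU hq))))
    · have : K =ᶠ[𝓝 q] fun _ => 0 := by
        filter_upwards [hLcl.isOpen_compl.mem_nhds hq] with y hy
        simp [K, hχ0 y hy]
      exact contDiffAt_const.congr_of_eventuallyEq this
  refine ⟨K, hKs, HasCompactSupport.intro hLc fun q hq => by simp [K, hχ0 q hq], ?_⟩
  intro x hx
  have hxU : x ∈ U := hsub (Metric.ball_subset_closedBall hx)
  obtain ⟨α, hα, hαv⟩ := hkα x hxU
  have hGx : HasFDerivAt G (fderiv ℝ G x) x :=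
    ((hG.contDiffAt (hU.mem_nhds hxU)).differentiableAt (by simp)).hasFDerivAt
  have hcomp : HasFDerivAt (K ∘ G) ((fderiv ℝ K (G x)).comp (fderiv ℝ G x)) x :=
    (hKs.differentiable (by simp) (G x)).hasFDerivAt.comp x hGx
  have hKG : K ∘ G =ᶠ[𝓝 x] k := by
    filter_upwards [Metric.isOpen_ball.mem_nhds hx] with y hy
    have hy' : y ∈ Metric.closedBall (0 : P2) ρ' := Metric.ball_subset_closedBall hy
    simp [K, hHG y (hsub hy'), hχ1.self_of_nhdsSet _ (mem_image_of_mem _ hy')]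
  have heq : (fderiv ℝ K (G x)).comp (fderiv ℝ G x) = α :=
    (hcomp.congr_of_eventuallyEq hKG.symm).unique hα
  have hd0 : (fderiv ℝ G x).det ≠ 0 := by simp [hdet x hxU]
  have hfin : ∀ w : P2, fderiv ℝ K (G x) w = ((G x).1 - (fderiv ℝ G x x).1) * w.2 -
      ((G x).2 - (fderiv ℝ G x x).2) * w.1 := by
    intro w
    obtain ⟨v, rfl⟩ := ((fderiv ℝ G x).toContinuousLinearEquivOfDetNeZero hd0).surjective w
    rw [ContinuousLinearMap.toContinuousLinearEquivOfDetNeZero_apply]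
    have h1 := congrArg (fun A : P2 →L[ℝ] ℝ => A v) heq
    simp only [ContinuousLinearMap.comp_apply] at h1
    rw [h1, hαv, ← area_form_preserved (hdet x hxU) x v]
    ring
  ext <;> simp [ham, d1, d2, hfin]

end Hamiltonian

/-! ### Approximation of embeddings of a neighbourhood -/

section Assemble

/-- Step sizes with `(1 + h N) ^ N = t⁻¹`. -/
lemma exists_step_sizes {t : ℝ} (h0 : 0 < t) (h1 : t < 1) : ∃ h : ℕ → ℝ,
    (∀ᶠ N in atTop, 0 < h N) ∧ Tendsto h atTop (𝓝 0) ∧ ∀ᶠ N in atTop, (1 + h N) ^ N = t⁻¹ := by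
  refine ⟨fun N => t ^ (-(1 / (N : ℝ))) - 1, ?_, ?_, ?_⟩
  · filter_upwards [eventually_ge_atTop 1] with N hN
    have hN' : (0 : ℝ) < N := by exact_mod_cast hN
    have := Real.one_lt_rpow_of_pos_of_lt_one_of_neg h0 h1 (z := -(1 / (N : ℝ)))
      (by simpa using hN')
    linarith
  · have h2 : Tendsto (fun N : ℕ => -(1 / (N : ℝ))) atTop (𝓝 (-0)) :=
      tendsto_one_div_atTop_nhds_zero_nat.neg
    have h3 := (Real.continuousAt_const_rpow h0.ne' (b := -0)).tendsto.comp h2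
    simpa using h3.sub_const 1
  · filter_upwards [eventually_ge_atTop 1] with N hN
    have hN' : (N : ℝ) ≠ 0 := by positivity
    rw [add_sub_cancel, ← Real.rpow_natCast, ← Real.rpow_mul h0.le]
    rw [neg_mul, one_div, inv_mul_cancel₀ hN', Real.rpow_neg_one]

lemma contDiff_ham {K : P2 → ℝ} (hK : ContDiff ℝ C∞ K) : ContDiff ℝ C∞ (ham K) :=
  (contDiff_d2 hK).neg.prodMk (contDiff_d1 hK)

/-- The field `X_K + id` is the limit of one-step increments whose steps are `1 + h` times
even compositions of polynomial Hénon maps. -/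
lemma exists_increments {K : P2 → ℝ} (hK : ContDiff ℝ C∞ K) (hc : HasCompactSupport K) (r : ℕ) :
    ∃ V : ℕ → ℝ → P2 → P2, (∀ n, ContDiff ℝ C∞ fun q : ℝ × P2 => V n q.1 q.2) ∧
      CrConv atTop r (fun n => V n 0) (fun y => ham K y + y) univ ∧
      ∀ n h, ∃ g, EvenH g ∧ step (V n) h = fun y => (1 + h) • g y := by
  obtain ⟨p, hp, hconv⟩ := exists_poly_ham hK hc r
  choose V hV hE hV0 using fun n => (good_of_mem_polyAlg (hp n)).2
  refine ⟨fun n h y => V n h y + y + h • V n h y, fun n => ?_, ?_, fun n h =>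
    ⟨step (V n) h, hE n h, ?_⟩⟩
  · exact ((hV n).add contDiff_snd).add (contDiff_fst.smul (hV n))
  · have hs : ContDiffOn ℝ C∞ (fun y => (ham K y, y)) univ :=
      ((contDiff_ham hK).prodMk contDiff_id).contDiffOn
    have h1 := CrConv.prodMk isOpen_univ hconv
      (CrConv.const (l := atTop) (r := r) isOpen_univ
        (contDiff_id (𝕜 := ℝ) (n := C∞) (E := P2)).contDiffOn)
      (contDiff_ham hK).contDiffOn contDiff_id.contDiffOn
    have ha : ContDiff ℝ C∞ fun z : P2 × P2 => z.1 + z.2 := contDiff_fst.add contDiff_snd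
    have h2 := CrConv.comp_const isOpen_univ isOpen_univ ha.contDiffOn h1 hs (mapsTo_univ _ _)
    refine h2.congr isOpen_univ (fun _ _ => rfl) fun K _ _ => Eventually.of_forall fun n x _ => ?_
    exact Eventually.of_forall fun y => by simp [hV0 n]
  · funext y
    simp only [step, smul_add, add_smul, one_smul]
    abel

/-- Approximation of symplectic embeddings fixing the origin: the radial isotopy
`t ↦ t⁻¹ G(t x)` connects the linear map `DG(0)` to `G`, and the part of the isotopy from a small
`t` to `1` is followed by the one-step scheme. -/
theorem exists_approx_zero {G : P2 → P2} {ρ ρ' : ℝ} (hρ0 : 0 < ρ') (hρ : ρ' < ρ)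
    (hG : ContDiffOn ℝ C∞ G (Metric.ball 0 ρ)) (hinj : InjOn G (Metric.ball 0 ρ))
    (hdet : ∀ x ∈ Metric.ball (0 : P2) ρ, (fderiv ℝ G x).det = 1) (hG0 : G 0 = 0) (r : ℕ) :
    ∃ f : ℝ × (ℕ × ℕ) → P2 → P2,
      CrConv ((𝓝[>] (0:ℝ)).curry ((atTop : Filter ℕ).curry (atTop : Filter ℕ))) r f G
        (Metric.ball 0 ρ') ∧
      ∀ᶠ i in (𝓝[>] (0:ℝ)).curry ((atTop : Filter ℕ).curry (atTop : Filter ℕ)), EvenH (f i) := by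
  obtain ⟨K, hK, hKc, hKG⟩ := exists_hamiltonian hρ hG hinj hdet
  obtain ⟨V, hV, hVc, hVE⟩ := exists_increments hK hKc r
  set U := Metric.ball (0 : P2) ρ' with hUdef
  have hU : IsOpen U := Metric.isOpen_ball
  have hUρ : U ⊆ Metric.ball (0 : P2) ρ := Metric.ball_subset_ball hρ.le
  have h0U : (0 : P2) ∈ U := Metric.mem_ball_self hρ0
  have hGU : ContDiffOn ℝ C∞ G U := hG.mono hUρ
  obtain ⟨hopen, H, hH, hHG⟩ := exists_smooth_inverse hU hGU (hinj.mono hUρ)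
    fun x hx => hdet x (hUρ hx)
  have hGo : IsOpen (G '' U) := hopen U subset_rfl hU
  have h0G : (0 : P2) ∈ G '' U := ⟨0, h0U, hG0⟩
  have hH0 : H 0 = 0 := by simpa [hG0] using hHG 0 h0U
  set A := fderiv ℝ G 0 with hA
  have hAE : EvenH A := evenH_linear (hdet 0 (hUρ h0U))
  have hHA : ∀ x, fderiv ℝ H 0 (A x) = x := by
    have h1 : HasFDerivAt G A 0 :=
      ((hGU.contDiffAt (hU.mem_nhds h0U)).differentiableAt (by simp)).hasFDerivAt
    have h2 : HasFDerivAt H (fderiv ℝ H 0) (G 0) := by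
      rw [hG0]
      exact ((hH.contDiffAt (hGo.mem_nhds h0G)).differentiableAt (by simp)).hasFDerivAt
    have h3 := h2.comp (0 : P2) h1
    have h4 : (H ∘ G) =ᶠ[𝓝 0] id := by
      filter_upwards [hU.mem_nhds h0U] with x hx using hHG x hx
    have h5 := h3.unique ((hasFDerivAt_id (0 : P2)).congr_of_eventuallyEq h4)
    intro x
    simpa using congrArg (fun L : P2 →L[ℝ] P2 => L x) h5
  have hstar : ∀ x ∈ U, ∀ t : ℝ, 0 < t → t ≤ 1 → t • x ∈ U := by
    intro x hx t h0 h1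
    rw [hUdef, mem_ball_zero_iff] at hx ⊢
    rw [norm_smul, Real.norm_of_nonneg h0.le]
    exact (mul_le_of_le_one_left (norm_nonneg _) h1).trans_lt hx
  have hh : ∀ t : ℝ, ∃ h : ℕ → ℝ, 0 < t → t < 1 →
      (∀ᶠ N in atTop, 0 < h N) ∧ Tendsto h atTop (𝓝 0) ∧
        ∀ᶠ N in atTop, (1 + h N) ^ N = t⁻¹ := by
    intro t
    by_cases ht : 0 < t ∧ t < 1
    · obtain ⟨h, hh⟩ := exists_step_sizes ht.1 ht.2
      exact ⟨h, fun _ _ => hh⟩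
    · exact ⟨0, fun h0 h1 => absurd ⟨h0, h1⟩ ht⟩
  choose h hh using hh
  have ht01 : ∀ᶠ t in 𝓝[>] (0 : ℝ), 0 < t ∧ t < 1 := Ioo_mem_nhdsGT one_pos
  -- the points `y t x` satisfy `G (t • y t x) = t • A x`
  let y : ℝ → P2 → P2 := fun t x => t⁻¹ • H (t • A x)
  have hA' : ContDiff ℝ C∞ A := A.contDiff
  have hy : CrConv (𝓝[>] (0:ℝ)) r y id univ := by
    have h1 := CrConv.comp isOpen_univ isOpen_univ (CrConv.rescale (r := r) hGo h0G hH hH0)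
      (CrConv.const isOpen_univ hA'.contDiffOn) (fderiv ℝ H 0).contDiff.contDiffOn
      hA'.contDiffOn (mapsTo_univ _ _)
    exact h1.congr isOpen_univ (fun x _ => (hHA x).symm) fun K _ _ =>
      Eventually.of_forall fun t x _ => EventuallyEq.rfl
  have hGy : CrConv (𝓝[>] (0:ℝ)) r (fun t => G ∘ y t) (G ∘ id) U :=
    CrConv.comp_const hU hU hGU (hy.mono (subset_univ _)) contDiff_id.contDiffOn fun x hx => hx
  let W : ℝ → Set P2 := fun t => (fun x => t • A x) ⁻¹' (G '' U)
  have hWo : ∀ t, IsOpen (W t) := fun t => hGo.preimage (by fun_prop)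
  have hys : ∀ t, ContDiffOn ℝ C∞ (y t) (W t) := fun t => by
    have h1 : ContDiffOn ℝ C∞ (fun x => t • A x) (W t) := (hA'.const_smul t).contDiffOn
    exact (hH.comp h1 fun x hx => hx).const_smul t⁻¹
  let S : ℝ → Set P2 := fun t => W t ∩ y t ⁻¹' U
  have hSo : ∀ t, IsOpen (S t) := fun t => (hys t).continuousOn.isOpen_inter_preimage (hWo t) hU
  refine ⟨fun i x => (step (V i.2.1) (h i.1 i.2.2))^[i.2.2] (i.1 • A x),
    CrConv.curry (f := fun t (q : ℕ × ℕ) x => (step (V q.1) (h t q.2))^[q.2] (t • A x))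
      (g := fun t => G ∘ y t) (V := S) hGy ?_ ?_, ?_⟩
  · filter_upwards [ht01] with t ⟨t0, t1⟩
    obtain ⟨a1, a2, a3⟩ := hh t t0 t1
    have hs := scheme_converges (r := r) hU hstar hGU ((contDiff_ham hK).add contDiff_id)
      (fun x hx => hKG x hx) hV hVc (one_le_inv_iff₀.2 ⟨t0, t1.le⟩) a1 a2 a3
    have hc := CrConv.comp (hSo t) hU hs
      (CrConv.const (hSo t) ((hys t).mono inter_subset_left)) hGU
      ((hys t).mono inter_subset_left) fun x hx => hx.2
    refine hc.congr (hSo t) (fun _ _ => rfl) fun K hK _ => Eventually.of_forall fun q x hx => ?_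
    filter_upwards [(hSo t).mem_nhds (hK hx)] with z hz
    obtain ⟨w, hw, hwz⟩ := hz.1
    have : G (t⁻¹⁻¹ • y t z) = t • A z := by
      simp only [y, inv_inv, smul_smul, mul_inv_cancel₀ t0.ne', one_smul]
      have hwz' : G w = t • A z := hwz
      rw [← hwz', hHG w hw]
    simp only [Function.comp_apply, this]
  · intro K hK hc
    have e1 : ∀ᶠ t in 𝓝[>] (0:ℝ), ∀ x ∈ K, t • A x ∈ G '' U := by
      refine Filter.Eventually.filter_mono nhdsWithin_le_nhds
        (hc.eventually_forall_of_forall_eventually fun x _ => ?_)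
      have hct : Continuous fun z : ℝ × P2 => z.1 • A z.2 := by fun_prop
      refine hct.continuousAt.eventually (hGo.mem_nhds ?_)
      simpa using h0G
    obtain ⟨δ, hδ, -, hδU⟩ := exists_cthickening hU hc hK
    filter_upwards [e1, hy.zero K (subset_univ _) hc δ hδ] with t b1 b2 x hx
    exact ⟨b1 x hx, hδU (Metric.mem_cthickening_of_dist_le _ _ _ _ hx (b2 x hx).2.le)⟩
  · rw [Filter.eventually_curry_iff]
    filter_upwards [ht01] with t ⟨t0, t1⟩
    rw [Filter.eventually_curry_iff]
    refine Eventually.of_forall fun n => ?_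
    obtain ⟨a1, -, a3⟩ := hh t t0 t1
    filter_upwards [a1, a3] with N c1 c3
    obtain ⟨g, hg, hgs⟩ := hVE n (h t N)
    have hi := (hg.scaled_iterate (c := 1 + h t N) (by positivity) N).comp hAE
    rw [c3, inv_inv] at hi
    rw [hgs]
    exact hi

lemma curry_neBot {α β : Type} {l : Filter α} {m : Filter β} [l.NeBot] [m.NeBot] :
    (l.curry m).NeBot := by
  refine neBot_iff.2 fun h => ?_
  have : ∀ᶠ _ in l.curry m, False := by rw [h]; exact eventually_bot
  rw [Filter.eventually_curry_iff] at this
  simp only [eventually_const] at this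

/-- Every even composition of polynomial Hénon maps is smooth. -/
lemma EvenH.contDiff {f : P2 → P2} (h : EvenH f) : ContDiff ℝ C∞ f := by
  obtain ⟨k, hk⟩ := h
  generalize 2 * k = n at hk
  induction hk with
  | nil => exact contDiff_id
  | cons p _ ih => exact (contDiff_henon p).comp ih

/-- Approximation of symplectic embeddings on a compact set, with all derivatives up to order `r`.
A translation, itself an even composition of Hénon maps, reduces to the case `G 0 = 0`. -/
theorem exists_approx {G : P2 → P2} {ρ ρ' : ℝ} (hρ0 : 0 < ρ') (hρ : ρ' < ρ)
    (hG : ContDiffOn ℝ C∞ G (Metric.ball 0 ρ)) (hinj : InjOn G (Metric.ball 0 ρ))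
    (hdet : ∀ x ∈ Metric.ball (0 : P2) ρ, (fderiv ℝ G x).det = 1) (r : ℕ) {K : Set P2}
    (hK : K ⊆ Metric.ball 0 ρ') (hc : IsCompact K) {ε : ℝ} (hε : 0 < ε) :
    ∃ f, EvenH f ∧ ∀ i ≤ r, ∀ x ∈ K, ‖iteratedFDeriv ℝ i G x - iteratedFDeriv ℝ i f x‖ < ε := by
  have hfd : ∀ x, fderiv ℝ (fun x => G x - G 0) x = fderiv ℝ G x := fun x => by
    rw [fderiv_sub_const]
  obtain ⟨f, hf, hfE⟩ := exists_approx_zero hρ0 hρ (hG.sub contDiffOn_const)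
    (fun x hx y hy hxy => hinj hx hy (by simpa using hxy)) (fun x hx => by rw [hfd]; exact hdet x hx)
    (sub_self (G 0)) r
  have hU : IsOpen (Metric.ball (0 : P2) ρ') := Metric.isOpen_ball
  have hGU : ContDiffOn ℝ C∞ G (Metric.ball 0 ρ') := hG.mono (Metric.ball_subset_ball hρ.le)
  have ht : ContDiff ℝ C∞ fun q : P2 => q + G 0 := contDiff_id.add contDiff_const
  have h1 := CrConv.comp_const hU isOpen_univ ht.contDiffOn hf (hGU.sub contDiffOn_const)
    (mapsTo_univ _ _)
  have h2 : CrConv ((𝓝[>] (0:ℝ)).curry ((atTop : Filter ℕ).curry (atTop : Filter ℕ))) r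
      (fun i => (fun q => q + G 0) ∘ f i) G (Metric.ball 0 ρ') :=
    h1.congr hU (fun x _ => by simp) fun K _ _ =>
      Eventually.of_forall fun t x _ => EventuallyEq.rfl
  have hle : ∀ i ≤ r, CrConv ((𝓝[>] (0:ℝ)).curry ((atTop : Filter ℕ).curry (atTop : Filter ℕ))) i
      (fun i => (fun q => q + G 0) ∘ f i) G (Metric.ball 0 ρ') := fun i hi =>
    Nat.decreasingInduction (motive := fun i _ =>
      CrConv ((𝓝[>] (0:ℝ)).curry ((atTop : Filter ℕ).curry (atTop : Filter ℕ))) i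
      (fun i => (fun q => q + G 0) ∘ f i) G (Metric.ball 0 ρ'))
      (fun k _ h => CrConv.of_succ hU h hGU) h2 hi
  have hall : ∀ᶠ j in (𝓝[>] (0:ℝ)).curry ((atTop : Filter ℕ).curry (atTop : Filter ℕ)),
      ∀ i ∈ Finset.range (r + 1), ∀ x ∈ K,
        ‖iteratedFDeriv ℝ i G x - iteratedFDeriv ℝ i ((fun q => q + G 0) ∘ f j) x‖ < ε :=
    (Filter.eventually_all_finset _).2 fun i hi =>
      (hle i (Nat.lt_succ_iff.1 (Finset.mem_range.1 hi))).iteratedFDeriv_plane hU hGU hK hc hε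
  have := curry_neBot (l := (atTop : Filter ℕ)) (m := (atTop : Filter ℕ))
  have := curry_neBot (l := 𝓝[>] (0:ℝ)) (m := (atTop : Filter ℕ).curry (atTop : Filter ℕ))
  obtain ⟨j, hj1, hj2⟩ := (hall.and hfE).exists
  exact ⟨_, (evenH_translation (G 0)).comp hj2, fun i hi =>
    hj1 i (Finset.mem_range.2 (Nat.lt_succ_iff.2 hi))⟩

end Assemble

/-! ### From the closed disc to a neighbourhood -/

section Disc

lemma uniqueDiffOn_disc : UniqueDiffOn ℝ Disc := by
  refine uniqueDiffOn_convex (convex_closedBall _ _) ?_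
  rw [Disc, interior_closedBall _ one_ne_zero]
  exact ⟨0, Metric.mem_ball_self one_pos⟩

lemma isCompact_disc : IsCompact Disc := isCompact_closedBall _ _

lemma iteratedFDeriv_dilate (f : P2 → P2) {a : ℝ} (ha : a ≠ 0) (i : ℕ) (x : P2) :
    iteratedFDeriv ℝ i (fun z => f (a • z)) x = a ^ i • iteratedFDeriv ℝ i f (a • x) := by
  let g : P2 ≃L[ℝ] P2 := ContinuousLinearEquiv.smulLeft (Units.mk0 a ha)
  have h := g.iteratedFDerivWithin_comp_right f uniqueDiffOn_univ (x := x) (mem_univ _) i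
  simp only [preimage_univ, iteratedFDerivWithin_univ] at h
  have hg : ∀ z, g z = a • z := fun z => rfl
  have hfg : (f ∘ g) = fun z => f (a • z) := rfl
  rw [← hfg, h, hg]
  refine ContinuousMultilinearMap.ext fun v => ?_
  have := (iteratedFDeriv ℝ i f (a • x)).map_smul_univ (fun _ => a) v
  simp only [ContinuousMultilinearMap.compContinuousLinearMap_apply]
  simpa [hg] using this

/-- The dilated maps `x ↦ a⁻¹ F(a x)` extend smoothly to a neighbourhood of the disc and converge
to `F` on the disc with all derivatives as `a → 1⁻`. -/
lemma dilate_close {F : P2 → P2} (hF : ContDiffOn ℝ C∞ F Disc) (i : ℕ) {ε : ℝ} (hε : 0 < ε) :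
    ∃ a₀ < (1 : ℝ), ∀ a : ℝ, a₀ < a → a < 1 → ∀ x ∈ Disc,
      ‖iteratedFDerivWithin ℝ i F Disc x -
        iteratedFDeriv ℝ i (fun z => a⁻¹ • F (a • z)) x‖ < ε := by
  let D := iteratedFDerivWithin ℝ i F Disc
  have hD : ContinuousOn D Disc :=
    hF.continuousOn_iteratedFDerivWithin (by exact_mod_cast le_top) uniqueDiffOn_disc
  have hmul : ∀ a : ℝ, 0 ≤ a → a ≤ 1 → ∀ x ∈ Disc, ‖a • x‖ ≤ a := by
    intro a h0 h1 x hx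
    rw [Disc, mem_closedBall_zero_iff] at hx
    rw [norm_smul, Real.norm_of_nonneg h0]
    exact mul_le_of_le_one_right h0 hx
  let T : Set (ℝ × P2) := Icc (1/2) 1 ×ˢ Disc
  have hT : IsCompact T := isCompact_Icc.prod isCompact_disc
  have hΦ : ContinuousOn (fun z : ℝ × P2 => (z.1⁻¹ * z.1 ^ i) • D (z.1 • z.2)) T := by
    have hsm : ContinuousOn (fun z : ℝ × P2 => z.1 • z.2) T := by fun_prop
    have hc : ContinuousOn (fun z : ℝ × P2 => z.1⁻¹ * z.1 ^ i) T := by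
      refine (continuousOn_fst.inv₀ ?_).mul (continuousOn_fst.pow i)
      intro z hz h0
      have := hz.1.1
      rw [h0] at this
      norm_num at this
    refine hc.smul (hD.comp hsm ?_)
    intro z hz
    rw [Disc, mem_closedBall_zero_iff]
    exact (hmul z.1 (by linarith [hz.1.1]) hz.1.2 z.2 hz.2).trans hz.1.2
  obtain ⟨δ, hδ, hu⟩ := Metric.uniformContinuousOn_iff.1
    (hT.uniformContinuousOn_of_continuous hΦ) ε hε
  refine ⟨max (1/2) (1 - δ), max_lt (by norm_num) (by linarith), fun a ha ha1 x hx => ?_⟩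
  obtain ⟨h1, h2⟩ := max_lt_iff.1 ha
  have ha0 : a ≠ 0 := by linarith
  have hax : a • x ∈ Metric.ball (0 : P2) 1 := by
    rw [mem_ball_zero_iff]
    exact (hmul a (by linarith) ha1.le x hx).trans_lt ha1
  have hat : ContDiffAt ℝ C∞ F (a • x) :=
    hF.contDiffAt (Metric.closedBall_mem_nhds_of_mem hax)
  have hat' : ContDiffAt ℝ i (fun z => F (a • z)) x :=
    (ContDiffAt.comp x (f := fun z : P2 => a • z) hat (by fun_prop)).of_le
      (by exact_mod_cast le_top)
  have e1 : iteratedFDeriv ℝ i (fun z => a⁻¹ • F (a • z)) x = (a⁻¹ * a ^ i) • D (a • x) := by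
    rw [iteratedFDeriv_const_smul_apply' hat', iteratedFDeriv_dilate F ha0, smul_smul]
    congr 1
    exact (iteratedFDerivWithin_eq_iteratedFDeriv uniqueDiffOn_disc
      (hat.of_le (by exact_mod_cast le_top)) (Metric.ball_subset_closedBall hax)).symm
  have := hu (1, x) ⟨by norm_num, hx⟩ (a, x) ⟨⟨h1.le, ha1.le⟩, hx⟩
    (by rw [Prod.dist_eq, dist_self, Real.dist_eq];
        exact max_lt (by rw [abs_lt]; constructor <;> linarith) hδ)
  rw [dist_eq_norm] at this
  rw [e1]
  simpa using this

lemma crDistOn_lt {f g : P2 → P2} {s : Set P2} {r : ℕ} {ε : ℝ} (hε : 0 < ε)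
    (h : ∀ i ≤ r, ∀ x ∈ s, ‖iteratedFDerivWithin ℝ i f s x - iteratedFDerivWithin ℝ i g s x‖ ≤
      ε / (2 * (r + 1))) : crDistOn r s f g < ENNReal.ofReal ε := by
  have hb : crDistOn r s f g ≤ ∑ _i ∈ Finset.range (r + 1), ENNReal.ofReal (ε / (2 * (r + 1))) := by
    refine Finset.sum_le_sum fun i hi => iSup₂_le fun x hx => ?_
    rw [← enorm_eq_nnnorm, ← ofReal_norm]
    exact ENNReal.ofReal_le_ofReal (h i (Nat.lt_succ_iff.1 (Finset.mem_range.1 hi)) x hx)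
  refine hb.trans_lt ?_
  rw [← ENNReal.ofReal_sum_of_nonneg fun _ _ => by positivity]
  refine (ENNReal.ofReal_lt_ofReal_iff hε).2 ?_
  rw [Finset.sum_const, Finset.card_range, nsmul_eq_mul]
  push_cast
  have : ((r : ℝ) + 1) * (ε / (2 * (r + 1))) = ε / 2 := by field_simp
  linarith

end Disc

/-- **Turaev (2003).** Every `C^∞` area-preserving (symplectic) embedding of the disc
into the plane can be approximated arbitrarily well in the `C^∞` topology (i.e. in every
`C^r` norm on the disc) by compositions `H_{p_{2k}} ∘ ⋯ ∘ H_{p_1}` of an even number of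
Hénon maps with polynomial `p_i`. -/
theorem turaev_henon_approximation :
    ∀ (F : SymplEmbDisc) (r : ℕ) (ε : ℝ), 0 < ε →
      ∃ (k : ℕ) (p : Fin (2 * k) → Polynomial ℝ),
        crDistOn r Disc F.toFun
          (seqComp fun i => henon fun t => (p i).eval t) < ENNReal.ofReal ε := by
  intro F r ε hε
  set η := ε / (2 * ((r : ℝ) + 1)) / 2 with hη
  have hη0 : 0 < η := by positivity
  choose a₀ h1 h2 using fun i : ℕ => dilate_close F.contDiffOn i hη0
  have hev : ∀ᶠ a in 𝓝[<] (1 : ℝ), ∀ i ∈ Finset.range (r + 1), a₀ i < a :=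
    (Filter.eventually_all_finset _).2 fun i _ =>
      Filter.mem_of_superset (Ioo_mem_nhdsLT (h1 i)) fun _ h => h.1
  obtain ⟨a, ha, ha0, ha1⟩ := (hev.and (Ioo_mem_nhdsLT one_pos)).exists
  have hρ : 1 < a⁻¹ := (one_lt_inv₀ ha0).2 ha1
  have hm : ∀ x ∈ Metric.ball (0 : P2) a⁻¹, a • x ∈ Metric.ball (0 : P2) 1 := by
    intro x hx
    rw [mem_ball_zero_iff] at hx ⊢
    rw [norm_smul, Real.norm_of_nonneg ha0.le]
    calc a * ‖x‖ < a * a⁻¹ := by gcongr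
      _ = 1 := mul_inv_cancel₀ ha0.ne'
  have hsub : Metric.ball (0 : P2) 1 ⊆ Disc := Metric.ball_subset_closedBall
  have hnb : ∀ x ∈ Metric.ball (0 : P2) a⁻¹, Disc ∈ 𝓝 (a • x) := fun x hx =>
    Metric.closedBall_mem_nhds_of_mem (hm x hx)
  have hs : ContDiff ℝ C∞ fun x : P2 => a • x := by fun_prop
  obtain ⟨f, ⟨k, hk⟩, hf⟩ := exists_approx (G := fun x => a⁻¹ • F.toFun (a • x)) (ρ := a⁻¹)
    (ρ' := (1 + a⁻¹) / 2) (by linarith) (by linarith)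
    ((F.contDiffOn.comp hs.contDiffOn fun x hx => hsub (hm x hx)).const_smul a⁻¹)
    (fun x hx y hy hxy => by
      have h3 := smul_right_injective P2 (inv_ne_zero ha0.ne') hxy
      exact smul_right_injective P2 ha0.ne' (F.injOn (hsub (hm x hx)) (hsub (hm y hy)) h3))
    (fun x hx => by
      have h3 : HasFDerivAt F.toFun (fderiv ℝ F.toFun (a • x)) (a • x) :=
        ((F.contDiffOn.contDiffAt (hnb x hx)).differentiableAt (by simp)).hasFDerivAt
      have h4 : HasFDerivAt (fun x : P2 => a • x) (a • ContinuousLinearMap.id ℝ P2) x :=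
        (hasFDerivAt_id x).const_smul a
      have h5 : HasFDerivAt (fun x => a⁻¹ • F.toFun (a • x)) _ x := (h3.comp x h4).const_smul a⁻¹
      have h6 := F.symp _ (hsub (hm x hx))
      rw [fderivWithin_of_mem_nhds (hnb x hx)] at h6
      rw [h5.fderiv, ← h6]
      congr 1
      refine ContinuousLinearMap.ext fun v => ?_
      simp [ha0.ne'])
    r (K := Disc) (fun x hx => by
      rw [Disc, mem_closedBall_zero_iff] at hx
      rw [mem_ball_zero_iff]
      linarith) isCompact_disc hη0
  obtain ⟨p, rfl⟩ := hk.exists_seqComp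
  refine ⟨k, p, crDistOn_lt hε fun i hi x hx => ?_⟩
  have h3 := h2 i a (ha i (Finset.mem_range.2 (Nat.lt_succ_iff.2 hi))) ha1 x hx
  have h4 := hf i hi x hx
  rw [iteratedFDerivWithin_eq_iteratedFDeriv (f := seqComp _) uniqueDiffOn_disc
    ((EvenH.contDiff ⟨k, hk⟩).contDiffAt.of_le (by exact_mod_cast le_top)) hx]
  calc _ ≤ _ := norm_sub_le_norm_sub_add_norm_sub _
        (iteratedFDeriv ℝ i (fun z => a⁻¹ • F.toFun (a • z)) x) _
    _ ≤ η + η := (add_lt_add h3 h4).le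
    _ = _ := by rw [hη]; ring
end
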